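/- Fix k ∈ {2, 3, 5, 11, 17, 41} and let f(n) = (1/2)·#{(x,y) ∈ ℤ² : x² + xy + k·y² = n} for positive integers n and f(0) = 1. Then, as x → ∞, max_{n ≤ x} log f(f(n)) = (√(log x)/log₂ x)·( c/√2 + O(log₃ x / log₂ x) ), where c = (8·∑_{l=1}^∞ (log(1 + 1/l))²)^{1/2}. -/

import Mathlib

open Filter

/-- The normalized representation-counting function of the binary quadratic form
`x² + xy + k·y²`, with the convention `f(0) = 1`. -/
noncomputable def fForm (k n : ℕ) : ℕ :=
  if n = 0 then 1
  else Nat.card {p : ℤ × ℤ // p.1 ^ 2 + p.1 * p.2 + (k : ℤ) * p.2 ^ 2 = (n : ℤ)} / 2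

/-- The constant `c = (8·∑_{l=1}^∞ (log(1 + 1/l))²)^{1/2}`. -/
noncomputable def cBEFS : ℝ :=
  Real.sqrt (8 * ∑' l : ℕ, (Real.log (1 + 1 / ((l : ℝ) + 1))) ^ 2)

/-!
Since `ℤ[ω]`, `ω² = ω - k`, has class number one, `f(n)` is the number of elements of norm `n` up to
sign: it is multiplicative, with `f(p ^ e) = e + 1` at the split primes `p` and `f(p ^ e) ≤ 1` at
the others.

To make `f(f(n))` large, `f(n) = ∏ (e + 1)` should contain high powers of split primes `q`. Raising
the exponent of `q` in `f(n)` from `l` to `l + 1` gains `log (1 + 1 / (l + 1))` in `log f(f(n))` and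
costs a new factor `p ^ (q - 1)` of `n`, where `log p` is about `log log x / 2` for most of the
primes that have to be used. So the problem is a knapsack with an item of profit
`log (1 + 1 / (l + 1))` and weight `q - 1` for each pair `(l, q)`, and capacity
`2 log x / log log x`. As the split primes up to `z` number about `z / (2 log z)`, the price
`√S / (2 √(log x))` per unit of weight, with `S = ∑ log² (1 + 1 / l)`, is optimal and yields
`2 √S √(log x) / log log x`: weak Lagrangian duality bounds `log f(f(n))` from above, and the greedy
solution misses the dual bound by at most one item.

The split primes are counted, with a relative error `O(log log z / log z)`, by a smoothed Perron
formula for `(ζ'/ζ)' + (L'/L)' + ζ'`, which has no pole at `1` and is `O(|im s| ^ (1/2))` up to the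
line `re s = 1` by the `3-4-1` inequality.
-/

/-! ### Growth of `ζ` and `L(·, χ)` near the line `re s = 1` -/

section DirichletSeriesGrowth

open Complex

lemma le_rpow_mul_rpow_of_le_of_le {x a b θ : ℝ} (hx : 0 ≤ x) (hxa : x ≤ a) (hxb : x ≤ b)
    (hθ : θ ∈ Set.Icc (0 : ℝ) 1) : x ≤ a ^ (1 - θ) * b ^ θ := by
  obtain ⟨hθ0, hθ1⟩ := hθ
  calc x = x ^ (1 - θ) * x ^ θ := by
        rw [← Real.rpow_add' hx (by norm_num), sub_add_cancel, Real.rpow_one]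
    _ ≤ a ^ (1 - θ) * b ^ θ := by
        have ha : 0 ≤ a := hx.trans hxa
        gcongr

lemma mul_rpow_le_mul_rpow_of_exponent_le_one {a b θ : ℝ} (ha : 1 ≤ a) (hb : 0 ≤ b)
    (hθ : θ ≤ 1) : (a * b) ^ θ ≤ a * b ^ θ := by
  rw [Real.mul_rpow (by linarith) hb]
  gcongr
  simpa using Real.rpow_le_rpow_of_exponent_le ha hθ

lemma norm_ofReal_cpow_neg_sub_le_two_mul {s : ℂ} (hs : 0 ≤ s.re) {a u : ℝ} (ha : 0 < a)
    (hau : a ≤ u) : ‖(a : ℂ) ^ (-s) - (u : ℂ) ^ (-s)‖ ≤ 2 * a ^ (-s.re) := by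
  have hu_le : u ^ (-s.re) ≤ a ^ (-s.re) :=
    Real.rpow_le_rpow_of_nonpos ha hau (neg_nonpos.mpr hs)
  calc ‖(a : ℂ) ^ (-s) - (u : ℂ) ^ (-s)‖ ≤ ‖(a : ℂ) ^ (-s)‖ + ‖(u : ℂ) ^ (-s)‖ := norm_sub_le _ _
    _ = a ^ (-s.re) + u ^ (-s.re) := by
        rw [norm_cpow_eq_rpow_re_of_pos ha, norm_cpow_eq_rpow_re_of_pos (ha.trans_le hau), neg_re]
    _ ≤ 2 * a ^ (-s.re) := by linarith

lemma norm_ofReal_cpow_neg_sub_le_norm_mul {s : ℂ} (hs : 0 < s.re) {a u : ℝ} (ha : 0 < a)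
    (hau : a ≤ u) :
    ‖(a : ℂ) ^ (-s) - (u : ℂ) ^ (-s)‖ ≤ ‖s‖ * a ^ (-s.re - 1) * (u - a) := by
  have hs0 : s ≠ 0 := by rintro rfl; simp at hs
  have hderiv : ∀ x ∈ Set.Icc a u, HasDerivWithinAt (fun x : ℝ => (x : ℂ) ^ (-s))
      (-s * (x : ℂ) ^ (-s - 1)) (Set.Icc a u) x := fun x hx =>
    (hasDerivAt_ofReal_cpow_const (ha.trans_le hx.1).ne' (neg_ne_zero.mpr hs0)).hasDerivWithinAt
  have hbound : ∀ x ∈ Set.Icc a u, ‖-s * (x : ℂ) ^ (-s - 1)‖ ≤ ‖s‖ * a ^ (-s.re - 1) := by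
    intro x hx
    rw [norm_mul, norm_neg, norm_cpow_eq_rpow_re_of_pos (ha.trans_le hx.1), sub_re, neg_re, one_re]
    exact mul_le_mul_of_nonneg_left
      (Real.rpow_le_rpow_of_nonpos ha hx.1 (by linarith)) (norm_nonneg s)
  have hmv := (convex_Icc a u).norm_image_sub_le_of_norm_hasDerivWithin_le hderiv hbound
    (Set.right_mem_Icc.mpr hau) (Set.left_mem_Icc.mpr hau)
  rwa [Real.norm_eq_abs, abs_sub_comm, abs_of_nonneg (sub_nonneg.mpr hau)] at hmv

lemma norm_ofReal_cpow_neg_sub_le {s : ℂ} (hs : 0 < s.re) {a u θ : ℝ} (ha : 0 < a)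
    (hau : a ≤ u) (hua : u ≤ a + 1) (hθ : θ ∈ Set.Icc (0 : ℝ) 1) :
    ‖(a : ℂ) ^ (-s) - (u : ℂ) ^ (-s)‖ ≤ 2 * ‖s‖ ^ θ * a ^ (-s.re - θ) := by
  have hunit : ‖(a : ℂ) ^ (-s) - (u : ℂ) ^ (-s)‖ ≤ ‖s‖ * a ^ (-s.re - 1) :=
    (norm_ofReal_cpow_neg_sub_le_norm_mul hs ha hau).trans
      (mul_le_of_le_one_right (by positivity) (by linarith))
  calc ‖(a : ℂ) ^ (-s) - (u : ℂ) ^ (-s)‖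
      ≤ (2 * a ^ (-s.re)) ^ (1 - θ) * (‖s‖ * a ^ (-s.re - 1)) ^ θ :=
        le_rpow_mul_rpow_of_le_of_le (norm_nonneg _)
          (norm_ofReal_cpow_neg_sub_le_two_mul hs.le ha hau) hunit hθ
    _ = 2 ^ (1 - θ) * ‖s‖ ^ θ * (a ^ (-s.re * (1 - θ)) * a ^ ((-s.re - 1) * θ)) := by
        rw [Real.mul_rpow (by simp) (by positivity), Real.mul_rpow (by positivity) (by positivity),
          ← Real.rpow_mul ha.le, ← Real.rpow_mul ha.le]
        ring
    _ = 2 ^ (1 - θ) * ‖s‖ ^ θ * a ^ (-s.re - θ) := by rw [← Real.rpow_add ha]; ring_nf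
    _ ≤ 2 * ‖s‖ ^ θ * a ^ (-s.re - θ) := by
        gcongr
        simpa using Real.rpow_le_rpow_of_exponent_le one_le_two (show 1 - θ ≤ 1 by linarith [hθ.1])

lemma summable_natCast_add_one_rpow_neg {e : ℝ} (he : 1 < e) :
    Summable fun n : ℕ => ((n : ℝ) + 1) ^ (-e) := by
  simpa using (summable_nat_add_iff 1).mpr (Real.summable_nat_rpow.mpr (neg_lt_neg he))

lemma tendsto_natCast_add_one_cpow_zero {s : ℂ} (hs : s.re < 0) :
    Tendsto (fun n : ℕ => ((n + 1 : ℝ) : ℂ) ^ s) atTop (nhds 0) := by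
  rw [tendsto_zero_iff_norm_tendsto_zero]
  have hnorm (n : ℕ) : ‖((n + 1 : ℝ) : ℂ) ^ s‖ = ((n + 1 : ℕ) : ℝ) ^ (- -s.re) := by
    rw [norm_cpow_eq_rpow_re_of_pos (by positivity)]; simp
  simp_rw [hnorm]
  exact ((tendsto_rpow_neg_atTop (neg_pos.mpr hs)).comp tendsto_natCast_atTop_atTop).comp
    (tendsto_add_atTop_nat 1)

/-- The bound satisfied by the terms of an Abel-summed Dirichlet series at `s`. Taking `θ = 1`
gives convergence for `re s > 0`; a small `θ` gives slow growth in `s` just left of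
`re s = 1`. -/
def HasAbelBound (K : ℝ) (s : ℂ) (g : ℕ → ℂ) : Prop :=
  ∀ n : ℕ, ∀ θ ∈ Set.Icc (0 : ℝ) 1, ‖g n‖ ≤ K * ‖s‖ ^ θ * ((n : ℝ) + 1) ^ (-s.re - θ)

namespace HasAbelBound

lemma norm_le {K : ℝ} {s : ℂ} {g : ℕ → ℂ} (h : HasAbelBound K s g) (n : ℕ) :
    ‖g n‖ ≤ K * ‖s‖ * ((n : ℝ) + 1) ^ (-(s.re + 1)) := by
  simpa only [Real.rpow_one, neg_add'] using h n 1 ⟨zero_le_one, le_rfl⟩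

lemma summable {K : ℝ} {s : ℂ} {g : ℕ → ℂ} (h : HasAbelBound K s g) (hs : 0 < s.re) :
    Summable g :=
  .of_norm_bounded ((summable_natCast_add_one_rpow_neg (by linarith)).mul_left _) h.norm_le

lemma norm_tsum_le {K : ℝ} {s : ℂ} {g : ℕ → ℂ} (h : HasAbelBound K s g) (hK : 0 ≤ K)
    {σ θ : ℝ} (hθ : θ ∈ Set.Icc (0 : ℝ) 1) (hσ : σ ≤ s.re) (hσθ : 1 < σ + θ) :
    ‖∑' n, g n‖ ≤ K * (∑' n : ℕ, ((n : ℝ) + 1) ^ (-(σ + θ))) * ‖s‖ ^ θ := by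
  have hle (n : ℕ) : ‖g n‖ ≤ K * ‖s‖ ^ θ * ((n : ℝ) + 1) ^ (-(σ + θ)) := by
    refine (h n θ hθ).trans ?_
    gcongr
    · linarith [(n.cast_nonneg : (0 : ℝ) ≤ n)]
    · linarith
  have hsum := tsum_of_norm_bounded
    ((summable_natCast_add_one_rpow_neg hσθ).mul_left (K * ‖s‖ ^ θ)).hasSum hle
  rw [tsum_mul_left] at hsum
  linarith

lemma differentiableOn_tsum {K : ℝ} (hK : 0 ≤ K) {g : ℕ → ℂ → ℂ} {U : Set ℂ} (hU : IsOpen U)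
    (hre : ∀ s ∈ U, 0 < s.re) (hd : ∀ n, DifferentiableOn ℂ (g n) U)
    (hb : ∀ s ∈ U, HasAbelBound K s (g · s)) :
    DifferentiableOn ℂ (fun s => ∑' n, g n s) U := by
  intro s hs
  let V : Set ℂ := U ∩ ({z | s.re / 2 < z.re} ∩ Metric.ball s 1)
  have hV : IsOpen V :=
    hU.inter ((isOpen_lt continuous_const continuous_re).inter Metric.isOpen_ball)
  have hsV : s ∈ V := ⟨hs, half_lt_self (hre s hs), Metric.mem_ball_self one_pos⟩
  have hsummable := (summable_natCast_add_one_rpow_neg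
    (show 1 < s.re / 2 + 1 by linarith [hre s hs])).mul_left (K * (‖s‖ + 1))
  have hV_diff : DifferentiableOn ℂ (fun s => ∑' n, g n s) V := by
    refine differentiableOn_tsum_of_summable_norm hsummable
      (fun n => (hd n).mono Set.inter_subset_left) hV fun n w hw => ?_
    have hw_norm : ‖w‖ ≤ ‖s‖ + 1 := by
      linarith [norm_sub_norm_le w s, mem_ball_iff_norm.mp hw.2.2]
    have hw_re : s.re / 2 < w.re := hw.2.1
    refine ((hb w hw.1).norm_le n).trans ?_
    gcongr
    linarith [(n.cast_nonneg : (0 : ℝ) ≤ n)]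
  exact (hV_diff.differentiableAt (hV.mem_nhds hsV)).differentiableWithinAt

lemma eqOn_tsum {K : ℝ} (hK : 0 ≤ K) {f : ℂ → ℂ} {g : ℕ → ℂ → ℂ} {U : Set ℂ} (hU : IsOpen U)
    (hconn : IsPreconnected U) (hre : ∀ s ∈ U, 0 < s.re) (hf : DifferentiableOn ℂ f U)
    (hd : ∀ n, DifferentiableOn ℂ (g n) U) (hb : ∀ s ∈ U, HasAbelBound K s (g · s)) {s₀ : ℂ}
    (hs₀ : s₀ ∈ U) (hs₀_re : 1 < s₀.re) (heq : ∀ s, 1 < s.re → f s = ∑' n, g n s) :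
    Set.EqOn f (fun s => ∑' n, g n s) U := by
  refine (hf.analyticOnNhd hU).eqOn_of_preconnected_of_eventuallyEq
    ((differentiableOn_tsum hK hU hre hd hb).analyticOnNhd hU) hconn hs₀ ?_
  filter_upwards [(isOpen_lt continuous_const continuous_re).mem_nhds hs₀_re] with s hs
  exact heq s hs

end HasAbelBound

/-- Growth at most `|im s| ^ (1/20)` on a neighbourhood of the strip `1 ≤ re s ≤ 2` away from the
real axis. The exponent is small enough for the derivative of the logarithmic derivative to be
integrable against the kernel of the smoothed Perron formula. -/
def GrowsSlowly (g : ℂ → ℂ) : Prop :=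
  ∃ C : ℝ, 0 < C ∧ ∀ s : ℂ, 39 / 40 ≤ s.re → s.re ≤ 3 → 1 / 2 ≤ |s.im| →
    ‖g s‖ ≤ C * |s.im| ^ (1 / 20 : ℝ)

lemma growsSlowly_of_norm_le {g : ℂ → ℂ} {A B : ℝ} (hA : 0 < A) (hB : 0 ≤ B)
    (h : ∀ s : ℂ, 39 / 40 ≤ s.re → 1 / 2 ≤ |s.im| → ‖g s‖ ≤ A + B * ‖s‖ ^ (1 / 20 : ℝ)) :
    GrowsSlowly g := by
  refine ⟨2 * A + 7 * B, by positivity, fun s hre hre3 him => (h s hre him).trans ?_⟩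
  have hnorm : ‖s‖ ≤ 7 * |s.im| := by
    have := norm_le_abs_re_add_abs_im s
    rw [abs_of_nonneg (by linarith)] at this
    linarith
  have hpow : ‖s‖ ^ (1 / 20 : ℝ) ≤ 7 * |s.im| ^ (1 / 20 : ℝ) :=
    (Real.rpow_le_rpow (norm_nonneg s) hnorm (by norm_num)).trans
      (mul_rpow_le_mul_rpow_of_exponent_le_one (by norm_num) (abs_nonneg _) (by norm_num))
  have hone : 1 ≤ 2 * |s.im| ^ (1 / 20 : ℝ) :=
    (Real.one_le_rpow (show 1 ≤ 2 * |s.im| by linarith) (by norm_num)).trans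
      (mul_rpow_le_mul_rpow_of_exponent_le_one one_le_two (abs_nonneg _) (by norm_num))
  nlinarith

/-- The term `∫ u in n+1..n+2, (n+1)^(-s) - u^(-s)` of the Euler–Maclaurin expansion
`ζ(s) = 1/(s-1) + ∑ₙ zetaTerm n s`. -/
noncomputable def zetaTerm (n : ℕ) (s : ℂ) : ℂ :=
  ((n + 1 : ℝ) : ℂ) ^ (-s) -
    (((n + 1 + 1 : ℝ) : ℂ) ^ (-s + 1) - ((n + 1 : ℝ) : ℂ) ^ (-s + 1)) / (-s + 1)

lemma neg_add_one_ne_zero {s : ℂ} (hs : s ≠ 1) : -s + 1 ≠ 0 := fun h =>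
  hs (by linear_combination -h)

lemma zetaTerm_eq_integral {s : ℂ} (hs : s ≠ 1) (n : ℕ) :
    zetaTerm n s = ∫ u in (n + 1 : ℝ)..(n + 1 + 1),
      (((n + 1 : ℝ) : ℂ) ^ (-s) - (u : ℂ) ^ (-s)) := by
  have h0 : (0 : ℝ) ∉ Set.uIcc (n + 1 : ℝ) (n + 1 + 1) := by
    rw [Set.uIcc_of_le (by linarith)]
    exact fun h => h.1.not_gt (by positivity)
  rw [intervalIntegral.integral_sub (by simp) (intervalIntegral.intervalIntegrable_cpow (.inr h0)),
    integral_cpow (.inr ⟨fun h => hs (neg_injective h), h0⟩)]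
  simp [zetaTerm]

lemma hasAbelBound_zetaTerm {s : ℂ} (hs : 0 < s.re) (hs1 : s ≠ 1) :
    HasAbelBound 2 s (zetaTerm · s) := by
  intro n θ hθ
  simp only [zetaTerm_eq_integral hs1]
  have hle := intervalIntegral.norm_integral_le_of_norm_le_const (a := n + 1) (b := n + 1 + 1)
    (f := fun u : ℝ => ((n + 1 : ℝ) : ℂ) ^ (-s) - (u : ℂ) ^ (-s))
    (C := 2 * ‖s‖ ^ θ * (n + 1 : ℝ) ^ (-s.re - θ)) fun u hu => by
      rw [Set.uIoc_of_le (by linarith)] at hu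
      exact norm_ofReal_cpow_neg_sub_le hs (by positivity) hu.1.le hu.2 hθ
  simpa using hle

lemma hasSum_natCast_add_one_cpow_riemannZeta {s : ℂ} (hs : 1 < s.re) :
    HasSum (fun n : ℕ => ((n + 1 : ℝ) : ℂ) ^ (-s)) (riemannZeta s) := by
  have hsummable : Summable fun n : ℕ => ((n + 1 : ℝ) : ℂ) ^ (-s) := by
    refine .of_norm_bounded (summable_natCast_add_one_rpow_neg hs) fun n => ?_
    rw [norm_cpow_eq_rpow_re_of_pos (by positivity), neg_re]
  rw [zeta_eq_tsum_one_div_nat_add_one_cpow hs]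
  convert hsummable.hasSum using 3 with n
  simp [cpow_neg]

lemma riemannZeta_eq_tsum_zetaTerm_of_one_lt_re {s : ℂ} (hs : 1 < s.re) :
    riemannZeta s = 1 / (s - 1) + ∑' n, zetaTerm n s := by
  have hs1 : s ≠ 1 := by rintro rfl; simp at hs
  have htelescope (N : ℕ) : ∑ i ∈ Finset.range N, (((i + 1 : ℝ) : ℂ) ^ (-s) - zetaTerm i s) =
      (((N + 1 : ℝ) : ℂ) ^ (-s + 1) - 1) / (-s + 1) := by
    have hsum := Finset.sum_range_sub (fun n : ℕ => ((n + 1 : ℝ) : ℂ) ^ (-s + 1)) N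
    simp only [CharP.cast_eq_zero, zero_add, ofReal_one, one_cpow] at hsum
    rw [← hsum, Finset.sum_div]
    exact Finset.sum_congr rfl fun i _ => by simp [zetaTerm]
  have hlim : Tendsto (fun N : ℕ => ∑ i ∈ Finset.range N,
      (((i + 1 : ℝ) : ℂ) ^ (-s) - zetaTerm i s)) atTop (nhds ((0 - 1) / (-s + 1))) := by
    simp_rw [htelescope]
    exact ((tendsto_natCast_add_one_cpow_zero (by simpa using hs)).sub_const 1).div_const _
  have heq := tendsto_nhds_unique ((hasSum_natCast_add_one_cpow_riemannZeta hs).sub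
    ((hasAbelBound_zetaTerm (by linarith) hs1).summable (by linarith)).hasSum).tendsto_sum_nat hlim
  have hpole : (0 - 1) / (-s + 1) = 1 / (s - 1) := by
    rw [zero_sub, neg_div, ← div_neg, neg_add, neg_neg, ← sub_eq_add_neg]
  rw [hpole] at heq
  linear_combination heq

lemma differentiableAt_zetaTerm (n : ℕ) {s : ℂ} (hs : s ≠ 1) :
    DifferentiableAt ℂ (zetaTerm n) s := by
  have hn : ((n + 1 : ℝ) : ℂ) ≠ 0 := by exact_mod_cast n.succ_ne_zero
  have hn' : ((n + 1 + 1 : ℝ) : ℂ) ≠ 0 := by exact_mod_cast (n + 1).succ_ne_zero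
  have hs' := neg_add_one_ne_zero hs
  unfold zetaTerm
  fun_prop (disch := first | assumption | exact Or.inl ‹_›)

lemma riemannZeta_eq_tsum_zetaTerm_of_im_pos {s : ℂ} (hs : 0 < s.re) (him : 0 < s.im) :
    riemannZeta s = 1 / (s - 1) + ∑' n, zetaTerm n s := by
  let U : Set ℂ := {z | 0 < z.re} ∩ {z | 0 < z.im}
  have hU : IsOpen U :=
    (isOpen_lt continuous_const continuous_re).inter (isOpen_lt continuous_const continuous_im)
  have hconv : Convex ℝ U := (convex_halfSpace_re_gt 0).inter (convex_halfSpace_im_gt 0)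
  have hne : ∀ z ∈ U, z ≠ 1 := by rintro z ⟨-, hz⟩ rfl; simp at hz
  have hdiff : DifferentiableOn ℂ (fun z => riemannZeta z - 1 / (z - 1)) U := fun z hz =>
    ((differentiableAt_riemannZeta (hne z hz)).sub (by
      have := sub_ne_zero.mpr (hne z hz)
      fun_prop (disch := assumption))).differentiableWithinAt
  have heq := HasAbelBound.eqOn_tsum zero_le_two hU hconv.isPreconnected (fun z hz => hz.1) hdiff
    (fun n z hz => (differentiableAt_zetaTerm n (hne z hz)).differentiableWithinAt)
    (fun z hz => hasAbelBound_zetaTerm hz.1 (hne z hz)) (s₀ := 2 + I) ⟨by simp, by simp⟩ (by simp)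
    (fun z hz => by rw [riemannZeta_eq_tsum_zetaTerm_of_one_lt_re hz, add_sub_cancel_left])
  linear_combination heq (⟨hs, him⟩ : s ∈ U)

lemma growsSlowly_riemannZeta : GrowsSlowly riemannZeta := by
  set S : ℝ := ∑' n : ℕ, ((n : ℝ) + 1) ^ (-(39 / 40 + 1 / 20 : ℝ))
  have hS : 0 ≤ S := tsum_nonneg fun n => by positivity
  have hupper (s : ℂ) (hre : 39 / 40 ≤ s.re) (him : 1 / 2 ≤ s.im) :
      ‖riemannZeta s‖ ≤ 2 + 2 * S * ‖s‖ ^ (1 / 20 : ℝ) := by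
    have hs1 : s ≠ 1 := by rintro rfl; norm_num at him
    have hpole : ‖1 / (s - 1)‖ ≤ 2 := by
      have him_le : |s.im| ≤ ‖s - 1‖ := by simpa using abs_im_le_norm (s - 1)
      rw [norm_div, norm_one, div_le_iff₀ (norm_pos_iff.mpr (sub_ne_zero.mpr hs1))]
      linarith [le_abs_self s.im]
    rw [riemannZeta_eq_tsum_zetaTerm_of_im_pos (by linarith) (by linarith)]
    exact (norm_add_le _ _).trans (add_le_add hpole
      ((hasAbelBound_zetaTerm (by linarith) hs1).norm_tsum_le zero_le_two
        ⟨by norm_num, by norm_num⟩ hre (by norm_num)))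
  refine growsSlowly_of_norm_le two_pos (mul_nonneg zero_le_two hS) fun s hre him => ?_
  rcases le_total 0 s.im with h | h
  · rw [abs_of_nonneg h] at him
    exact hupper s hre him
  · rw [abs_of_nonpos h] at him
    simpa [riemannZeta_conj] using
      hupper ((starRingEnd ℂ) s) (by simpa using hre) (by simpa using him)

/-- The `n`-th term of the Dirichlet series `∑ a n * (n + 1) ^ (-s)` after summation by parts. -/
noncomputable def abelTerm (a : ℕ → ℂ) (n : ℕ) (s : ℂ) : ℂ :=
  (∑ m ∈ Finset.range (n + 1), a m) * (((n + 1 : ℝ) : ℂ) ^ (-s) - ((n + 1 + 1 : ℝ) : ℂ) ^ (-s))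

lemma differentiable_abelTerm (a : ℕ → ℂ) (n : ℕ) : Differentiable ℂ (abelTerm a n) := by
  have hn : ((n + 1 : ℝ) : ℂ) ≠ 0 := by exact_mod_cast n.succ_ne_zero
  have hn' : ((n + 1 + 1 : ℝ) : ℂ) ≠ 0 := by exact_mod_cast (n + 1).succ_ne_zero
  unfold abelTerm
  fun_prop (disch := exact Or.inl ‹_›)

lemma hasAbelBound_abelTerm {a : ℕ → ℂ} {B : ℝ}
    (ha : ∀ N, ‖∑ m ∈ Finset.range N, a m‖ ≤ B) {s : ℂ} (hs : 0 < s.re) :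
    HasAbelBound (2 * B) s (abelTerm a · s) := by
  intro n θ hθ
  have hB : 0 ≤ B := (norm_nonneg _).trans (ha 0)
  simp only [abelTerm, norm_mul]
  calc _ ≤ B * (2 * ‖s‖ ^ θ * (n + 1 : ℝ) ^ (-s.re - θ)) := by
        gcongr
        · exact ha _
        · exact norm_ofReal_cpow_neg_sub_le hs (by positivity) (by linarith) le_rfl hθ
    _ = 2 * B * ‖s‖ ^ θ * (n + 1 : ℝ) ^ (-s.re - θ) := by ring

lemma sum_range_abelTerm (a : ℕ → ℂ) (s : ℂ) (N : ℕ) :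
    ∑ n ∈ Finset.range N, abelTerm a n s = ∑ n ∈ Finset.range N, a n * ((n + 1 : ℝ) : ℂ) ^ (-s) -
      (∑ n ∈ Finset.range N, a n) * ((N + 1 : ℝ) : ℂ) ^ (-s) := by
  induction N with
  | zero => simp
  | succ N ih =>
    rw [Finset.sum_range_succ, ih, abelTerm, Finset.sum_range_succ, Finset.sum_range_succ]
    push_cast
    ring

lemma tsum_abelTerm {a : ℕ → ℂ} {B : ℝ} (ha : ∀ N, ‖∑ m ∈ Finset.range N, a m‖ ≤ B) {s : ℂ}
    (hs : 0 < s.re) {L : ℂ} (hL : HasSum (fun n : ℕ => a n * ((n + 1 : ℝ) : ℂ) ^ (-s)) L) :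
    ∑' n, abelTerm a n s = L := by
  have hboundary : Tendsto (fun N : ℕ => (∑ n ∈ Finset.range N, a n) * ((N + 1 : ℝ) : ℂ) ^ (-s))
      atTop (nhds 0) := by
    have hpow := (tendsto_natCast_add_one_cpow_zero (s := -s) (by simpa using hs)).norm.const_mul B
    rw [norm_zero, mul_zero] at hpow
    refine squeeze_zero_norm (fun N => ?_) hpow
    rw [norm_mul]
    gcongr
    exact ha N
  have hlim := hL.tendsto_sum_nat.sub hboundary
  simp_rw [← sum_range_abelTerm, sub_zero] at hlim
  exact tendsto_nhds_unique ((hasAbelBound_abelTerm ha hs).summable hs).hasSum.tendsto_sum_nat hlim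

section DirichletCharacter

variable {q : ℕ} [NeZero q] {χ : DirichletCharacter ℂ q}

lemma sum_range_character_eq_zero (hχ : χ ≠ 1) : ∑ m ∈ Finset.range q, χ (m : ZMod q) = 0 := by
  rw [← MulChar.sum_eq_zero_of_ne_one hχ]
  refine Finset.sum_bij' (fun m _ => (m : ZMod q)) (fun a _ => a.val) (by simp)
    (fun a _ => Finset.mem_range.mpr a.val_lt) (fun m hm => ?_) (by simp) (by simp)
  exact ZMod.val_natCast_of_lt (Finset.mem_range.mp hm)

lemma norm_sum_range_character_le (hχ : χ ≠ 1) (N : ℕ) :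
    ‖∑ m ∈ Finset.range N, χ (m : ZMod q)‖ ≤ q := by
  induction N using Nat.strong_induction_on with
  | _ N ih =>
    rcases le_or_gt q N with hqN | hNq
    · obtain ⟨M, rfl⟩ := Nat.exists_eq_add_of_le hqN
      rw [Finset.sum_range_add, sum_range_character_eq_zero hχ, zero_add]
      simpa using ih M (Nat.lt_add_of_pos_left (NeZero.pos q))
    · calc _ ≤ ∑ m ∈ Finset.range N, ‖χ (m : ZMod q)‖ := norm_sum_le _ _
        _ ≤ ∑ _ ∈ Finset.range N, (1 : ℝ) :=
            Finset.sum_le_sum fun _ _ => DirichletCharacter.norm_le_one χ _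
        _ = N := by simp
        _ ≤ q := by exact_mod_cast hNq.le

lemma norm_sum_range_character_succ_le (hχ : χ ≠ 1) (N : ℕ) :
    ‖∑ m ∈ Finset.range N, χ ((m + 1 : ℕ) : ZMod q)‖ ≤ q + 1 := by
  have hshift := Finset.sum_range_succ' (fun m : ℕ => χ (m : ZMod q)) N
  rw [← sub_eq_iff_eq_add] at hshift
  rw [← hshift]
  exact (norm_sub_le _ _).trans
    (add_le_add (norm_sum_range_character_le hχ _) (DirichletCharacter.norm_le_one χ _))

lemma hasSum_LFunction (χ : DirichletCharacter ℂ q) {s : ℂ} (hs : 1 < s.re) :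
    HasSum (fun n : ℕ => χ ((n + 1 : ℕ) : ZMod q) * ((n + 1 : ℝ) : ℂ) ^ (-s)) (χ.LFunction s) := by
  rw [DirichletCharacter.LFunction_eq_LSeries χ hs]
  have hsum := (hasSum_nat_add_iff' 1).mpr
    (DirichletCharacter.LSeriesSummable_of_one_lt_re χ hs).hasSum
  simp only [Finset.range_one, Finset.sum_singleton, LSeries.term_zero, sub_zero] at hsum
  refine hsum.congr_fun fun n => ?_
  rw [LSeries.term_of_ne_zero n.succ_ne_zero, cpow_neg]
  push_cast
  rfl

lemma growsSlowly_LFunction (hχ : χ ≠ 1) : GrowsSlowly χ.LFunction := by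
  have hsums := norm_sum_range_character_succ_le hχ
  have heq := HasAbelBound.eqOn_tsum (K := 2 * (q + 1)) (by positivity)
    (isOpen_lt continuous_const continuous_re) (convex_halfSpace_re_gt 0).isPreconnected
    (fun s hs => hs) (DirichletCharacter.differentiable_LFunction hχ).differentiableOn
    (fun n => (differentiable_abelTerm _ n).differentiableOn)
    (fun s hs => hasAbelBound_abelTerm hsums hs) (s₀ := 2) (by simp) (by simp)
    (fun s hs => (tsum_abelTerm hsums (one_pos.trans hs) (hasSum_LFunction χ hs)).symm)
  set S : ℝ := ∑' n : ℕ, ((n : ℝ) + 1) ^ (-(39 / 40 + 1 / 20 : ℝ))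
  have hS : 0 ≤ S := tsum_nonneg fun n => by positivity
  refine growsSlowly_of_norm_le (B := 2 * (q + 1) * S) one_pos (mul_nonneg (by positivity) hS)
    fun s hre _ => ?_
  have hre0 : 0 < s.re := by linarith
  rw [heq hre0]
  exact ((hasAbelBound_abelTerm hsums hre0).norm_tsum_le (by positivity) (θ := 1 / 20)
    ⟨by norm_num, by norm_num⟩ hre (by norm_num)).trans (le_add_of_nonneg_left zero_le_one)

end DirichletCharacter

end DirichletSeriesGrowth

/-! ### Logarithmic derivatives near the line `re s = 1` -/

section LogarithmicDerivatives

open Complex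

/-- The output of the `3-4-1` inequality: `g` does not vanish on `re s = 1` in a quantitative
way. -/
def HasCubicLowerBound (g : ℂ → ℂ) : Prop :=
  ∃ c : ℝ, 0 < c ∧ ∀ s : ℂ, 1 < s.re → s.re ≤ 2 → 1 ≤ |s.im| →
    c * (s.re - 1) ^ 3 ≤ ‖g s‖ ^ 4 * |s.im| ^ (1 / 20 : ℝ)

lemma ne_one_of_one_le_abs_im {s : ℂ} (hs : 1 ≤ |s.im|) : s ≠ 1 := by
  rintro rfl; norm_num at hs

lemma diffContOnCl_ball_of_one_le_abs_im {g : ℂ → ℂ} (hd : ∀ s ≠ 1, DifferentiableAt ℂ g s)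
    {s : ℂ} (hs : 1 ≤ |s.im|) : DiffContOnCl ℂ g (Metric.ball s (1 / 40)) := by
  apply DifferentiableOn.diffContOnCl
  rw [closure_ball s (by norm_num)]
  intro z hz
  refine (hd z ?_).differentiableWithinAt
  rintro rfl
  have him := (abs_im_le_norm (1 - s)).trans (mem_closedBall_iff_norm.mp hz)
  simp only [sub_im, one_im, zero_sub, abs_neg] at him
  linarith

lemma norm_image_sub_le_of_norm_deriv_le_horizontal {g : ℂ → ℂ} {s : ℂ} {b M : ℝ} (hb : s.re ≤ b)
    (hd : ∀ z : ℂ, z.im = s.im → DifferentiableAt ℂ g z)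
    (hM : ∀ z : ℂ, z.im = s.im → s.re ≤ z.re → z.re ≤ b → ‖deriv g z‖ ≤ M) :
    ‖g ⟨b, s.im⟩ - g s‖ ≤ M * (b - s.re) := by
  have hconv : Convex ℝ {z : ℂ | z.im = s.im ∧ s.re ≤ z.re ∧ z.re ≤ b} :=
    (convex_hyperplane imLm.isLinear _).inter
      ((convex_halfSpace_re_ge _).inter (convex_halfSpace_re_le _))
  have hmv := hconv.norm_image_sub_le_of_norm_deriv_le (fun z hz => hd z hz.1)
    (fun z hz => hM z hz.1 hz.2.1 hz.2.2) (x := s) (y := ⟨b, s.im⟩) ⟨rfl, le_rfl, hb⟩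
    ⟨rfl, hb, le_rfl⟩
  have hdist : (⟨b, s.im⟩ : ℂ) - s = ((b - s.re : ℝ) : ℂ) := by
    apply Complex.ext <;> simp
  rwa [hdist, norm_real, Real.norm_of_nonneg (sub_nonneg.mpr hb)] at hmv

lemma deriv_logDeriv {g : ℂ → ℂ} {s : ℂ} (hg : ∀ᶠ z in nhds s, DifferentiableAt ℂ g z)
    (hs : g s ≠ 0) :
    deriv (logDeriv g) s = iteratedDeriv 2 g s / g s - (iteratedDeriv 1 g s / g s) ^ 2 := by
  have hg' : DifferentiableAt ℂ (deriv g) s :=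
    (analyticAt_iff_eventually_differentiableAt.mpr hg).deriv.differentiableAt
  rw [iteratedDeriv_succ, iteratedDeriv_one, show logDeriv g = deriv g / g from rfl,
    deriv_div hg' hg.self_of_nhds hs]
  field_simp

lemma le_mul_pow_four_of_mul_cube_le {b κ τ x y : ℝ} (hτ : 0 < τ) (hy : 0 ≤ y)
    (hx : κ ^ 4 / τ ^ 5 ≤ x) (h : b ^ 4 * x ^ 3 ≤ y ^ 4 * τ) :
    b * κ ^ 3 ≤ y * τ ^ 4 := by
  refine le_of_pow_le_pow_left₀ four_ne_zero (by positivity) ?_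
  calc (b * κ ^ 3) ^ 4 = b ^ 4 * (κ ^ 4 / τ ^ 5) ^ 3 * τ ^ 15 := by field_simp
    _ ≤ b ^ 4 * x ^ 3 * τ ^ 15 := by gcongr
    _ ≤ y ^ 4 * τ * τ ^ 15 := by gcongr
    _ = (y * τ ^ 4) ^ 4 := by ring

namespace GrowsSlowly

variable {g : ℂ → ℂ}

lemma exists_norm_le_on_sphere (h : GrowsSlowly g) :
    ∃ C : ℝ, 0 < C ∧ ∀ s : ℂ, 1 ≤ s.re → s.re ≤ 2 → 1 ≤ |s.im| →
      ∀ z ∈ Metric.sphere s (1 / 40), ‖g z‖ ≤ C * |s.im| ^ (1 / 20 : ℝ) := by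
  obtain ⟨C, hC, hg⟩ := h
  refine ⟨C * 2, by positivity, fun s hre hre2 him z hz => ?_⟩
  rw [mem_sphere_iff_norm] at hz
  have hre_sub := abs_le.mp ((abs_re_le_norm (z - s)).trans_eq hz)
  have him_sub := (abs_im_le_norm (z - s)).trans_eq hz
  rw [sub_re] at hre_sub
  rw [sub_im] at him_sub
  have him_le := (abs_sub_abs_le_abs_sub z.im s.im).trans him_sub
  have him_ge := (abs_sub_abs_le_abs_sub s.im z.im).trans ((abs_sub_comm _ _).trans_le him_sub)
  rw [mul_assoc]
  refine (hg z (by linarith) (by linarith) (by linarith)).trans ?_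
  gcongr
  exact (Real.rpow_le_rpow (abs_nonneg _) (show |z.im| ≤ 2 * |s.im| by linarith)
    (by norm_num)).trans
    (mul_rpow_le_mul_rpow_of_exponent_le_one one_le_two (abs_nonneg _) (by norm_num))

lemma exists_norm_iteratedDeriv_le (h : GrowsSlowly g) (hd : ∀ s ≠ 1, DifferentiableAt ℂ g s)
    (n : ℕ) : ∃ C : ℝ, 0 < C ∧ ∀ s : ℂ, 1 ≤ s.re → s.re ≤ 2 → 1 ≤ |s.im| →
      ‖iteratedDeriv n g s‖ ≤ C * |s.im| ^ (1 / 20 : ℝ) := by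
  obtain ⟨C, hC, hg⟩ := h.exists_norm_le_on_sphere
  refine ⟨n.factorial * C / (1 / 40) ^ n, by positivity, fun s hre hre2 him => ?_⟩
  refine (norm_iteratedDeriv_le_of_forall_mem_sphere_norm_le n (by norm_num)
    (diffContOnCl_ball_of_one_le_abs_im hd him) (hg s hre hre2 him)).trans_eq ?_
  ring

lemma exists_norm_deriv_le (h : GrowsSlowly g) (hd : ∀ s ≠ 1, DifferentiableAt ℂ g s) :
    ∃ C : ℝ, 0 < C ∧ ∀ s : ℂ, 1 ≤ s.re → s.re ≤ 2 → 1 ≤ |s.im| →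
      ‖deriv g s‖ ≤ C * |s.im| ^ (1 / 20 : ℝ) := by
  simpa only [iteratedDeriv_one] using h.exists_norm_iteratedDeriv_le hd 1

-- To the right of `re s = 1 + η` the cubic lower bound applies; to the left of it, `g` is compared
-- with its value on that line. The choice `η = κ⁴ |im s|^(-5/20)` balances the two.
lemma exists_le_norm_mul (h : GrowsSlowly g) (hd : ∀ s ≠ 1, DifferentiableAt ℂ g s)
    (hlow : HasCubicLowerBound g) :
    ∃ m : ℝ, 0 < m ∧ ∀ s : ℂ, 1 < s.re → s.re ≤ 2 → 1 ≤ |s.im| →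
      m ≤ ‖g s‖ * (|s.im| ^ (1 / 20 : ℝ)) ^ 4 := by
  obtain ⟨D, hD, hderiv⟩ := h.exists_norm_deriv_le hd
  obtain ⟨c, hc, hlow⟩ := hlow
  obtain ⟨b, hb, rfl⟩ : ∃ b : ℝ, 0 < b ∧ c = b ^ 4 :=
    ⟨c ^ ((4 : ℕ)⁻¹ : ℝ), by positivity, (Real.rpow_inv_natCast_pow hc.le four_ne_zero).symm⟩
  obtain ⟨κ, hκ, hκ1, hDκ⟩ : ∃ κ : ℝ, 0 < κ ∧ κ ≤ 1 ∧ D * κ ≤ b / 2 := by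
    refine ⟨min 1 (b / 2 / D), by positivity, min_le_left _ _, ?_⟩
    exact (mul_le_mul_of_nonneg_left (min_le_right _ _) hD.le).trans_eq (by field_simp)
  refine ⟨b / 2 * κ ^ 3, by positivity, fun s hre hre2 him => ?_⟩
  set τ : ℝ := |s.im| ^ (1 / 20 : ℝ) with hτ
  have hτ1 : 1 ≤ τ := Real.one_le_rpow him (by norm_num)
  set η : ℝ := κ ^ 4 / τ ^ 5 with hη
  have hη0 : 0 < η := by positivity
  have hη1 : η ≤ 1 :=
    div_le_one_of_le₀ ((pow_le_one₀ hκ.le hκ1).trans (one_le_pow₀ hτ1)) (by positivity)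
  have hright (w : ℂ) (hw : w.im = s.im) (hwre : 1 + η ≤ w.re) (hwre2 : w.re ≤ 2) :
      b * κ ^ 3 ≤ ‖g w‖ * τ ^ 4 := by
    have hcubic := hlow w (by linarith) hwre2 (by rwa [hw])
    rw [hw, ← hτ] at hcubic
    exact le_mul_pow_four_of_mul_cube_le (by positivity) (norm_nonneg _) (by linarith) hcubic
  have hbκ : 0 < b * κ ^ 3 := by positivity
  rcases le_or_gt (1 + η) s.re with hs | hs
  · linarith [hright s rfl hs hre2]
  · have hmv := norm_image_sub_le_of_norm_deriv_le_horizontal (g := g) (M := D * τ) hs.le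
      (fun z hz => hd z (ne_one_of_one_le_abs_im (by rwa [hz]))) fun z hz hz1 hz2 => by
        simpa only [hz] using hderiv z (by linarith) (by linarith) (by rwa [hz])
    have hclose : ‖g ⟨1 + η, s.im⟩ - g s‖ * τ ^ 4 ≤ b / 2 * κ ^ 3 := by
      calc _ ≤ (D * τ * η) * τ ^ 4 := by gcongr; exact hmv.trans (by gcongr; linarith)
        _ = D * κ * κ ^ 3 := by rw [hη]; field_simp
        _ ≤ b / 2 * κ ^ 3 := by gcongr
    have htri := mul_le_mul_of_nonneg_right (norm_sub_norm_le (g ⟨1 + η, s.im⟩) (g s))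
      (show 0 ≤ τ ^ 4 by positivity)
    linarith [hright ⟨1 + η, s.im⟩ rfl le_rfl (show 1 + η ≤ 2 by linarith)]

lemma exists_norm_deriv_logDeriv_le (h : GrowsSlowly g) (hd : ∀ s ≠ 1, DifferentiableAt ℂ g s)
    (hlow : HasCubicLowerBound g) :
    ∃ K : ℝ, 0 < K ∧ ∀ s : ℂ, 1 < s.re → s.re ≤ 2 → 1 ≤ |s.im| →
      ‖deriv (logDeriv g) s‖ ≤ K * |s.im| ^ (1 / 2 : ℝ) := by
  obtain ⟨m, hm, hnorm⟩ := h.exists_le_norm_mul hd hlow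
  obtain ⟨D₁, hD₁, hderiv₁⟩ := h.exists_norm_iteratedDeriv_le hd 1
  obtain ⟨D₂, hD₂, hderiv₂⟩ := h.exists_norm_iteratedDeriv_le hd 2
  refine ⟨D₂ / m + (D₁ / m) ^ 2, by positivity, fun s hre hre2 him => ?_⟩
  have hpow : |s.im| ^ (1 / 2 : ℝ) = (|s.im| ^ (1 / 20 : ℝ)) ^ 10 := by
    rw [← Real.rpow_natCast, ← Real.rpow_mul (abs_nonneg _)]; norm_num
  rw [hpow]
  specialize hnorm s hre hre2 him
  specialize hderiv₁ s hre.le hre2 him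
  specialize hderiv₂ s hre.le hre2 him
  set τ : ℝ := |s.im| ^ (1 / 20 : ℝ)
  have hτ1 : 1 ≤ τ := Real.one_le_rpow him (by norm_num)
  have hgs : 0 < ‖g s‖ := pos_of_mul_pos_left (hm.trans_le hnorm) (by positivity)
  have hquot {D : ℝ} {w : ℂ} (hD : 0 < D) (hw : ‖w‖ ≤ D * τ) : ‖w / g s‖ ≤ D / m * τ ^ 5 := by
    rw [norm_div, div_le_iff₀ hgs]
    calc ‖w‖ ≤ D * τ * 1 := by rwa [mul_one]
      _ ≤ D * τ * (‖g s‖ * τ ^ 4 / m) := by gcongr; rwa [one_le_div hm]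
      _ = D / m * τ ^ 5 * ‖g s‖ := by ring
  rw [deriv_logDeriv ((isOpen_ne.eventually_mem (ne_one_of_one_le_abs_im him)).mono hd)
    (norm_pos_iff.mp hgs)]
  calc _ ≤ D₂ / m * τ ^ 5 + (D₁ / m * τ ^ 5) ^ 2 := by
        refine (norm_sub_le _ _).trans (add_le_add (hquot hD₂ hderiv₂) ?_)
        rw [norm_pow]
        exact pow_le_pow_left₀ (norm_nonneg _) (hquot hD₁ hderiv₁) 2
    _ ≤ D₂ / m * τ ^ 10 + (D₁ / m * τ ^ 5) ^ 2 := by gcongr; norm_num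
    _ = (D₂ / m + (D₁ / m) ^ 2) * τ ^ 10 := by ring

end GrowsSlowly

lemma exists_norm_riemannZeta_one_add_mul_le :
    ∃ B : ℝ, 0 < B ∧ ∀ x : ℝ, 0 < x → x ≤ 1 → ‖riemannZeta (1 + x)‖ * x ≤ B := by
  have hcont : Continuous fun x : ℝ => riemannZeta₁ (1 + x) :=
    differentiable_riemannZeta₁.continuous.comp (by fun_prop)
  obtain ⟨B, hB⟩ := (isCompact_Icc (a := (0 : ℝ)) (b := 1)).exists_bound_of_continuousOn
    hcont.continuousOn
  refine ⟨max B 1, by positivity, fun x hx hx1 => ?_⟩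
  have hfactor : ‖riemannZeta (1 + x)‖ * x = ‖riemannZeta₁ (1 + x)‖ := by
    rw [riemannZeta_eq_inv_sub_mul (by simp [hx.ne']), norm_mul, norm_inv, add_sub_cancel_left,
      norm_real, Real.norm_of_nonneg hx.le]
    field_simp
  exact hfactor.trans_le ((hB x ⟨hx.le, hx1⟩).trans (le_max_left _ _))

lemma exists_norm_le_of_continuousOn_rectangle {f : ℂ → ℂ} {U : Set ℂ} (hf : ContinuousOn f U)
    (hU : ∀ s : ℂ, 1 ≤ s.re → s ∈ U) :
    ∃ K : ℝ, 0 < K ∧ ∀ s : ℂ, 1 ≤ s.re → s.re ≤ 2 → |s.im| ≤ 1 → ‖f s‖ ≤ K := by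
  have hcompact : IsCompact (Set.Icc (1 : ℝ) 2 ×ℂ Set.Icc (-1 : ℝ) 1) :=
    isCompact_Icc.reProdIm isCompact_Icc
  obtain ⟨K, hK⟩ := hcompact.exists_bound_of_continuousOn (hf.mono fun s hs => hU s hs.1.1)
  exact ⟨max K 1, by positivity, fun s hre hre2 him =>
    (hK s ⟨⟨hre, hre2⟩, abs_le.mp him⟩).trans (le_max_left _ _)⟩

lemma exists_norm_deriv_logDeriv_le_of_abs_im_le {g : ℂ → ℂ} (hd : Differentiable ℂ g)
    (h0 : ∀ s : ℂ, 1 ≤ s.re → g s ≠ 0) :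
    ∃ K : ℝ, 0 < K ∧ ∀ s : ℂ, 1 ≤ s.re → s.re ≤ 2 → |s.im| ≤ 1 → ‖deriv (logDeriv g) s‖ ≤ K := by
  have hopen : IsOpen {z | g z ≠ 0} := isOpen_ne_fun hd.continuous continuous_const
  have hdiff : DifferentiableOn ℂ (logDeriv g) {z | g z ≠ 0} := fun z hz =>
    ((hd.deriv z).div (hd z) hz).differentiableWithinAt
  exact exists_norm_le_of_continuousOn_rectangle (hdiff.deriv hopen).continuousOn h0

section DirichletCharacter

variable {q : ℕ} [NeZero q] {χ : DirichletCharacter ℂ q}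

lemma norm_LFunctionTrivChar_le {s : ℂ} (hs : 0 ≤ s.re) (hs1 : s ≠ 1) :
    ‖DirichletCharacter.LFunctionTrivChar q s‖ ≤ 2 ^ q.primeFactors.card * ‖riemannZeta s‖ := by
  rw [DirichletCharacter.LFunctionTrivChar_eq_mul_riemannZeta hs1, norm_mul, norm_prod,
    ← Finset.prod_const]
  gcongr with p hp
  have hp1 := (Nat.prime_of_mem_primeFactors hp).one_lt
  have hle : ‖(p : ℂ) ^ (-s)‖ ≤ 1 := by
    rw [norm_natCast_cpow_of_pos (by omega)]
    exact Real.rpow_le_one_of_one_le_of_nonpos (by exact_mod_cast hp1.le) (by simpa using hs)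
  calc _ ≤ ‖(1 : ℂ)‖ + ‖(p : ℂ) ^ (-s)‖ := norm_sub_le _ _
    _ ≤ 2 := by rw [norm_one]; linarith

lemma exists_norm_LFunctionTrivChar_one_add_mul_le (q : ℕ) [NeZero q] :
    ∃ B : ℝ, 0 < B ∧ ∀ x : ℝ, 0 < x → x ≤ 1 →
      ‖DirichletCharacter.LFunctionTrivChar q (1 + x)‖ * x ≤ B := by
  obtain ⟨B, hB, hzeta⟩ := exists_norm_riemannZeta_one_add_mul_le
  refine ⟨2 ^ q.primeFactors.card * B, by positivity, fun x hx hx1 => ?_⟩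
  calc _ ≤ 2 ^ q.primeFactors.card * ‖riemannZeta (1 + x)‖ * x := by
        gcongr
        exact norm_LFunctionTrivChar_le (by simp; linarith) (by simp [hx.ne'])
    _ ≤ 2 ^ q.primeFactors.card * B := by
        rw [mul_assoc]
        exact mul_le_mul_of_nonneg_left (hzeta x hx hx1) (by positivity)

lemma growsSlowly_LFunctionTrivChar (q : ℕ) [NeZero q] :
    GrowsSlowly (DirichletCharacter.LFunctionTrivChar q) := by
  obtain ⟨C, hC, hzeta⟩ := growsSlowly_riemannZeta
  refine ⟨2 ^ q.primeFactors.card * C, by positivity, fun s hre hre3 him => ?_⟩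
  rw [mul_assoc]
  refine (norm_LFunctionTrivChar_le (by linarith) ?_).trans
    (mul_le_mul_of_nonneg_left (hzeta s hre hre3 him) (by positivity))
  rintro rfl
  norm_num at him

lemma hasCubicLowerBound_LFunction (hχ2 : χ ^ 2 = 1) : HasCubicLowerBound χ.LFunction := by
  obtain ⟨B, hB, hnear⟩ := exists_norm_LFunctionTrivChar_one_add_mul_le q
  obtain ⟨C, hC, hfar⟩ := growsSlowly_LFunctionTrivChar q
  refine ⟨1 / (B ^ 3 * (C * 2)), by positivity, fun s hre hre2 him => ?_⟩
  obtain ⟨x, hx⟩ : ∃ x, x = s.re - 1 := ⟨_, rfl⟩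
  have hx0 : 0 < x := by linarith
  have hs : s = 1 + x + I * s.im := by apply Complex.ext <;> simp [hx]
  have h341 := DirichletCharacter.norm_LFunction_product_ge_one χ hx0 s.im
  rw [← hs, hχ2, norm_mul, norm_mul, norm_pow, norm_pow] at h341
  have hre_double : (1 + (x : ℂ) + 2 * I * s.im).re = 1 + x := by simp
  have him_double : (1 + (x : ℂ) + 2 * I * s.im).im = 2 * s.im := by simp
  have hdouble : ‖DirichletCharacter.LFunctionTrivChar q (1 + x + 2 * I * s.im)‖
      ≤ C * (2 * |s.im| ^ (1 / 20 : ℝ)) := by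
    have hle := hfar (1 + x + 2 * I * s.im) (by linarith) (by linarith)
      (by rw [him_double, abs_mul, abs_two]; linarith)
    rw [him_double, abs_mul, abs_two] at hle
    exact hle.trans (mul_le_mul_of_nonneg_left (mul_rpow_le_mul_rpow_of_exponent_le_one one_le_two
      (abs_nonneg _) (by norm_num)) hC.le)
  have hnear := hnear x hx0 (by linarith)
  rw [div_mul_eq_mul_div, one_mul, div_le_iff₀ (by positivity), ← hx]
  calc x ^ 3 = 1 * x ^ 3 := by ring
    _ ≤ (‖DirichletCharacter.LFunctionTrivChar q (1 + x)‖ ^ 3 * ‖χ.LFunction s‖ ^ 4 *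
          ‖DirichletCharacter.LFunctionTrivChar q (1 + x + 2 * I * s.im)‖) * x ^ 3 := by gcongr
    _ = (‖DirichletCharacter.LFunctionTrivChar q (1 + x)‖ * x) ^ 3 * ‖χ.LFunction s‖ ^ 4 *
          ‖DirichletCharacter.LFunctionTrivChar q (1 + x + 2 * I * s.im)‖ := by ring
    _ ≤ B ^ 3 * ‖χ.LFunction s‖ ^ 4 * (C * (2 * |s.im| ^ (1 / 20 : ℝ))) := by gcongr
    _ = ‖χ.LFunction s‖ ^ 4 * |s.im| ^ (1 / 20 : ℝ) * (B ^ 3 * (C * 2)) := by ring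

lemma hasCubicLowerBound_riemannZeta : HasCubicLowerBound riemannZeta := by
  simpa only [DirichletCharacter.LFunction_modOne_eq] using
    hasCubicLowerBound_LFunction (χ := (1 : DirichletCharacter ℂ 1)) (by simp)

end DirichletCharacter

lemma riemannZeta₁_ne_zero_of_one_le_re {s : ℂ} (hs : 1 ≤ s.re) : riemannZeta₁ s ≠ 0 := by
  intro h0
  by_cases h : s = 1
  · rw [h, riemannZeta₁_one] at h0
    exact one_ne_zero h0
  · exact riemannZeta_ne_zero_of_one_le_re hs (by rw [riemannZeta_eq_inv_sub_mul h, h0, mul_zero])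

lemma logDeriv_riemannZeta_eq {s : ℂ} (hs : 1 < s.re) :
    logDeriv riemannZeta s = logDeriv riemannZeta₁ s - (s - 1)⁻¹ := by
  have hs1 : s ≠ 1 := by rintro rfl; simp at hs
  have hfactor : riemannZeta =ᶠ[nhds s] fun z => riemannZeta₁ z / (z - 1) := by
    filter_upwards [isOpen_ne.mem_nhds hs1] with z hz
    rw [riemannZeta_eq_inv_sub_mul hz, inv_mul_eq_div]
  rw [(logDeriv_congr_nhds hfactor).eq_of_nhds, logDeriv_div (g := fun z => z - 1) s
    (riemannZeta₁_ne_zero_of_one_le_re hs.le) (sub_ne_zero.mpr hs1)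
    (differentiable_riemannZeta₁ s) (by fun_prop)]
  simp [logDeriv_apply]

lemma deriv_logDeriv_riemannZeta_eq {s : ℂ} (hs : 1 < s.re) :
    deriv (logDeriv riemannZeta) s = deriv (logDeriv riemannZeta₁) s + (s - 1)⁻¹ ^ 2 := by
  have hs1 : s - 1 ≠ 0 := by rw [sub_ne_zero]; rintro rfl; simp at hs
  have heq : logDeriv riemannZeta =ᶠ[nhds s] fun z => logDeriv riemannZeta₁ z - (z - 1)⁻¹ := by
    filter_upwards [(isOpen_lt continuous_const continuous_re).mem_nhds hs] with z hz
    exact logDeriv_riemannZeta_eq hz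
  have hinv : HasDerivAt (fun z : ℂ => (z - 1)⁻¹) (-1 / (s - 1) ^ 2) s :=
    ((hasDerivAt_id s).sub_const 1).inv hs1
  have hd : DifferentiableAt ℂ (logDeriv riemannZeta₁) s :=
    (differentiable_riemannZeta₁.deriv s).div (differentiable_riemannZeta₁ s)
      (riemannZeta₁_ne_zero_of_one_le_re hs.le)
  rw [heq.deriv_eq, (hd.hasDerivAt.fun_sub hinv).deriv, neg_div, sub_neg_eq_add, one_div, inv_pow]

end LogarithmicDerivatives

/-! ### A smoothed Perron formula -/

section Perron

open Complex MeasureTheory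

/-- The Cesàro weight `max (1 - x) 0`, whose Mellin transform decays fast enough to be integrated
against a Dirichlet series growing like `|im s|^(1/2)`. -/
noncomputable def cesaroKernel (x : ℝ) : ℂ := ((max (1 - x) 0 : ℝ) : ℂ)

/-- The Mellin transform `1 / (s (s + 1))` of `cesaroKernel`. -/
noncomputable def cesaroMellin (s : ℂ) : ℂ := 1 / s - 1 / (s + 1)

lemma cesaroKernel_of_le_one {x : ℝ} (hx : x ≤ 1) : cesaroKernel x = 1 - x := by
  simp [cesaroKernel, hx]

lemma cesaroKernel_of_one_le {x : ℝ} (hx : 1 ≤ x) : cesaroKernel x = 0 := by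
  simp [cesaroKernel, hx]

lemma indicator_Ioc_sub_eq_cesaroKernel {t : ℝ} (ht : 0 < t) :
    (Set.Ioc (0 : ℝ) 1).indicator (fun _ => (1 : ℂ)) t -
      (Set.Ioc (0 : ℝ) 1).indicator (fun u => (u : ℂ) ^ (1 : ℂ)) t = cesaroKernel t := by
  rcases le_or_gt t 1 with h | h
  · have hmem : t ∈ Set.Ioc (0 : ℝ) 1 := ⟨ht, h⟩
    rw [Set.indicator_of_mem hmem, Set.indicator_of_mem hmem, cpow_one, cesaroKernel_of_le_one h]
  · have hmem : t ∉ Set.Ioc (0 : ℝ) 1 := fun h' => h.not_ge h'.2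
    rw [Set.indicator_of_notMem hmem, Set.indicator_of_notMem hmem, sub_zero,
      cesaroKernel_of_one_le h.le]

lemma hasMellin_cesaroKernel {s : ℂ} (hs : 0 < s.re) :
    HasMellin cesaroKernel s (cesaroMellin s) := by
  have hone := hasMellin_one_Ioc hs
  have hid := hasMellin_cpow_Ioc 1 (s := s) (by simp; linarith)
  have hsub := hasMellin_sub hone.1 hid.1
  rw [hone.2, hid.2] at hsub
  have hcongr : Set.EqOn (fun t : ℝ => (t : ℂ) ^ (s - 1) •
      ((Set.Ioc (0 : ℝ) 1).indicator (fun _ => (1 : ℂ)) t -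
        (Set.Ioc (0 : ℝ) 1).indicator (fun u => (u : ℂ) ^ (1 : ℂ)) t))
      (fun t => (t : ℂ) ^ (s - 1) • cesaroKernel t) (Set.Ioi 0) := fun t ht =>
    congrArg ((t : ℂ) ^ (s - 1) • ·) (indicator_Ioc_sub_eq_cesaroKernel ht)
  exact ⟨hsub.1.congr_fun hcongr measurableSet_Ioi,
    (setIntegral_congr_fun measurableSet_Ioi hcongr).symm.trans hsub.2⟩

section VerticalLine

variable {σ : ℝ}

lemma ofReal_add_mul_I_ne_zero (hσ : 0 < σ) (y : ℝ) : (σ + y * I : ℂ) ≠ 0 := fun h => by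
  have hre := congrArg re h
  simp only [add_re, ofReal_re, mul_re, I_re, mul_zero, ofReal_im, I_im, mul_one, sub_self,
    add_zero, zero_re] at hre
  exact hσ.ne' hre

lemma ofReal_add_mul_I_add_one_ne_zero (hσ : 0 < σ) (y : ℝ) : (σ + y * I + 1 : ℂ) ≠ 0 := by
  rw [add_right_comm, ← ofReal_one, ← ofReal_add]
  exact ofReal_add_mul_I_ne_zero (by linarith) y

lemma norm_cesaroMellin_le (hσ : 1 ≤ σ) (y : ℝ) : ‖cesaroMellin (σ + y * I)‖ ≤ (1 + y ^ 2)⁻¹ := by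
  have hσ0 : 0 < σ := by linarith
  have hs := ofReal_add_mul_I_ne_zero hσ0 y
  have hs1 := ofReal_add_mul_I_add_one_ne_zero hσ0 y
  have hprod : cesaroMellin (σ + y * I) = ((σ + y * I) * (σ + y * I + 1))⁻¹ := by
    rw [cesaroMellin]; field_simp; ring
  have hnorm : √(1 + y ^ 2) ≤ ‖(σ + y * I : ℂ)‖ := by
    rw [norm_add_mul_I]
    exact Real.sqrt_le_sqrt (by nlinarith)
  have hnorm1 : √(1 + y ^ 2) ≤ ‖(σ + y * I + 1 : ℂ)‖ := by
    rw [add_right_comm, ← ofReal_one, ← ofReal_add, norm_add_mul_I]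
    exact Real.sqrt_le_sqrt (by nlinarith)
  rw [hprod, norm_inv, norm_mul]
  gcongr
  calc 1 + y ^ 2 = √(1 + y ^ 2) * √(1 + y ^ 2) := (Real.mul_self_sqrt (by positivity)).symm
    _ ≤ _ := by gcongr

lemma continuous_cesaroMellin_vertical (hσ : 0 < σ) :
    Continuous fun y : ℝ => cesaroMellin (σ + y * I) :=
  (continuous_const.div (by fun_prop) (ofReal_add_mul_I_ne_zero hσ)).sub
    (continuous_const.div (by fun_prop) (ofReal_add_mul_I_add_one_ne_zero hσ))

lemma integral_cpow_mul_cesaroMellin (hσ : 1 ≤ σ) {x : ℝ} (hx : 0 < x) :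
    ∫ y : ℝ, (x : ℂ) ^ (-(σ + y * I)) * cesaroMellin (σ + y * I) =
      2 * Real.pi * cesaroKernel x := by
  have hσ0 : 0 < σ := by linarith
  have hmellin (y : ℝ) : mellin cesaroKernel (σ + y * I) = cesaroMellin (σ + y * I) :=
    (hasMellin_cesaroKernel (by simpa using hσ0)).2
  have hvertical : VerticalIntegrable (mellin cesaroKernel) σ := by
    simp only [VerticalIntegrable, hmellin]
    exact integrable_inv_one_add_sq.mono'
      (continuous_cesaroMellin_vertical hσ0).aestronglyMeasurable
      (.of_forall (norm_cesaroMellin_le hσ))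
  have hcont : Continuous cesaroKernel := by unfold cesaroKernel; fun_prop
  rw [← mellinInv_mellin_eq σ cesaroKernel hx (hasMellin_cesaroKernel (by simpa using hσ0)).1
    hvertical hcont.continuousAt, mellinInv]
  simp only [hmellin, smul_eq_mul, real_smul]
  push_cast
  have hpi : (Real.pi : ℂ) ≠ 0 := ofReal_ne_zero.mpr Real.pi_ne_zero
  rw [← mul_assoc, mul_one_div_cancel (mul_ne_zero two_ne_zero hpi), one_mul]

end VerticalLine

lemma integrable_one_add_abs_rpow_half_mul_inv :
    Integrable fun y : ℝ => (1 + |y|) ^ (1 / 2 : ℝ) * (1 + y ^ 2)⁻¹ := by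
  have hmajorant := (integrable_one_add_norm (E := ℝ) (μ := volume) (r := 3 / 2)
    (by simp; norm_num)).const_mul 2
  have hcont : Continuous fun y : ℝ => (1 + |y|) ^ (1 / 2 : ℝ) * (1 + y ^ 2)⁻¹ :=
    ((by fun_prop : Continuous fun y : ℝ => 1 + |y|).rpow_const fun _ => .inr (by norm_num)).mul
      ((by fun_prop : Continuous fun y : ℝ => 1 + y ^ 2).inv₀ fun y => by positivity)
  refine hmajorant.mono' hcont.aestronglyMeasurable (.of_forall fun y => ?_)
  have hpow : (1 + |y|) ^ (1 / 2 : ℝ) = (1 + |y|) ^ (-(3 / 2) : ℝ) * (1 + |y|) ^ 2 := by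
    rw [← Real.rpow_natCast, ← Real.rpow_add (by positivity)]; norm_num
  have hratio : (1 + |y|) ^ 2 * (1 + y ^ 2)⁻¹ ≤ 2 := by
    rw [← div_eq_mul_inv, div_le_iff₀ (by positivity)]
    nlinarith [sq_abs y, sq_nonneg (1 - |y|)]
  rw [Real.norm_of_nonneg (by positivity), Real.norm_eq_abs, hpow, mul_assoc, mul_comm (2 : ℝ)]
  gcongr

/-- The contribution of the `n`-th term of `LSeries a` to the smoothed Perron integral of height
`z` over the line `re s = σ`. -/
noncomputable def perronIntegrand (a : ℕ → ℂ) (z σ : ℝ) (n : ℕ) (y : ℝ) : ℂ :=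
  LSeries.term a (σ + y * I) n * ((z : ℂ) ^ (σ + y * I : ℂ) * cesaroMellin (σ + y * I))

section PerronIntegrand

variable {a : ℕ → ℂ} {z σ : ℝ}

lemma norm_ofReal_cpow_vertical (hz : 0 < z) (y : ℝ) : ‖(z : ℂ) ^ (σ + y * I : ℂ)‖ = z ^ σ := by
  rw [norm_cpow_eq_rpow_re_of_pos hz]; simp

lemma norm_perronIntegrand_le (hz : 0 < z) (hσ : 1 ≤ σ) (n : ℕ) (y : ℝ) :
    ‖perronIntegrand a z σ n y‖ ≤ ‖LSeries.term a σ n‖ * z ^ σ * (1 + y ^ 2)⁻¹ := by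
  have hterm : ‖LSeries.term a (σ + y * I) n‖ = ‖LSeries.term a σ n‖ := by
    rw [LSeries.norm_term_eq, LSeries.norm_term_eq]; simp
  rw [perronIntegrand, norm_mul, norm_mul, hterm, norm_ofReal_cpow_vertical hz, mul_assoc]
  gcongr
  exact norm_cesaroMellin_le hσ y

lemma continuous_perronIntegrand (hz : 0 < z) (hσ : 0 < σ) (n : ℕ) :
    Continuous (perronIntegrand a z σ n) := by
  have hterm : Continuous fun y : ℝ => LSeries.term a (σ + y * I) n := by
    rcases eq_or_ne n 0 with rfl | hn
    · simp [continuous_const]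
    · have hn' : (n : ℂ) ≠ 0 := Nat.cast_ne_zero.mpr hn
      simp only [LSeries.term_of_ne_zero hn]
      exact continuous_const.div (Continuous.const_cpow (by fun_prop) (.inl hn'))
        fun y => by simp [cpow_eq_zero_iff, hn']
  exact hterm.mul ((Continuous.const_cpow (by fun_prop) (.inl (ofReal_ne_zero.mpr hz.ne'))).mul
    (continuous_cesaroMellin_vertical hσ))

lemma integrable_perronIntegrand (hz : 0 < z) (hσ : 1 ≤ σ) (n : ℕ) :
    Integrable (perronIntegrand a z σ n) :=
  (integrable_inv_one_add_sq.const_mul _).mono'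
    (continuous_perronIntegrand hz (by linarith) n).aestronglyMeasurable
    (.of_forall (norm_perronIntegrand_le hz hσ n))

lemma summable_integral_norm_perronIntegrand (hz : 0 < z) (hσ : 1 ≤ σ)
    (ha : LSeriesSummable a σ) : Summable fun n => ∫ y, ‖perronIntegrand a z σ n y‖ := by
  refine .of_nonneg_of_le (fun n => integral_nonneg fun y => norm_nonneg _) (fun n => ?_)
    ((ha.norm.mul_right (z ^ σ)).mul_right (∫ y : ℝ, (1 + y ^ 2)⁻¹))
  rw [← integral_const_mul]
  exact integral_mono (integrable_perronIntegrand hz hσ n).norm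
    (integrable_inv_one_add_sq.const_mul _) (norm_perronIntegrand_le hz hσ n)

lemma ofReal_div_cpow_neg {x : ℝ} (hx : 0 ≤ x) (hz : 0 ≤ z) (s : ℂ) :
    ((x / z : ℝ) : ℂ) ^ (-s) = (z : ℂ) ^ s / (x : ℂ) ^ s := by
  have harg : (z : ℂ).arg ≠ Real.pi := by
    rw [arg_ofReal_of_nonneg hz]; exact Real.pi_pos.ne
  rw [div_eq_mul_inv, ofReal_mul, mul_cpow_ofReal_nonneg hx (by positivity), ofReal_inv,
    inv_cpow _ _ harg, cpow_neg, cpow_neg, inv_inv, div_eq_mul_inv, mul_comm]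

lemma integral_perronIntegrand (hz : 0 < z) (hσ : 1 ≤ σ) {n : ℕ} (hn : n ≠ 0) :
    ∫ y, perronIntegrand a z σ n y = 2 * Real.pi * (a n * cesaroKernel (n / z)) := by
  have hn' : (0 : ℝ) < n := by exact_mod_cast Nat.pos_of_ne_zero hn
  rw [mul_left_comm, ← integral_cpow_mul_cesaroMellin hσ (by positivity), ← integral_const_mul]
  refine integral_congr_ae (.of_forall fun y => ?_)
  simp only [perronIntegrand, LSeries.term_of_ne_zero hn, ofReal_div_cpow_neg hn'.le hz.le,
    ofReal_natCast]
  ring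

lemma tsum_integral_perronIntegrand (hz : 0 < z) (hσ : 1 ≤ σ) :
    ∑' n, ∫ y, perronIntegrand a z σ n y =
      2 * Real.pi * ∑ n ∈ Finset.Icc 1 ⌊z⌋₊, a n * ((1 - n / z : ℝ) : ℂ) := by
  rw [tsum_eq_sum (s := Finset.Icc 1 ⌊z⌋₊), Finset.mul_sum]
  · refine Finset.sum_congr rfl fun n hn => ?_
    obtain ⟨hn1, hnz⟩ := Finset.mem_Icc.mp hn
    rw [integral_perronIntegrand hz hσ (Nat.one_le_iff_ne_zero.mp hn1), cesaroKernel_of_le_one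
      ((div_le_one hz).mpr ((Nat.le_floor_iff hz.le).mp hnz))]
    push_cast
    rfl
  · intro n hn
    rcases eq_or_ne n 0 with rfl | hn0
    · simp [perronIntegrand]
    · have hzn : z < n := (Nat.floor_lt hz.le).mp <| by
        rw [Finset.mem_Icc, not_and, not_le] at hn
        exact hn (Nat.one_le_iff_ne_zero.mpr hn0)
      rw [integral_perronIntegrand hz hσ hn0, cesaroKernel_of_one_le ((one_le_div hz).mpr hzn.le)]
      simp

lemma integral_LSeries_mul_cpow_mul_cesaroMellin (hz : 0 < z) (hσ : 1 ≤ σ)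
    (ha : LSeriesSummable a σ) :
    ∫ y : ℝ, LSeries a (σ + y * I) * ((z : ℂ) ^ (σ + y * I : ℂ) * cesaroMellin (σ + y * I)) =
      2 * Real.pi * ∑ n ∈ Finset.Icc 1 ⌊z⌋₊, a n * ((1 - n / z : ℝ) : ℂ) := by
  rw [← tsum_integral_perronIntegrand hz hσ, (hasSum_integral_of_summable_integral_norm
    (integrable_perronIntegrand hz hσ) (summable_integral_norm_perronIntegrand hz hσ ha)).tsum_eq]
  simp only [perronIntegrand, LSeries, tsum_mul_right]

end PerronIntegrand

lemma norm_sum_mul_one_sub_div_le_rpow {a : ℕ → ℂ} {K z σ : ℝ} (hz : 0 < z) (hσ : 1 ≤ σ)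
    (ha : LSeriesSummable a σ)
    (hbound : ∀ y : ℝ, ‖LSeries a (σ + y * I)‖ ≤ K * (1 + |y|) ^ (1 / 2 : ℝ)) :
    ‖∑ n ∈ Finset.Icc 1 ⌊z⌋₊, a n * ((1 - n / z : ℝ) : ℂ)‖ ≤
      K * z ^ σ * ∫ y : ℝ, (1 + |y|) ^ (1 / 2 : ℝ) * (1 + y ^ 2)⁻¹ := by
  have hintegrand (y : ℝ) :
      ‖LSeries a (σ + y * I) * ((z : ℂ) ^ (σ + y * I : ℂ) * cesaroMellin (σ + y * I))‖ ≤
        K * z ^ σ * ((1 + |y|) ^ (1 / 2 : ℝ) * (1 + y ^ 2)⁻¹) := by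
    rw [norm_mul, norm_mul, norm_ofReal_cpow_vertical hz]
    calc _ ≤ K * (1 + |y|) ^ (1 / 2 : ℝ) * (z ^ σ * (1 + y ^ 2)⁻¹) :=
          mul_le_mul (hbound y) (by gcongr; exact norm_cesaroMellin_le hσ y) (by positivity)
            ((norm_nonneg _).trans (hbound y))
      _ = _ := by ring
  have hle := norm_integral_le_of_norm_le
    (integrable_one_add_abs_rpow_half_mul_inv.const_mul (K * z ^ σ)) (.of_forall hintegrand)
  rw [integral_LSeries_mul_cpow_mul_cesaroMellin hz hσ ha, integral_const_mul, norm_mul] at hle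
  have hpi : 1 ≤ ‖(2 * Real.pi : ℂ)‖ := by
    rw [norm_mul, norm_real, Real.norm_of_nonneg Real.pi_pos.le, norm_ofNat]
    linarith [Real.pi_gt_three]
  exact (le_mul_of_one_le_left (norm_nonneg _) hpi).trans hle

-- The line of integration `re s = 1 + 1 / log z` makes `z ^ re s = e z`.
lemma exists_norm_sum_mul_one_sub_div_le {a : ℕ → ℂ} {K : ℝ} (hK : 0 < K)
    (hsummable : ∀ s : ℂ, 1 < s.re → LSeriesSummable a s)
    (hbound : ∀ s : ℂ, 1 < s.re → s.re ≤ 2 → ‖LSeries a s‖ ≤ K * (1 + |s.im|) ^ (1 / 2 : ℝ)) :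
    ∃ C : ℝ, 0 < C ∧ ∀ z : ℝ, Real.exp 1 ≤ z →
      ‖∑ n ∈ Finset.Icc 1 ⌊z⌋₊, a n * ((1 - n / z : ℝ) : ℂ)‖ ≤ C * z := by
  set J := ∫ y : ℝ, (1 + |y|) ^ (1 / 2 : ℝ) * (1 + y ^ 2)⁻¹
  have : 0 ≤ J := integral_nonneg fun y => by positivity
  refine ⟨K * Real.exp 1 * J + 1, by positivity, fun z hz => ?_⟩
  have hz0 : 0 < z := (Real.exp_pos 1).trans_le hz
  have hlog : 1 ≤ Real.log z := (Real.le_log_iff_exp_le hz0).mpr hz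
  set σ := 1 + 1 / Real.log z with hσ
  have hσ1 : 1 < σ := lt_add_of_pos_right 1 (by positivity)
  have hσ2 : σ ≤ 2 := by
    have := div_le_one_of_le₀ hlog (by linarith)
    linarith
  have hzσ : z ^ σ = Real.exp 1 * z := by
    rw [hσ, Real.rpow_add hz0, Real.rpow_one, Real.rpow_def_of_pos hz0,
      mul_one_div_cancel (by positivity), mul_comm]
  have hsum := norm_sum_mul_one_sub_div_le_rpow hz0 hσ1.le (hsummable σ (by simpa using hσ1))
    fun y => by simpa using hbound (σ + y * I) (by simpa using hσ1) (by simpa using hσ2)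
  rw [hzσ] at hsum
  linarith

end Perron

/-! ### The Dirichlet series detecting the primes with `χ p = 1` -/

section SplitSeries

open Complex

lemma deriv_eq_LSeries_logMul {F : ℂ → ℂ} {a : ℕ → ℂ} (hF : ∀ s, 1 < s.re → F s = -LSeries a s)
    (ha : LSeries.abscissaOfAbsConv a ≤ 1) {s : ℂ} (hs : 1 < s.re) :
    deriv F s = LSeries (LSeries.logMul a) s := by
  have heq : F =ᶠ[nhds s] fun z => -LSeries a z := by
    filter_upwards [(isOpen_lt continuous_const continuous_re).mem_nhds hs] with z hz
    exact hF z hz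
  rw [heq.deriv_eq, deriv.fun_neg, LSeries_deriv (ha.trans_lt (by exact_mod_cast hs)), neg_neg]

lemma LSeriesSummable_logMul_of_abscissaOfAbsConv_le_one {a : ℕ → ℂ}
    (ha : LSeries.abscissaOfAbsConv a ≤ 1) {s : ℂ} (hs : 1 < s.re) :
    LSeriesSummable (LSeries.logMul a) s :=
  LSeriesSummable_logMul_of_lt_re (ha.trans_lt (by exact_mod_cast hs))

lemma abscissaOfAbsConv_vonMangoldt_le :
    LSeries.abscissaOfAbsConv (fun n => (ArithmeticFunction.vonMangoldt n : ℂ)) ≤ 1 :=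
  LSeries.abscissaOfAbsConv_le_of_forall_lt_LSeriesSummable (x := 1) fun y hy =>
    ArithmeticFunction.LSeriesSummable_vonMangoldt (by simpa using hy)

variable {q : ℕ} (χ : DirichletCharacter ℂ q)

lemma abscissaOfAbsConv_twist_vonMangoldt_le :
    LSeries.abscissaOfAbsConv
      ((fun n : ℕ => χ n) * fun n => (ArithmeticFunction.vonMangoldt n : ℂ)) ≤ 1 :=
  LSeries.abscissaOfAbsConv_le_of_forall_lt_LSeriesSummable (x := 1) fun y hy =>
    DirichletCharacter.LSeriesSummable_twist_vonMangoldt χ (by simpa using hy)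

/-- The coefficients `((1 + χ(n)) Λ(n) - 1) log n`. The `-1` removes the pole of the Dirichlet
series at `s = 1`, the factor `log n` replaces logarithmic derivatives by their derivatives. -/
noncomputable def splitCoeff : ℕ → ℂ :=
  LSeries.logMul (fun n => (ArithmeticFunction.vonMangoldt n : ℂ)) +
    LSeries.logMul ((fun n : ℕ => χ n) * fun n => (ArithmeticFunction.vonMangoldt n : ℂ)) -
    LSeries.logMul 1

lemma LSeriesSummable_splitCoeff {s : ℂ} (hs : 1 < s.re) : LSeriesSummable (splitCoeff χ) s :=
  ((LSeriesSummable_logMul_of_abscissaOfAbsConv_le_one abscissaOfAbsConv_vonMangoldt_le hs).add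
    (LSeriesSummable_logMul_of_abscissaOfAbsConv_le_one
      (abscissaOfAbsConv_twist_vonMangoldt_le χ) hs)).sub
    (LSeriesSummable_logMul_of_abscissaOfAbsConv_le_one LSeries.abscissaOfAbsConv_one.le hs)

variable [NeZero q]

lemma LSeries_splitCoeff {s : ℂ} (hs : 1 < s.re) :
    LSeries (splitCoeff χ) s =
      deriv (logDeriv riemannZeta) s + deriv (logDeriv χ.LFunction) s + deriv riemannZeta s := by
  have hΛ := abscissaOfAbsConv_vonMangoldt_le
  have hχΛ := abscissaOfAbsConv_twist_vonMangoldt_le χ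
  have hone : LSeries.abscissaOfAbsConv 1 ≤ 1 := LSeries.abscissaOfAbsConv_one.le
  have hsΛ := LSeriesSummable_logMul_of_abscissaOfAbsConv_le_one hΛ hs
  have hsχΛ := LSeriesSummable_logMul_of_abscissaOfAbsConv_le_one hχΛ hs
  have hderivΛ := deriv_eq_LSeries_logMul (F := logDeriv riemannZeta) (fun z hz => by
    rw [ArithmeticFunction.LSeries_vonMangoldt_eq_deriv_riemannZeta_div hz, logDeriv_apply]
    ring) hΛ hs
  have hderivχΛ := deriv_eq_LSeries_logMul (F := logDeriv χ.LFunction) (fun z hz => by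
    rw [DirichletCharacter.LSeries_twist_vonMangoldt_eq χ hz, logDeriv_apply,
      DirichletCharacter.deriv_LFunction_eq_deriv_LSeries χ hz,
      DirichletCharacter.LFunction_eq_LSeries χ hz]
    ring) hχΛ hs
  have hderiv_zeta := deriv_eq_LSeries_logMul (F := -riemannZeta) (fun z hz => by
    rw [LSeries_one_eq_riemannZeta hz, Pi.neg_apply]) hone hs
  rw [deriv.neg, neg_eq_iff_eq_neg] at hderiv_zeta
  rw [splitCoeff, LSeries_sub (hsΛ.add hsχΛ)
    (LSeriesSummable_logMul_of_abscissaOfAbsConv_le_one hone hs), LSeries_add hsΛ hsχΛ,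
    hderivΛ, hderivχΛ, hderiv_zeta, sub_eq_add_neg]

variable {χ}

lemma exists_norm_LSeries_splitCoeff_le_of_one_le_abs_im (hχ : χ ≠ 1) (hχ2 : χ ^ 2 = 1) :
    ∃ K : ℝ, 0 < K ∧ ∀ s : ℂ, 1 < s.re → s.re ≤ 2 → 1 ≤ |s.im| →
      ‖LSeries (splitCoeff χ) s‖ ≤ K * |s.im| ^ (1 / 2 : ℝ) := by
  have hzeta (s : ℂ) (hs : s ≠ 1) := differentiableAt_riemannZeta hs
  obtain ⟨K₁, hK₁, hlogDeriv_zeta⟩ := growsSlowly_riemannZeta.exists_norm_deriv_logDeriv_le hzeta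
    hasCubicLowerBound_riemannZeta
  obtain ⟨K₂, hK₂, hlogDeriv_L⟩ := (growsSlowly_LFunction hχ).exists_norm_deriv_logDeriv_le
    (fun s _ => DirichletCharacter.differentiable_LFunction hχ s)
    (hasCubicLowerBound_LFunction hχ2)
  obtain ⟨K₃, hK₃, hderiv_zeta⟩ := growsSlowly_riemannZeta.exists_norm_deriv_le hzeta
  refine ⟨K₁ + K₂ + K₃, by positivity, fun s hre hre2 him => ?_⟩
  have hpow : |s.im| ^ (1 / 20 : ℝ) ≤ |s.im| ^ (1 / 2 : ℝ) :=
    Real.rpow_le_rpow_of_exponent_le him (by norm_num)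
  rw [LSeries_splitCoeff χ hre, add_mul, add_mul]
  exact norm_add₃_le.trans (add_le_add_three (hlogDeriv_zeta s hre hre2 him)
    (hlogDeriv_L s hre hre2 him)
    ((hderiv_zeta s hre.le hre2 him).trans (mul_le_mul_of_nonneg_left hpow hK₃.le)))

-- The double poles of `(ζ'/ζ)'` and `ζ'` at `s = 1` cancel.
lemma exists_norm_LSeries_splitCoeff_le_of_abs_im_le (hχ : χ ≠ 1) :
    ∃ K : ℝ, 0 < K ∧ ∀ s : ℂ, 1 < s.re → s.re ≤ 2 → |s.im| ≤ 1 →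
      ‖LSeries (splitCoeff χ) s‖ ≤ K := by
  obtain ⟨K₁, hK₁, hlogDeriv_zeta⟩ := exists_norm_deriv_logDeriv_le_of_abs_im_le
    differentiable_riemannZeta₁ fun _ => riemannZeta₁_ne_zero_of_one_le_re
  obtain ⟨K₂, hK₂, hlogDeriv_L⟩ := exists_norm_deriv_logDeriv_le_of_abs_im_le
    (DirichletCharacter.differentiable_LFunction hχ)
    fun _ hs => DirichletCharacter.LFunction_ne_zero_of_one_le_re χ (.inl hχ) hs
  obtain ⟨K₃, hK₃, hderiv_zeta⟩ := exists_norm_le_of_continuousOn_rectangle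
    differentiable_riemannZeta₀.deriv.continuous.continuousOn fun _ _ => Set.mem_univ _
  refine ⟨K₁ + K₂ + K₃, by positivity, fun s hre hre2 him => ?_⟩
  have hs1 : s ≠ 1 := by rintro rfl; simp at hre
  have hcancel : LSeries (splitCoeff χ) s = deriv (logDeriv riemannZeta₁) s +
      deriv (logDeriv χ.LFunction) s + deriv riemannZeta₀ s := by
    rw [LSeries_splitCoeff χ hre, deriv_logDeriv_riemannZeta_eq hre,
      deriv_riemannZeta_eq_neg_inv_sub_sq_add hs1]
    ring
  rw [hcancel]
  exact norm_add₃_le.trans (add_le_add_three (hlogDeriv_zeta s hre.le hre2 him)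
    (hlogDeriv_L s hre.le hre2 him) (hderiv_zeta s hre.le hre2 him))

lemma exists_norm_LSeries_splitCoeff_le (hχ : χ ≠ 1) (hχ2 : χ ^ 2 = 1) :
    ∃ K : ℝ, 0 < K ∧ ∀ s : ℂ, 1 < s.re → s.re ≤ 2 →
      ‖LSeries (splitCoeff χ) s‖ ≤ K * (1 + |s.im|) ^ (1 / 2 : ℝ) := by
  obtain ⟨K₁, hK₁, hfar⟩ := exists_norm_LSeries_splitCoeff_le_of_one_le_abs_im hχ hχ2
  obtain ⟨K₂, -, hnear⟩ := exists_norm_LSeries_splitCoeff_le_of_abs_im_le hχ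
  refine ⟨max K₁ K₂, by positivity, fun s hre hre2 => ?_⟩
  rcases le_total 1 |s.im| with him | him
  · refine (hfar s hre hre2 him).trans ?_
    gcongr
    · exact le_max_left _ _
    · linarith
  · refine (hnear s hre hre2 him).trans ((le_max_right K₁ K₂).trans
      (le_mul_of_one_le_right (by positivity) (Real.one_le_rpow ?_ (by norm_num))))
    linarith [abs_nonneg s.im]

lemma exists_norm_sum_splitCoeff_le (hχ : χ ≠ 1) (hχ2 : χ ^ 2 = 1) :
    ∃ C : ℝ, 0 < C ∧ ∀ z : ℝ, Real.exp 1 ≤ z →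
      ‖∑ n ∈ Finset.Icc 1 ⌊z⌋₊, splitCoeff χ n * ((1 - n / z : ℝ) : ℂ)‖ ≤ C * z := by
  obtain ⟨K, hK, hbound⟩ := exists_norm_LSeries_splitCoeff_le hχ hχ2
  exact exists_norm_sum_mul_one_sub_div_le hK (fun s => LSeriesSummable_splitCoeff χ) hbound

end SplitSeries

/-! ### Counting the primes with `χ p = 1` -/

section SmoothedSums

variable {z : ℝ} {n : ℕ}

lemma one_le_cast_of_mem_Icc_one (hn : n ∈ Finset.Icc 1 ⌊z⌋₊) : (1 : ℝ) ≤ n :=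
  mod_cast (Finset.mem_Icc.mp hn).1

lemma cast_le_of_mem_Icc_one_floor (hn : n ∈ Finset.Icc 1 ⌊z⌋₊) : (n : ℝ) ≤ z := by
  obtain ⟨h1, hn⟩ := Finset.mem_Icc.mp hn
  exact (Nat.le_floor_iff' (by lia)).mp hn

lemma cast_div_mem_Icc (hz : 0 < z) (hn : n ∈ Finset.Icc 1 ⌊z⌋₊) :
    (n : ℝ) / z ∈ Set.Icc 0 1 :=
  ⟨by positivity, (div_le_one hz).mpr (cast_le_of_mem_Icc_one_floor hn)⟩

lemma sum_Icc_one_sub_div (hz : z ≠ 0) (N : ℕ) :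
    ∑ n ∈ Finset.Icc 1 N, (1 - (n : ℝ) / z) = N - N * (N + 1) / (2 * z) := by
  induction N with
  | zero => simp
  | succ m ih => rw [Finset.sum_Icc_succ_top (by lia), ih]; push_cast; field_simp; ring

lemma sum_Icc_log_eq_log_factorial (N : ℕ) :
    ∑ n ∈ Finset.Icc 1 N, Real.log n = Real.log N.factorial := by
  induction N with
  | zero => simp
  | succ m ih =>
    rw [Finset.sum_Icc_succ_top (by lia), ih, Nat.factorial_succ, Nat.cast_mul,
      Real.log_mul (by positivity) (by positivity), add_comm]

lemma mul_log_sub_le_log_factorial {N : ℕ} (hN : 0 < N) :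
    N * Real.log N - N ≤ Real.log N.factorial := by
  have h := Real.log_le_log (by positivity)
    (Real.pow_div_factorial_le_exp (x := (N : ℝ)) (by positivity) N)
  rw [Real.log_exp, Real.log_div (by positivity) (by positivity), Real.log_pow] at h
  linarith

lemma sum_Icc_log_sub_log_le (hz : 1 ≤ z) :
    ∑ n ∈ Finset.Icc 1 ⌊z⌋₊, (Real.log z - Real.log n) ≤ z := by
  have hN : 0 < ⌊z⌋₊ := Nat.floor_pos.mpr hz
  have hN' : (0 : ℝ) < ⌊z⌋₊ := mod_cast hN
  have hlog : Real.log z - Real.log ⌊z⌋₊ ≤ z / ⌊z⌋₊ - 1 := by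
    rw [← Real.log_div (by positivity) (by positivity)]
    exact Real.log_le_sub_one_of_pos (by positivity)
  have hmul : ⌊z⌋₊ * (Real.log z - Real.log ⌊z⌋₊) ≤ z - ⌊z⌋₊ :=
    (mul_le_mul_of_nonneg_left hlog hN'.le).trans_eq (by field_simp)
  rw [Finset.sum_sub_distrib, sum_Icc_log_eq_log_factorial, Finset.sum_const, Nat.card_Icc,
    add_tsub_cancel_right, nsmul_eq_mul]
  linarith [mul_log_sub_le_log_factorial hN]

lemma sum_Icc_one_sub_div_le (hz : 0 < z) :
    ∑ n ∈ Finset.Icc 1 ⌊z⌋₊, (1 - (n : ℝ) / z) ≤ z / 2 := by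
  rw [sum_Icc_one_sub_div hz.ne', sub_le_iff_le_add, ← sub_le_iff_le_add',
    le_div_iff₀ (by positivity)]
  nlinarith [Nat.lt_floor_add_one z, sq_nonneg ((⌊z⌋₊ : ℝ) - z)]

lemma le_sum_Icc_one_sub_div (hz : 1 ≤ z) :
    (z - 1) / 2 ≤ ∑ n ∈ Finset.Icc 1 ⌊z⌋₊, (1 - (n : ℝ) / z) := by
  have hN : (⌊z⌋₊ : ℝ) ≤ z := Nat.floor_le (by positivity)
  have hN1 : z < ⌊z⌋₊ + 1 := Nat.lt_floor_add_one z
  rw [sum_Icc_one_sub_div (by positivity), le_sub_comm, div_le_iff₀ (by positivity)]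
  nlinarith

lemma abs_sum_log_mul_one_sub_div_sub_le (hz : Real.exp 1 ≤ z) :
    |∑ n ∈ Finset.Icc 1 ⌊z⌋₊, Real.log n * (1 - n / z) - z / 2 * Real.log z| ≤ 2 * z := by
  have hz1 : 1 ≤ z := (Real.one_le_exp zero_le_one).trans hz
  have hz0 : 0 < z := by positivity
  have hlog : 0 ≤ Real.log z := Real.log_nonneg hz1
  have hlog_le : Real.log z ≤ z := Real.log_le_self hz0.le
  have hlog_mono (n) (hn : n ∈ Finset.Icc 1 ⌊z⌋₊) : Real.log n ≤ Real.log z :=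
    Real.log_le_log (zero_lt_one.trans_le (one_le_cast_of_mem_Icc_one hn))
      (cast_le_of_mem_Icc_one_floor hn)
  have hupper : ∑ n ∈ Finset.Icc 1 ⌊z⌋₊, Real.log n * (1 - n / z) ≤
      Real.log z * ∑ n ∈ Finset.Icc 1 ⌊z⌋₊, (1 - (n : ℝ) / z) := by
    rw [Finset.mul_sum]
    exact Finset.sum_le_sum fun n hn => mul_le_mul_of_nonneg_right (hlog_mono n hn)
      (sub_nonneg.mpr (cast_div_mem_Icc hz0 hn).2)
  have hlower : Real.log z * ∑ n ∈ Finset.Icc 1 ⌊z⌋₊, (1 - (n : ℝ) / z) -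
      ∑ n ∈ Finset.Icc 1 ⌊z⌋₊, Real.log n * (1 - n / z) ≤ z := by
    rw [Finset.mul_sum, ← Finset.sum_sub_distrib]
    refine (Finset.sum_le_sum fun n hn => ?_).trans (sum_Icc_log_sub_log_le hz1)
    rw [← sub_mul]
    exact mul_le_of_le_one_right (sub_nonneg.mpr (hlog_mono n hn))
      (by linarith [(cast_div_mem_Icc hz0 hn).1])
  have hsum_le := mul_le_mul_of_nonneg_left (sum_Icc_one_sub_div_le hz0) hlog
  have hle_sum := mul_le_mul_of_nonneg_left (le_sum_Icc_one_sub_div hz1) hlog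
  rw [abs_le]
  constructor <;> linarith

lemma log_sq_le_sixteen_mul_sqrt (hz : 1 ≤ z) : Real.log z ^ 2 ≤ 16 * √z := by
  have hlog : Real.log z ≤ 4 * z ^ (1 / 4 : ℝ) := by
    have := Real.log_le_rpow_div (x := z) (by positivity) (show (0 : ℝ) < 1 / 4 by norm_num)
    linarith
  calc Real.log z ^ 2 ≤ (4 * z ^ (1 / 4 : ℝ)) ^ 2 := by
        have := Real.log_nonneg hz
        gcongr
    _ = 16 * √z := by
        rw [mul_pow, ← Real.rpow_mul_natCast (by positivity), Real.sqrt_eq_rpow]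
        norm_num

lemma two_mul_log_mul_psi_sub_theta_le (hz : 1 ≤ z) :
    2 * Real.log z * (Chebyshev.psi z - Chebyshev.theta z) ≤ 64 * z := by
  have hlog := Real.log_nonneg hz
  calc 2 * Real.log z * (Chebyshev.psi z - Chebyshev.theta z)
      ≤ 2 * Real.log z * (2 * √z * Real.log z) := by
        gcongr
        exact Chebyshev.psi_sub_theta_le hz
    _ = 4 * √z * Real.log z ^ 2 := by ring
    _ ≤ 4 * √z * (16 * √z) := by
        gcongr
        exact log_sq_le_sixteen_mul_sqrt hz
    _ = 64 * (√z * √z) := by ring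
    _ = 64 * z := by rw [Real.mul_self_sqrt (by positivity)]

end SmoothedSums

section SplitPrimes

open Complex ArithmeticFunction

variable {q : ℕ} (χ : DirichletCharacter ℂ q)

/-- For a quadratic character `χ`, these are the primes that split in the associated field. -/
def IsSplitPrime (p : ℕ) : Prop := p.Prime ∧ χ p = 1

open Classical in
/-- The difference between the coefficients `Λ(n) log n (1 + χ(n))` and their main part
`2 log² p`, supported on the split primes. -/
noncomputable def splitError (n : ℕ) : ℂ :=
  vonMangoldt n * Real.log n * (1 + χ n) -
    if IsSplitPrime χ n then 2 * (Real.log n : ℂ) ^ 2 else 0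

variable {χ}

lemma not_isSplitPrime {n : ℕ} (h : χ n ≠ 1) : ¬ IsSplitPrime χ n := fun h' => h h'.2

lemma splitError_eq_zero_of_isUnit (hχ2 : χ ^ 2 = 1) {p : ℕ} (hp : p.Prime)
    (hunit : IsUnit (p : ZMod q)) : splitError χ p = 0 := by
  have hsq : χ p ^ 2 = 1 := by
    rw [← MulChar.pow_apply' _ two_ne_zero, hχ2, MulChar.one_apply hunit]
  rw [splitError, vonMangoldt_apply_prime hp]
  rcases sq_eq_one_iff.mp hsq with h | h
  · rw [if_pos ⟨hp, h⟩, h]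
    ring
  · rw [if_neg (not_isSplitPrime (by rw [h]; norm_num)), h]
    ring

lemma norm_splitError_le_of_not_prime {n : ℕ} (hn : ¬ n.Prime) :
    ‖splitError χ n‖ ≤ 2 * Real.log n * vonMangoldt n := by
  have hχ : ‖1 + χ n‖ ≤ 2 := by
    refine (norm_add_le _ _).trans ?_
    linarith [norm_one (α := ℂ), DirichletCharacter.norm_le_one χ n]
  rw [splitError, if_neg fun h => hn h.1, sub_zero, norm_mul, norm_mul, norm_real, norm_real,
    Real.norm_of_nonneg (Real.log_natCast_nonneg n), Real.norm_of_nonneg vonMangoldt_nonneg]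
  refine (mul_le_mul_of_nonneg_left hχ ?_).trans_eq (by ring)
  exact mul_nonneg vonMangoldt_nonneg (Real.log_natCast_nonneg n)

open Classical in
lemma sum_splitCoeff_eq {z : ℝ} (hz : z ≠ 0) :
    ∑ n ∈ Finset.Icc 1 ⌊z⌋₊, splitCoeff χ n * ((1 - n / z : ℝ) : ℂ) =
      ((2 * (∑ p ∈ Finset.Icc 1 ⌊z⌋₊ with IsSplitPrime χ p, Real.log p ^ 2 * (z - p)) / z -
        ∑ n ∈ Finset.Icc 1 ⌊z⌋₊, Real.log n * (1 - n / z) : ℝ) : ℂ) +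
      ∑ n ∈ Finset.Icc 1 ⌊z⌋₊, splitError χ n * ((1 - n / z : ℝ) : ℂ) := by
  rw [Finset.sum_filter, Finset.mul_sum, Finset.sum_div, ← Finset.sum_sub_distrib, ofReal_sum,
    ← Finset.sum_add_distrib]
  refine Finset.sum_congr rfl fun n _ => ?_
  have hzc : (z : ℂ) ≠ 0 := mod_cast hz
  simp only [splitCoeff, LSeries.logMul, splitError, Pi.add_apply, Pi.sub_apply, Pi.mul_apply,
    Pi.one_apply, natCast_log]
  split_ifs <;> (push_cast; field_simp; ring)

variable [NeZero q]

lemma norm_splitError_le_log_sq_of_dvd {p : ℕ} (hp : p.Prime) (hdvd : p ∣ q) :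
    ‖splitError χ p‖ ≤ Real.log q ^ 2 := by
  have hχp : χ p = 0 := MulChar.map_nonunit _ fun hunit =>
    (Nat.Prime.dvd_iff_not_coprime hp).mp hdvd ((ZMod.isUnit_iff_coprime _ _).mp hunit)
  have hlog : Real.log p ≤ Real.log q :=
    Real.log_le_log (mod_cast hp.pos) (mod_cast Nat.le_of_dvd (NeZero.pos q) hdvd)
  rw [splitError, if_neg (not_isSplitPrime (by rw [hχp]; norm_num)), hχp,
    vonMangoldt_apply_prime hp, add_zero, mul_one, sub_zero, ← pow_two, norm_pow, norm_real,
    Real.norm_of_nonneg (Real.log_natCast_nonneg p)]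
  exact pow_le_pow_left₀ (Real.log_natCast_nonneg p) hlog 2

lemma norm_splitError_le (hχ2 : χ ^ 2 = 1) (n : ℕ) :
    ‖splitError χ n‖ ≤ (if n ∣ q then Real.log q ^ 2 else 0) +
      if n.Prime then 0 else 2 * Real.log n * vonMangoldt n := by
  have hnonneg : (0 : ℝ) ≤ if n ∣ q then Real.log q ^ 2 else 0 := by split_ifs <;> positivity
  by_cases hn : n.Prime
  · rw [if_pos hn, add_zero]
    by_cases hdvd : n ∣ q
    · rw [if_pos hdvd]
      exact norm_splitError_le_log_sq_of_dvd hn hdvd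
    · rw [splitError_eq_zero_of_isUnit hχ2 hn ((ZMod.isUnit_iff_coprime _ _).mpr
        ((Nat.Prime.coprime_iff_not_dvd hn).mpr hdvd)), norm_zero]
      exact hnonneg
  · rw [if_neg hn]
    exact (norm_splitError_le_of_not_prime hn).trans (le_add_of_nonneg_left hnonneg)

lemma card_filter_dvd_le (N : ℕ) : ((Finset.Icc 1 N).filter (· ∣ q)).card ≤ q := by
  refine (Finset.card_le_card (t := Finset.Icc 1 q) fun n hn => ?_).trans_eq (by simp)
  obtain ⟨hn, hdvd⟩ := Finset.mem_filter.mp hn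
  exact Finset.mem_Icc.mpr ⟨(Finset.mem_Icc.mp hn).1, Nat.le_of_dvd (NeZero.pos q) hdvd⟩

lemma sum_norm_splitError_le (hχ2 : χ ^ 2 = 1) {z : ℝ} (hz : 1 ≤ z) :
    ∑ n ∈ Finset.Icc 1 ⌊z⌋₊, ‖splitError χ n‖ ≤ q * Real.log q ^ 2 + 64 * z := by
  have hnot_prime : ∑ n ∈ Finset.Icc 1 ⌊z⌋₊,
      (if n.Prime then 0 else 2 * Real.log z * vonMangoldt n) =
        2 * Real.log z * (Chebyshev.psi z - Chebyshev.theta z) := by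
    rw [Chebyshev.psi_sub_theta_eq_sum_not_prime, Finset.sum_filter, Finset.mul_sum]
    refine Finset.sum_congr (by ext; simp; lia) fun n _ => ?_
    split_ifs <;> simp_all
  calc ∑ n ∈ Finset.Icc 1 ⌊z⌋₊, ‖splitError χ n‖
      ≤ ∑ n ∈ Finset.Icc 1 ⌊z⌋₊, ((if n ∣ q then Real.log q ^ 2 else 0) +
          if n.Prime then 0 else 2 * Real.log z * vonMangoldt n) := by
        refine Finset.sum_le_sum fun n hn => (norm_splitError_le hχ2 n).trans ?_
        have hpos : (0 : ℝ) < n := zero_lt_one.trans_le (one_le_cast_of_mem_Icc_one hn)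
        have hle := cast_le_of_mem_Icc_one_floor hn
        have : 0 ≤ vonMangoldt n := vonMangoldt_nonneg
        gcongr
        split_ifs
        · rfl
        · gcongr
    _ = ((Finset.Icc 1 ⌊z⌋₊).filter (· ∣ q)).card * Real.log q ^ 2 +
          2 * Real.log z * (Chebyshev.psi z - Chebyshev.theta z) := by
        rw [Finset.sum_add_distrib, hnot_prime, ← Finset.sum_filter, Finset.sum_const,
          nsmul_eq_mul]
    _ ≤ q * Real.log q ^ 2 + 64 * z := by
        refine add_le_add ?_ (two_mul_log_mul_psi_sub_theta_le hz)
        gcongr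
        exact card_filter_dvd_le _

lemma norm_sum_splitError_le (hχ2 : χ ^ 2 = 1) {z : ℝ} (hz : 1 ≤ z) :
    ‖∑ n ∈ Finset.Icc 1 ⌊z⌋₊, splitError χ n * ((1 - n / z : ℝ) : ℂ)‖ ≤
      (q * Real.log q ^ 2 + 64) * z := by
  refine (norm_sum_le_of_le _ fun n hn => ?_).trans ((sum_norm_splitError_le hχ2 hz).trans ?_)
  · obtain ⟨h0, h1⟩ := cast_div_mem_Icc (by positivity) hn
    rw [norm_mul, norm_real, Real.norm_of_nonneg (by linarith)]
    exact mul_le_of_le_one_right (norm_nonneg _) (by linarith)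
  · rw [add_mul]
    exact add_le_add_left (le_mul_of_one_le_right (by positivity) hz) _

open Classical in
lemma exists_abs_sum_log_sq_mul_sub_le (hχ : χ ≠ 1) (hχ2 : χ ^ 2 = 1) :
    ∃ C : ℝ, 0 < C ∧ ∀ z : ℝ, Real.exp 1 ≤ z →
      |∑ p ∈ Finset.Icc 1 ⌊z⌋₊ with IsSplitPrime χ p, Real.log p ^ 2 * (z - p) -
        z ^ 2 / 4 * Real.log z| ≤ C * z ^ 2 := by
  obtain ⟨C, hC, hbound⟩ := exists_norm_sum_splitCoeff_le hχ hχ2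
  set D := C + (q * Real.log q ^ 2 + 64) + 2
  refine ⟨D / 2, by positivity, fun z hz => ?_⟩
  have hz1 : 1 ≤ z := (Real.one_le_exp zero_le_one).trans hz
  have hz0 : 0 < z := by positivity
  set A := ∑ p ∈ Finset.Icc 1 ⌊z⌋₊ with IsSplitPrime χ p, Real.log p ^ 2 * (z - p)
  set B := ∑ n ∈ Finset.Icc 1 ⌊z⌋₊, Real.log n * (1 - n / z)
  have hAB : |2 * A / z - B| ≤ C * z + (q * Real.log q ^ 2 + 64) * z := by
    rw [← Real.norm_eq_abs, ← norm_real, eq_sub_of_add_eq (sum_splitCoeff_eq hz0.ne').symm]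
    exact (norm_sub_le _ _).trans (add_le_add (hbound z hz) (norm_sum_splitError_le hχ2 hz1))
  have hAz : |2 * A / z - z / 2 * Real.log z| ≤ D * z := by
    have := abs_sub_le (2 * A / z) B (z / 2 * Real.log z)
    linarith [abs_sum_log_mul_one_sub_div_sub_le hz]
  calc |A - z ^ 2 / 4 * Real.log z|
      = |2 * A / z - z / 2 * Real.log z| * (z / 2) := by
        rw [← abs_of_pos (show 0 < z / 2 by positivity), ← abs_mul,
          abs_of_pos (show 0 < z / 2 by positivity)]
        congr 1
        field_simp
        ring
    _ ≤ D * z * (z / 2) := by gcongr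
    _ = D / 2 * z ^ 2 := by ring

end SplitPrimes

section SmoothedCount

open Classical in
/-- The smoothed counting function `∫₀ᶻ #{p ≤ t : P p} dt`, written as a sum of hinges. -/
noncomputable def smoothedCount (P : ℕ → Prop) (z : ℝ) : ℝ :=
  ∑ p ∈ Finset.Icc 1 ⌊z⌋₊ with P p, (z - p)

/-- The numbers satisfying `P` have half the density of the primes, in the smoothed form
`∑_{p ≤ z, P p} (z - p) = z² / (4 log z) * (1 + O(log log z / log z))`. -/
def HasHalfPrimeDensity (P : ℕ → Prop) : Prop :=
  ∃ C > 0, ∃ z₀ : ℝ, ∀ z ≥ z₀, |smoothedCount P z - z ^ 2 / (4 * Real.log z)| ≤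
    C * z ^ 2 * (Real.log (Real.log z) / Real.log z ^ 2)

lemma eventually_log_bounds (K : ℝ) :
    ∀ᶠ u : ℝ in atTop, K ≤ u ∧ K ≤ Real.log u ∧ K * Real.log u ≤ u ∧ K * u ^ 9 ≤ Real.exp u := by
  have hlog := Real.isLittleO_log_id_atTop.def (c := 1 / (|K| + 1)) (by positivity)
  filter_upwards [eventually_ge_atTop K, Real.tendsto_log_atTop.eventually_ge_atTop K, hlog,
    (Real.tendsto_exp_div_pow_atTop 9).eventually_ge_atTop K, eventually_ge_atTop 1]
    with u hK hKlog hlog_le hexp hu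
  refine ⟨hK, hKlog, ?_, (le_div_iff₀ (by positivity)).mp hexp⟩
  have hlog0 : 0 ≤ Real.log u := Real.log_nonneg hu
  rw [id, Real.norm_of_nonneg hlog0, Real.norm_of_nonneg (by positivity), one_div_mul_eq_div,
    le_div_iff₀ (by positivity)] at hlog_le
  nlinarith [le_abs_self K]

variable {P : ℕ → Prop} {z : ℝ}

open Classical in
lemma sum_log_sq_mul_sub_le_log_sq_mul_smoothedCount :
    ∑ p ∈ Finset.Icc 1 ⌊z⌋₊ with P p, Real.log p ^ 2 * (z - p) ≤
      Real.log z ^ 2 * smoothedCount P z := by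
  rw [smoothedCount, Finset.mul_sum]
  refine Finset.sum_le_sum fun p hp => ?_
  have h1 := one_le_cast_of_mem_Icc_one (Finset.mem_filter.mp hp).1
  have hle := cast_le_of_mem_Icc_one_floor (Finset.mem_filter.mp hp).1
  have := Real.log_nonneg h1
  gcongr

open Classical in
lemma smoothedCount_sub_le_sum_filter_lt {w : ℝ} (hz : 0 ≤ z) (hw : 0 ≤ w) :
    smoothedCount P z - w * z ≤
      ∑ p ∈ Finset.Icc 1 ⌊z⌋₊ with P p ∧ w < p, (z - p) := by
  have hsmall : ∑ p ∈ ((Finset.Icc 1 ⌊z⌋₊).filter P).filter (fun p : ℕ => ¬ w < p), (z - p) ≤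
      w * z :=
    calc _ ≤ ∑ _ ∈ ((Finset.Icc 1 ⌊z⌋₊).filter P).filter (fun p : ℕ => ¬ w < p), z :=
          Finset.sum_le_sum fun _ _ => sub_le_self _ (Nat.cast_nonneg _)
      _ ≤ (Finset.Icc 1 ⌊w⌋₊).card * z := by
          rw [Finset.sum_const, nsmul_eq_mul]
          gcongr
          intro p hp
          simp only [Finset.mem_filter, Finset.mem_Icc, not_lt] at hp ⊢
          exact ⟨hp.1.1.1, Nat.le_floor hp.2⟩
      _ ≤ w * z := by
          rw [Nat.card_Icc, add_tsub_cancel_right]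
          gcongr
          exact Nat.floor_le hw
  rw [smoothedCount, ← Finset.filter_filter,
    ← Finset.sum_filter_add_sum_filter_not _ (fun p : ℕ => w < p)]
  linarith

open Classical in
lemma log_sq_mul_smoothedCount_sub_le {w : ℝ} (hz : 0 ≤ z) (hw : 1 ≤ w) :
    Real.log w ^ 2 * (smoothedCount P z - w * z) ≤
      ∑ p ∈ Finset.Icc 1 ⌊z⌋₊ with P p, Real.log p ^ 2 * (z - p) := by
  calc Real.log w ^ 2 * (smoothedCount P z - w * z)
      ≤ Real.log w ^ 2 * ∑ p ∈ Finset.Icc 1 ⌊z⌋₊ with P p ∧ w < p, (z - p) := by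
        gcongr
        exact smoothedCount_sub_le_sum_filter_lt hz (by positivity)
    _ ≤ ∑ p ∈ Finset.Icc 1 ⌊z⌋₊ with P p ∧ w < p, Real.log p ^ 2 * (z - p) := by
        rw [Finset.mul_sum]
        refine Finset.sum_le_sum fun p hp => ?_
        obtain ⟨hmem, -, hlt⟩ := Finset.mem_filter.mp hp
        have := sub_nonneg.mpr (cast_le_of_mem_Icc_one_floor hmem)
        have := Real.log_nonneg hw
        gcongr
    _ ≤ ∑ p ∈ Finset.Icc 1 ⌊z⌋₊ with P p, Real.log p ^ 2 * (z - p) := by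
        rw [← Finset.filter_filter]
        refine Finset.sum_le_sum_of_subset_of_nonneg (Finset.filter_subset _ _) fun p hp _ => ?_
        have := sub_nonneg.mpr (cast_le_of_mem_Icc_one_floor (Finset.mem_filter.mp hp).1)
        positivity

lemma one_le_one_add_mul_one_sub_sq {x : ℝ} (hx : 0 ≤ x) (hx' : 8 * x ≤ 1) :
    1 ≤ (1 + 16 * x) * (1 - 2 * x) ^ 2 := by
  nlinarith [mul_le_mul_of_nonneg_left hx' hx, pow_nonneg hx 3]

lemma sub_le_div_of_mul_sq_le {a C u v Φ : ℝ} (ha : 0 ≤ a) (hC : 0 ≤ C) (hv : 1 ≤ v)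
    (hvu : 8 * v ≤ u) (h : (u - 2 * v) ^ 2 * (Φ - a / u ^ 2) ≤ a / 4 * u + C * a) :
    Φ - a / (4 * u) ≤ (5 * C + 5) * a * (v / u ^ 2) := by
  have hu : 0 < u := by linarith
  have hmain : Φ - a / u ^ 2 ≤ (1 + 16 * (v / u)) * ((a / 4 * u + C * a) / u ^ 2) := by
    rcases le_total (Φ - a / u ^ 2) 0 with hneg | hpos
    · exact hneg.trans (by positivity)
    · calc Φ - a / u ^ 2
          ≤ (1 + 16 * (v / u)) * (1 - 2 * (v / u)) ^ 2 * (Φ - a / u ^ 2) :=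
            le_mul_of_one_le_left hpos (one_le_one_add_mul_one_sub_sq (by positivity)
              (by rwa [← mul_div_assoc, div_le_one hu]))
        _ = (1 + 16 * (v / u)) * ((u - 2 * v) ^ 2 * (Φ - a / u ^ 2) / u ^ 2) := by
            rw [show 1 - 2 * (v / u) = (u - 2 * v) / u by field_simp, div_pow]
            ring
        _ ≤ _ := by gcongr
  have hexpand : (1 + 16 * (v / u)) * ((a / 4 * u + C * a) / u ^ 2) + a / u ^ 2 =
      a / (4 * u) + a / u ^ 2 * (4 * v + C + 16 * C * (v / u) + 1) := by
    field_simp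
    ring
  have hcoeff : 4 * v + C + 16 * C * (v / u) + 1 ≤ (5 * C + 5) * v := by
    have hratio : 16 * C * (v / u) ≤ 2 * C := by
      have : v / u ≤ 1 / 8 := by rw [div_le_iff₀ hu]; linarith
      nlinarith
    nlinarith
  have := mul_le_mul_of_nonneg_left hcoeff (show 0 ≤ a / u ^ 2 by positivity)
  have : (5 * C + 5) * a * (v / u ^ 2) = a / u ^ 2 * ((5 * C + 5) * v) := by ring
  linarith

lemma le_sub_div_of_le_sq_mul {a C u v Φ : ℝ} (ha : 0 ≤ a) (hC : 0 ≤ C) (hu : 0 < u) (hv : 1 ≤ v)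
    (h : a / 4 * u - C * a ≤ u ^ 2 * Φ) :
    -((5 * C + 5) * a * (v / u ^ 2)) ≤ Φ - a / (4 * u) := by
  have hdiv : a / (4 * u) - C * a * (1 / u ^ 2) ≤ Φ := by
    rw [show a / (4 * u) - C * a * (1 / u ^ 2) = (a / 4 * u - C * a) / u ^ 2 by field_simp,
      div_le_iff₀ (by positivity)]
    linarith
  have : C * a * (1 / u ^ 2) ≤ (5 * C + 5) * a * (v / u ^ 2) := by
    gcongr
    linarith
  linarith

-- Partial summation: `log² p` differs from `log² z` by a factor `1 + O(log log z / log z)` for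
-- `z / log² z < p ≤ z`, and the smaller `p` are negligible.
open Classical in
lemma hasHalfPrimeDensity_of_abs_sum_log_sq_le {C : ℝ} (hC : 0 < C)
    (hsum : ∀ z : ℝ, Real.exp 1 ≤ z →
      |∑ p ∈ Finset.Icc 1 ⌊z⌋₊ with P p, Real.log p ^ 2 * (z - p) - z ^ 2 / 4 * Real.log z| ≤
        C * z ^ 2) :
    HasHalfPrimeDensity P := by
  obtain ⟨z₀, hz₀⟩ := eventually_atTop.mp
    ((Real.tendsto_log_atTop.eventually (eventually_log_bounds 8)).and
      (eventually_ge_atTop (Real.exp 1)))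
  refine ⟨5 * C + 5, by positivity, z₀, fun z hz => ?_⟩
  obtain ⟨⟨hu, hv, hvu, hexp⟩, hez⟩ := hz₀ z hz
  have hzpos : 0 < z := (Real.exp_pos 1).trans_le hez
  rw [Real.exp_log hzpos] at hexp
  have hu0 : 0 < Real.log z := by linarith
  have hw : 1 ≤ z / Real.log z ^ 2 := by
    rw [le_div_iff₀ (by positivity), one_mul]
    have : Real.log z ^ 2 ≤ Real.log z ^ 9 := pow_le_pow_right₀ (by linarith) (by norm_num)
    linarith [show 0 ≤ Real.log z ^ 9 by positivity]
  have hlogw : Real.log (z / Real.log z ^ 2) = Real.log z - 2 * Real.log (Real.log z) := by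
    rw [Real.log_div hzpos.ne' (by positivity), Real.log_pow, Nat.cast_ofNat]
  have hlower := log_sq_mul_smoothedCount_sub_le (P := P) hzpos.le hw
  rw [hlogw, div_mul_eq_mul_div, ← pow_two] at hlower
  obtain ⟨hsum_ge, hsum_le⟩ := abs_le.mp (hsum z hez)
  refine abs_le.mpr ⟨le_sub_div_of_le_sq_mul (by positivity) hC.le hu0 (by linarith) ?_,
    sub_le_div_of_mul_sq_le (by positivity) hC.le (by linarith) hvu (by linarith)⟩
  linarith [sum_log_sq_mul_sub_le_log_sq_mul_smoothedCount (P := P) (z := z)]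

lemma hasHalfPrimeDensity_isSplitPrime {q : ℕ} [NeZero q] {χ : DirichletCharacter ℂ q}
    (hχ : χ ≠ 1) (hχ2 : χ ^ 2 = 1) : HasHalfPrimeDensity (IsSplitPrime χ) := by
  obtain ⟨C, hC, hsum⟩ := exists_abs_sum_log_sq_mul_sub_le hχ hχ2
  exact hasHalfPrimeDensity_of_abs_sum_log_sq_le hC hsum

end SmoothedCount

/-! ### Prime elements of quadratic algebras -/

section PrimeElements

open QuadraticAlgebra

variable {R : Type*} [CommRing R] {a b : R} {π : QuadraticAlgebra R a b}

lemma dvd_re_of_dvd_norm_of_dvd_im {p : R} (hp : Prime p) {z : QuadraticAlgebra R a b}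
    (hnorm : p ∣ z.norm) (him : p ∣ z.im) : p ∣ z.re := by
  have hsq : z.re ^ 2 = z.norm - z.im * (b * z.re - a * z.im) := by
    rw [norm_def]
    ring
  exact hp.dvd_of_dvd_pow (hsq ▸ dvd_sub hnorm (him.mul_right _))

variable [IsDomain R]

lemma mul_right_injective_of_norm_ne_zero (hπ : π.norm ≠ 0) : Function.Injective (π * ·) := by
  have hmem : π ∈ nonZeroDivisors (QuadraticAlgebra R a b) :=
    norm_mem_nonZeroDivisors_iff.mp (mem_nonZeroDivisors_of_ne_zero hπ)
  exact fun z w h => (mul_cancel_left_mem_nonZeroDivisors hmem).mp h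

lemma dvd_iff_norm_dvd_im_star_mul (hπ : Prime π.norm) {z : QuadraticAlgebra R a b} :
    π ∣ z ↔ π.norm ∣ (star π * z).im := by
  have hcomm : star π * π = algebraMap R _ π.norm := by
    rw [algebraMap_norm_eq_mul_star, mul_comm]
  constructor
  · rintro ⟨w, rfl⟩
    refine (algebraMap_dvd_iff.mp ⟨w, ?_⟩).2
    rw [← mul_assoc, hcomm]
  · intro him
    have hre : π.norm ∣ (star π * z).re := by
      refine dvd_re_of_dvd_norm_of_dvd_im hπ ?_ him
      rw [map_mul, QuadraticAlgebra.norm_star]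
      exact dvd_mul_right _ _
    obtain ⟨w, hw⟩ := algebraMap_dvd_iff.mpr ⟨hre, him⟩
    refine ⟨w, mul_right_injective_of_norm_ne_zero (π := star π) ?_ ?_⟩
    · rw [QuadraticAlgebra.norm_star]
      exact hπ.ne_zero
    · change star π * z = star π * (π * w)
      rw [hw, ← hcomm, mul_assoc]

lemma prime_of_prime_norm (hπ : Prime π.norm) : Prime π := by
  refine ⟨?_, fun h => hπ.not_isUnit (isUnit_iff_norm_isUnit.mp h), fun z w hzw => ?_⟩
  · rintro rfl
    exact hπ.ne_zero norm_zero
  · rw [dvd_iff_norm_dvd_im_star_mul hπ] at hzw ⊢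
    rw [dvd_iff_norm_dvd_im_star_mul hπ]
    have hmul : (star π * z).im * (star π * w).im =
        π.norm * (z.im * w.im) - π.im * (star π * (z * w)).im := by
      simp only [norm_def, im_mul, re_mul, re_star, im_star]
      ring
    exact hπ.dvd_or_dvd (hmul ▸ dvd_sub (dvd_mul_right _ _) (hzw.mul_left _))

lemma dvd_or_star_dvd_of_norm_dvd_norm (hπ : Prime π.norm) {z : QuadraticAlgebra R a b}
    (hz : π.norm ∣ z.norm) : π ∣ z ∨ star π ∣ z := by
  have hdvd : π ∣ z * star z := by
    rw [← algebraMap_norm_eq_mul_star]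
    refine Dvd.dvd.trans ?_ (map_dvd (algebraMap R _) hz)
    rw [algebraMap_norm_eq_mul_star]
    exact dvd_mul_right _ _
  refine ((prime_of_prime_norm hπ).dvd_or_dvd hdvd).imp_right fun h => ?_
  simpa only [starRingEnd_apply, star_star] using map_dvd (starRingEnd _) h

-- If `π ∣ star π`, then `π` divides its trace, whose square is `Δ * π.im ^ 2 + 4 * norm π`.
lemma not_dvd_star_of_not_dvd_discr (hπ : Prime π.norm) (hdiscr : ¬ π.norm ∣ b ^ 2 + 4 * a) :
    ¬ π ∣ star π := by
  intro hdvd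
  have htrace : π.norm ∣ (2 * π.re + b * π.im) ^ 2 := by
    have : π ∣ algebraMap R _ π.trace := by
      rw [algebraMap_trace_eq_add_star]
      exact dvd_add dvd_rfl hdvd
    simpa only [QuadraticAlgebra.norm_algebraMap, trace_def] using
      map_dvd QuadraticAlgebra.norm this
  have him : π.norm ∣ π.im := by
    have hmul : (b ^ 2 + 4 * a) * π.im ^ 2 = (2 * π.re + b * π.im) ^ 2 - π.norm * 4 := by
      rw [norm_def]
      ring
    have hdvd' : π.norm ∣ (b ^ 2 + 4 * a) * π.im ^ 2 :=
      hmul ▸ dvd_sub htrace (dvd_mul_right _ _)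
    exact hπ.dvd_of_dvd_pow ((hπ.dvd_or_dvd hdvd').resolve_left hdiscr)
  have hself := algebraMap_dvd_iff.mpr ⟨dvd_re_of_dvd_norm_of_dvd_im hπ dvd_rfl him, him⟩
  have hsq : π.norm * π.norm ∣ π.norm * 1 := by
    simpa only [QuadraticAlgebra.norm_algebraMap, mul_one, sq] using
      map_dvd QuadraticAlgebra.norm hself
  exact hπ.not_isUnit (isUnit_of_dvd_one ((mul_dvd_mul_iff_left hπ.ne_zero).mp hsq))

end PrimeElements

/-! ### Counting elements of given norm -/

section RepCount

open QuadraticAlgebra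

/-- The quadratic order `ℤ[ω]`, `ω² = ω - k`, whose norm form is `x² + xy + k·y²`. -/
abbrev NormFormRing (k : ℕ) : Type := QuadraticAlgebra ℤ (-(k : ℤ)) 1

/-- The number of representations of `n` by the form `x² + xy + k·y²`, counted as elements of
norm `n`; since it is an `ncard`, it would be `0` if there were infinitely many. -/
noncomputable def repCount (k : ℕ) (n : ℤ) : ℕ :=
  {z : NormFormRing k | z.norm = n}.ncard

variable {k : ℕ} {π : NormFormRing k}

lemma norm_normFormRing (z : NormFormRing k) :
    z.norm = z.re ^ 2 + z.re * z.im + k * z.im ^ 2 := by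
  rw [norm_def]
  ring

lemma fForm_eq_repCount_div_two {n : ℕ} (hn : n ≠ 0) : fForm k n = repCount k n / 2 := by
  rw [fForm, if_neg hn, repCount, ← Nat.card_coe_set_eq]
  congr 1
  refine Nat.card_congr ((equivProd (-(k : ℤ)) 1).subtypeEquiv fun z => ?_).symm
  rw [Set.mem_ofPred_eq, norm_normFormRing]
  rfl

lemma finite_setOf_norm_eq (hk : 0 < k) (n : ℤ) : {z : NormFormRing k | z.norm = n}.Finite := by
  have : (1 : ℤ) ≤ k := by exact_mod_cast hk
  refine Set.Finite.of_finite_image (f := equivProd _ _) ?_ (equivProd _ _).injective.injOn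
  refine ((Set.finite_Icc (-(4 * k * n)) (4 * k * n)).prod
    (Set.finite_Icc (-(4 * n)) (4 * n))).subset ?_
  rintro _ ⟨⟨x, y⟩, hz, rfl⟩
  rw [Set.mem_ofPred_eq, norm_normFormRing] at hz
  change x ^ 2 + x * y + k * y ^ 2 = n at hz
  have hy : y ^ 2 ≤ 4 * n := by
    nlinarith [sq_nonneg (2 * x + y), mul_nonneg (by linarith : (0 : ℤ) ≤ 4 * k - 2) (sq_nonneg y)]
  have hx : x ^ 2 ≤ 4 * k * n := by
    nlinarith [sq_nonneg (2 * k * y + x),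
      mul_nonneg (by linarith : (0 : ℤ) ≤ 4 * k - 2) (sq_nonneg x)]
  have habs (t : ℤ) : |t| ≤ t ^ 2 := (Int.le_self_sq _).trans_eq (sq_abs t)
  exact ⟨abs_le.mp ((habs x).trans hx), abs_le.mp ((habs y).trans hy)⟩

lemma repCount_one (hk : 2 ≤ k) : repCount k 1 = 2 := by
  suffices h : {z : NormFormRing k | z.norm = 1} = {1, -1} by
    rw [repCount, h, Set.ncard_pair (fun h => by simpa using congrArg re h)]
  ext z
  simp only [Set.mem_ofPred_eq, Set.mem_insert_iff, Set.mem_singleton_iff]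
  refine ⟨fun h => ?_, by rintro (rfl | rfl) <;> simp⟩
  have hk : (2 : ℤ) ≤ k := by exact_mod_cast hk
  rw [norm_normFormRing] at h
  have him : z.im = 0 := by
    have : z.im ^ 2 < 1 := by
      nlinarith [sq_nonneg (2 * z.re + z.im),
        mul_nonneg (by linarith : (0 : ℤ) ≤ 4 * k - 8) (sq_nonneg z.im)]
    exact pow_eq_zero_iff two_ne_zero |>.mp (le_antisymm (Int.lt_add_one_iff.mp this) (sq_nonneg _))
  have hre : z.re ^ 2 = 1 := by simpa [him] using h
  exact (sq_eq_one_iff.mp hre).imp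
    (fun h => QuadraticAlgebra.ext h him) (fun h => QuadraticAlgebra.ext h (by simp [him]))

lemma ncard_norm_eq_norm_mul_and_dvd (hπ : π.norm ≠ 0) (n : ℤ) :
    {z : NormFormRing k | z.norm = π.norm * n ∧ π ∣ z}.ncard = repCount k n := by
  rw [repCount, ← Set.ncard_image_of_injective {z | z.norm = n}
    (mul_right_injective_of_norm_ne_zero hπ)]
  congr 1
  ext z
  constructor
  · rintro ⟨h, w, rfl⟩
    rw [map_mul] at h
    exact ⟨w, mul_left_cancel₀ hπ h, rfl⟩
  · rintro ⟨w, hw, rfl⟩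
    exact ⟨by rw [map_mul, (hw : w.norm = n)], dvd_mul_right π w⟩

lemma repCount_norm_mul_of_forall_dvd (hπ : π.norm ≠ 0) {n : ℤ}
    (hdvd : ∀ z : NormFormRing k, z.norm = π.norm * n → π ∣ z) :
    repCount k (π.norm * n) = repCount k n := by
  rw [← ncard_norm_eq_norm_mul_and_dvd hπ n, repCount]
  exact congrArg Set.ncard <| Set.ext fun z => ⟨fun h => ⟨h, hdvd z h⟩, And.left⟩

-- Inclusion-exclusion for the multiples of `π` and of `star π`.
lemma repCount_norm_mul_add_ncard (hk : 0 < k) (hπ : Prime π.norm) (hstar : ¬ π ∣ star π) (n : ℤ) :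
    repCount k (π.norm * n) +
      {z : NormFormRing k | z.norm = π.norm * n ∧ π * star π ∣ z}.ncard = 2 * repCount k n := by
  set s := {z : NormFormRing k | z.norm = π.norm * n ∧ π ∣ z}
  set t := {z : NormFormRing k | z.norm = π.norm * n ∧ star π ∣ z}
  have hfin := finite_setOf_norm_eq hk (π.norm * n)
  have hs : s.ncard = repCount k n := ncard_norm_eq_norm_mul_and_dvd hπ.ne_zero n
  have ht : t.ncard = repCount k n := by
    rw [← ncard_norm_eq_norm_mul_and_dvd (π := star π), QuadraticAlgebra.norm_star]
    exact QuadraticAlgebra.norm_star π ▸ hπ.ne_zero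
  have hunion : s ∪ t = {z | z.norm = π.norm * n} := by
    refine Set.ext fun z => ⟨Or.rec And.left And.left, fun h => ?_⟩
    exact (dvd_or_star_dvd_of_norm_dvd_norm hπ ⟨n, h⟩).imp (⟨h, ·⟩) (⟨h, ·⟩)
  have hinter : s ∩ t = {z | z.norm = π.norm * n ∧ π * star π ∣ z} := by
    refine Set.ext fun z => ⟨?_, fun h => ⟨⟨h.1, (dvd_mul_right _ _).trans h.2⟩,
      h.1, (dvd_mul_left _ _).trans h.2⟩⟩
    rintro ⟨⟨h, hdvd⟩, -, w, rfl⟩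
    rw [mul_comm π]
    exact ⟨h, mul_dvd_mul_left _
      (((prime_of_prime_norm hπ).dvd_or_dvd hdvd).resolve_left hstar)⟩
  rw [two_mul, repCount, ← hunion, ← hinter,
    Set.ncard_union_add_ncard_inter s t (hfin.subset fun _ h => h.1) (hfin.subset fun _ h => h.1),
    hs, ht]

lemma repCount_norm_pow_mul_of_not_dvd_star (hk : 0 < k) (hπ : Prime π.norm)
    (hstar : ¬ π ∣ star π) {m : ℤ} (hm : ¬ π.norm ∣ m) (a : ℕ) :
    repCount k (π.norm ^ a * m) = (a + 1) * repCount k m := by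
  have hnorm : (π * star π).norm = π.norm * π.norm := by rw [map_mul, QuadraticAlgebra.norm_star]
  induction a using Nat.twoStepInduction with
  | zero => simp
  | one =>
    have hempty : {z : NormFormRing k | z.norm = π.norm * m ∧ π * star π ∣ z} = ∅ := by
      refine Set.eq_empty_of_forall_notMem fun z ⟨hz, w, hw⟩ => hm ⟨w.norm, ?_⟩
      rw [hw, map_mul, hnorm, mul_assoc] at hz
      exact (mul_left_cancel₀ hπ.ne_zero hz).symm
    have hrec := repCount_norm_mul_add_ncard hk hπ hstar m
    rw [hempty, Set.ncard_empty] at hrec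
    simpa using hrec
  | more a ih ih' =>
    have hrec := repCount_norm_mul_add_ncard hk hπ hstar (π.norm ^ (a + 1) * m)
    have hmul : π.norm * (π.norm ^ (a + 1) * m) = (π * star π).norm * (π.norm ^ a * m) := by
      rw [hnorm]
      ring
    have hne : (π * star π).norm ≠ 0 := hnorm ▸ mul_ne_zero hπ.ne_zero hπ.ne_zero
    rw [hmul, ncard_norm_eq_norm_mul_and_dvd hne, ← hmul, ih, ih'] at hrec
    rw [show π.norm ^ (a + 2) * m = π.norm * (π.norm ^ (a + 1) * m) by ring]
    linarith

lemma repCount_norm_pow_mul_of_star_eq_neg (hπ : Prime π.norm) (hstar : star π = -π) (m : ℤ)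
    (a : ℕ) : repCount k (π.norm ^ a * m) = repCount k m := by
  induction a with
  | zero => simp
  | succ a ih =>
    rw [← ih, pow_succ', mul_assoc]
    refine repCount_norm_mul_of_forall_dvd hπ.ne_zero fun z hz => ?_
    have := dvd_or_star_dvd_of_norm_dvd_norm hπ ⟨_, hz⟩
    rwa [hstar, neg_dvd, or_self] at this

lemma repCount_pow_mul_eq_zero_or_of_forall_dvd {p : ℤ} (hp : p ≠ 0)
    (hdvd : ∀ z : NormFormRing k, p ∣ z.norm → algebraMap ℤ _ p ∣ z) {m : ℤ} (hm : ¬ p ∣ m)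
    (a : ℕ) : repCount k (p ^ a * m) = 0 ∨ repCount k (p ^ a * m) = repCount k m := by
  induction a using Nat.twoStepInduction with
  | zero => simp
  | one =>
    left
    rw [repCount, pow_one]
    convert Set.ncard_empty (NormFormRing k)
    refine Set.eq_empty_of_forall_notMem fun z (hz : z.norm = p * m) => ?_
    obtain ⟨w, rfl⟩ := hdvd z ⟨m, hz⟩
    rw [map_mul, QuadraticAlgebra.norm_algebraMap, sq, mul_assoc] at hz
    exact hm ⟨w.norm, (mul_left_cancel₀ hp hz).symm⟩
  | more a ih _ =>
    have hnorm := QuadraticAlgebra.norm_algebraMap (a := -(k : ℤ)) (b := 1) p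
    have hmul : p ^ (a + 2) * m = (algebraMap ℤ (NormFormRing k) p).norm * (p ^ a * m) := by
      rw [hnorm]
      ring
    rw [hmul, repCount_norm_mul_of_forall_dvd (hnorm ▸ pow_ne_zero 2 hp)]
    · exact ih
    · exact fun z hz => hdvd z (hz ▸ hnorm ▸ (dvd_pow_self p two_ne_zero).mul_right _)

end RepCount

/-! ### Factorization in class number one -/

section ClassNumberOne

open QuadraticAlgebra

/-- Euler's lucky numbers: those `k ≥ 2` for which `1 - 4 * k` is the discriminant of a quadratic
field of class number one. -/
def eulerLuckyNumbers : Set ℕ := {2, 3, 5, 11, 17, 41}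

/-- The primes that split in the quadratic order with norm form `x² + xy + k·y²`: those other
than `4 * k - 1` modulo which `t² + t + k` has a root. -/
def IsNormFormSplit (k p : ℕ) : Prop :=
  p.Prime ∧ p ≠ 4 * k - 1 ∧ ∃ t : ℤ, (p : ℤ) ∣ t ^ 2 + t + k

variable {k p : ℕ}

lemma prime_four_mul_sub_one (hk : k ∈ eulerLuckyNumbers) : (4 * k - 1).Prime := by
  rcases hk with rfl | rfl | rfl | rfl | rfl | rfl <;> norm_num

lemma two_le_of_mem_eulerLuckyNumbers (hk : k ∈ eulerLuckyNumbers) : 2 ≤ k := by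
  rcases hk with rfl | rfl | rfl | rfl | rfl | rfl <;> norm_num

lemma natCast_four_mul_sub_one (hk : 0 < k) : ((4 * k - 1 : ℕ) : ℤ) = 4 * k - 1 := by
  omega

-- The principal form is the only reduced form of discriminant `1 - 4 * k`.
lemma eq_one_of_reduced (hk : k ∈ eulerLuckyNumbers) {a c t : ℤ} (ha : 0 < a)
    (h : t ^ 2 + t + k = a * c) (ht : |2 * t + 1| ≤ a) (hac : a ≤ c) : a = 1 := by
  rw [abs_le] at ht
  have hsq : 3 * a ^ 2 ≤ 4 * k - 1 := by nlinarith
  have hk41 : k ≤ 41 := by rcases hk with rfl | rfl | rfl | rfl | rfl | rfl <;> norm_num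
  have ha7 : a ≤ 7 := by
    have : (k : ℤ) ≤ 41 := by exact_mod_cast hk41
    nlinarith
  have : -4 ≤ t := by omega
  have : t ≤ 3 := by omega
  rcases hk with rfl | rfl | rfl | rfl | rfl | rfl <;> push_cast at h hsq <;>
    interval_cases a <;> interval_cases t <;> first | rfl | omega

lemma exists_abs_two_mul_sub_add_one_le (t : ℤ) {a : ℤ} (ha : 0 < a) :
    ∃ j : ℤ, |2 * (t - j * a) + 1| ≤ a := by
  refine ⟨(2 * t + 1 + a) / (2 * a), ?_⟩
  have := Int.emod_add_mul_ediv (2 * t + 1 + a) (2 * a)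
  have := Int.emod_nonneg (2 * t + 1 + a) (by omega : 2 * a ≠ 0)
  have := Int.emod_lt_of_pos (2 * t + 1 + a) (by omega : 0 < 2 * a)
  rw [abs_le]
  constructor <;> nlinarith

lemma norm_mk_one (t : ℤ) : (⟨t, 1⟩ : NormFormRing k).norm = t ^ 2 + t + k := by
  rw [norm_normFormRing]
  ring

lemma norm_mk_one_pos (hk : 0 < k) (t : ℤ) : 0 < (⟨t, 1⟩ : NormFormRing k).norm := by
  rw [norm_mk_one]
  nlinarith [sq_nonneg (2 * t + 1)]

-- Gauss reduction: shift `t` modulo `a` to make `|2 * t + 1| ≤ a`; if the cofactor is then smaller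
-- than `a`, exchange the two.
lemma exists_mul_eq_mk_one_and_norm_eq (hk : k ∈ eulerLuckyNumbers) {a c t : ℤ} (ha : 0 < a)
    (h : (⟨t, 1⟩ : NormFormRing k).norm = a * c) :
    ∃ α β : NormFormRing k, α * β = ⟨t, 1⟩ ∧ α.norm = a := by
  have hk0 : 0 < k := two_pos.trans_le (two_le_of_mem_eulerLuckyNumbers hk)
  induction hN : a.toNat using Nat.strong_induction_on generalizing a c t with
  | _ N ih =>
    obtain ⟨j, hj⟩ := exists_abs_two_mul_sub_add_one_le t ha
    obtain ⟨d, hd⟩ : ∃ d, (⟨t - j * a, 1⟩ : NormFormRing k).norm = a * d := by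
      refine ⟨c - j * (2 * t + 1) + j ^ 2 * a, ?_⟩
      rw [norm_mk_one] at h ⊢
      linear_combination h
    have hd0 : 0 < d := pos_of_mul_pos_right (hd ▸ norm_mk_one_pos hk0 _) ha.le
    obtain ⟨α, β, hmul, hα⟩ : ∃ α β : NormFormRing k, α * β = ⟨t - j * a, 1⟩ ∧ α.norm = a := by
      rcases lt_or_ge d a with hda | hda
      · obtain ⟨α, β, hmul, hα⟩ := ih d.toNat (by omega) hd0 (hd.trans (mul_comm a d)) rfl
        refine ⟨β, α, (mul_comm β α).trans hmul, mul_left_cancel₀ hd0.ne' ?_⟩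
        rw [← hα, ← map_mul, hmul, hd, hα, mul_comm]
      · have ha1 := eq_one_of_reduced hk ha (norm_mk_one (k := k) _ ▸ hd) hj hda
        exact ⟨1, ⟨t - j * a, 1⟩, one_mul _, by rw [map_one, ha1]⟩
    refine ⟨α, β + j * star α, ?_, hα⟩
    rw [mul_add, mul_left_comm, hmul, ← algebraMap_norm_eq_mul_star, hα]
    ext <;> simp

lemma exists_norm_eq_of_dvd (hk : k ∈ eulerLuckyNumbers) (hp : 0 < p) {t : ℤ}
    (ht : (p : ℤ) ∣ t ^ 2 + t + k) : ∃ π : NormFormRing k, π.norm = p := by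
  obtain ⟨c, hc⟩ := ht
  obtain ⟨α, -, -, h⟩ :=
    exists_mul_eq_mk_one_and_norm_eq hk (by exact_mod_cast hp) ((norm_mk_one t).trans hc)
  exact ⟨α, h⟩

lemma algebraMap_dvd_of_dvd_norm {p : ℤ} (hp : Prime p) (hroot : ¬ ∃ t : ℤ, p ∣ t ^ 2 + t + k)
    {z : NormFormRing k} (hz : p ∣ z.norm) : algebraMap ℤ _ p ∣ z := by
  rw [algebraMap_dvd_iff]
  by_cases him : p ∣ z.im
  · exact ⟨dvd_re_of_dvd_norm_of_dvd_im hp hz him, him⟩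
  · obtain ⟨a, b, hab⟩ := (Prime.coprime_iff_not_dvd hp).mpr him
    have hquot : (z.re * b) ^ 2 + z.re * b + k =
        b ^ 2 * z.norm + p * (a * (z.re * b) + k * a * (1 + b * z.im)) := by
      rw [norm_normFormRing]
      linear_combination (-(z.re * b) - k - k * b * z.im) * hab
    exact absurd ⟨z.re * b, hquot ▸ dvd_add (hz.mul_left _) (dvd_mul_right _ _)⟩ hroot

lemma repCount_pow_mul_of_isNormFormSplit (hk : k ∈ eulerLuckyNumbers) (hp : IsNormFormSplit k p)
    {m : ℤ} (hm : ¬ (p : ℤ) ∣ m) (a : ℕ) : repCount k (p ^ a * m) = (a + 1) * repCount k m := by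
  obtain ⟨hprime, hne, t, ht⟩ := hp
  have hk0 : 0 < k := two_pos.trans_le (two_le_of_mem_eulerLuckyNumbers hk)
  obtain ⟨π, hπ⟩ := exists_norm_eq_of_dvd hk hprime.pos ht
  rw [← hπ] at hm ⊢
  have hπp : Prime π.norm := hπ ▸ Nat.prime_iff_prime_int.mp hprime
  refine repCount_norm_pow_mul_of_not_dvd_star hk0 hπp (not_dvd_star_of_not_dvd_discr hπp ?_) hm a
  rw [hπ, show (1 : ℤ) ^ 2 + 4 * -k = -(4 * k - 1 : ℕ) by rw [natCast_four_mul_sub_one hk0]; ring,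
    dvd_neg, Int.natCast_dvd_natCast]
  exact fun h => hne ((Nat.prime_dvd_prime_iff_eq hprime (prime_four_mul_sub_one hk)).mp h)

lemma repCount_pow_mul_four_mul_sub_one (hk : 0 < k) (hp : (4 * k - 1).Prime) (m : ℤ) (a : ℕ) :
    repCount k ((4 * k - 1 : ℕ) ^ a * m) = repCount k m := by
  have hnorm : (⟨-1, 2⟩ : NormFormRing k).norm = (4 * k - 1 : ℕ) := by
    rw [norm_normFormRing, natCast_four_mul_sub_one hk]
    ring
  rw [← hnorm]
  refine repCount_norm_pow_mul_of_star_eq_neg (hnorm ▸ Nat.prime_iff_prime_int.mp hp) ?_ m a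
  ext <;> simp

lemma repCount_pow_mul_of_not_isNormFormSplit (hk : 0 < k) (hp : p.Prime)
    (hns : ¬ IsNormFormSplit k p) {m : ℤ} (hm : ¬ (p : ℤ) ∣ m) (a : ℕ) :
    repCount k (p ^ a * m) = 0 ∨ repCount k (p ^ a * m) = repCount k m := by
  by_cases hdiscr : p = 4 * k - 1
  · subst hdiscr
    exact Or.inr (repCount_pow_mul_four_mul_sub_one hk hp m a)
  · have hprime := Nat.prime_iff_prime_int.mp hp
    exact repCount_pow_mul_eq_zero_or_of_forall_dvd hprime.ne_zero
      (fun _ => algebraMap_dvd_of_dvd_norm hprime fun ht => hns ⟨hp, hdiscr, ht⟩) hm a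

lemma prod_primeFactors_prime_pow_mul {M : Type*} [CommMonoid M] (g : ℕ → ℕ → M) {m a : ℕ}
    (hp : p.Prime) (ha : a ≠ 0) (hpm : ¬ p ∣ m) :
    ∏ r ∈ (p ^ a * m).primeFactors, g r ((p ^ a * m).factorization r) =
      g p a * ∏ r ∈ m.primeFactors, g r (m.factorization r) := by
  have hco : Nat.Coprime (p ^ a) m := ((Nat.Prime.coprime_iff_not_dvd hp).mpr hpm).pow_left a
  rw [hco.primeFactors_mul, Finset.prod_union hco.disjoint_primeFactors,
    Nat.primeFactors_prime_pow ha hp, Finset.prod_singleton,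
    Nat.factorization_eq_of_coprime_left hco (by simp [hp, hp.ne_zero, ha]), hp.factorization_pow,
    Finsupp.single_eq_same]
  congr 1
  exact Finset.prod_congr rfl fun r hr => by
    rw [Nat.factorization_eq_of_coprime_right hco
      (Nat.mem_primeFactors_iff_mem_primeFactorsList.mp hr)]

open Classical in
lemma repCount_eq_two_mul_prod (hk : k ∈ eulerLuckyNumbers) {n : ℕ} (hn : n ≠ 0) :
    repCount k n =
        2 * ∏ p ∈ n.primeFactors with IsNormFormSplit k p, (n.factorization p + 1) ∨
      repCount k n = 0 ∧ ∃ p ∈ n.primeFactors, ¬ IsNormFormSplit k p := by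
  have hk2 := two_le_of_mem_eulerLuckyNumbers hk
  rw [Finset.prod_filter]
  induction n using Nat.recOnPrimePow with
  | zero => exact absurd rfl hn
  | one => simp [repCount_one hk2]
  | prime_pow_mul m p a hp hpm ha ih =>
    have hm : ¬ (p : ℤ) ∣ m := by exact_mod_cast hpm
    have hsub : m.primeFactors ⊆ (p ^ a * m).primeFactors :=
      Nat.primeFactors_mono (dvd_mul_left m _) hn
    have hself : p ∈ (p ^ a * m).primeFactors :=
      hp.mem_primeFactors ((dvd_pow_self p ha.ne').mul_right m) hn
    rw [prod_primeFactors_prime_pow_mul (fun r v => if IsNormFormSplit k r then v + 1 else 1) hp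
      ha.ne' hpm, Nat.cast_mul, Nat.cast_pow]
    specialize ih (right_ne_zero_of_mul hn)
    by_cases hs : IsNormFormSplit k p
    · rw [repCount_pow_mul_of_isNormFormSplit hk hs hm, if_pos hs]
      rcases ih with ih | ⟨ih, r, hr, hrs⟩
      · left
        rw [ih, mul_left_comm]
      · exact Or.inr ⟨by rw [ih, mul_zero], r, hsub hr, hrs⟩
    · rw [if_neg hs, one_mul]
      rcases repCount_pow_mul_of_not_isNormFormSplit (by omega) hp hs hm a with h | h
      · exact Or.inr ⟨h, p, hself, hs⟩
      · rw [h]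
        exact ih.imp_right (And.imp_right fun ⟨r, hr, hrs⟩ => ⟨r, hsub hr, hrs⟩)

open Classical in
lemma fForm_eq_zero_or_eq_prod (hk : k ∈ eulerLuckyNumbers) {n : ℕ} (hn : n ≠ 0) :
    fForm k n = 0 ∨ fForm k n =
      ∏ p ∈ n.primeFactors with IsNormFormSplit k p, (n.factorization p + 1) := by
  rw [fForm_eq_repCount_div_two hn]
  rcases repCount_eq_two_mul_prod hk hn with h | ⟨h, -⟩
  · exact Or.inr (by rw [h, Nat.mul_div_cancel_left _ two_pos])
  · exact Or.inl (by rw [h, Nat.zero_div])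

lemma fForm_eq_prod (hk : k ∈ eulerLuckyNumbers) {n : ℕ} (hn : n ≠ 0)
    (hsplit : ∀ p ∈ n.primeFactors, IsNormFormSplit k p) :
    fForm k n = ∏ p ∈ n.primeFactors, (n.factorization p + 1) := by
  classical
  rw [fForm_eq_repCount_div_two hn]
  rcases repCount_eq_two_mul_prod hk hn with h | ⟨-, p, hp, hns⟩
  · rw [h, Finset.filter_true_of_mem hsplit, Nat.mul_div_cancel_left _ two_pos]
  · exact absurd (hsplit p hp) hns

end ClassNumberOne

/-! ### Split primes and quadratic reciprocity -/

section Reciprocity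

variable {k p : ℕ}

lemma exists_dvd_sq_add_add_iff_isSquare [Fact p.Prime] (hp : p ≠ 2) :
    (∃ t : ℤ, (p : ℤ) ∣ t ^ 2 + t + k) ↔ IsSquare ((1 - 4 * k : ℤ) : ZMod p) := by
  have : (2 : ZMod p) ≠ 0 :=
    Ring.two_ne_zero (by rwa [ZMod.ringChar_zmod_n])
  constructor
  · rintro ⟨t, ht⟩
    rw [← ZMod.intCast_zmod_eq_zero_iff_dvd] at ht
    push_cast at ht ⊢
    exact ⟨2 * t + 1, by linear_combination -4 * ht⟩
  · rintro ⟨s, hs⟩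
    obtain ⟨t, ht⟩ := ZMod.intCast_surjective ((s - 1) / 2)
    refine ⟨t, ?_⟩
    rw [← ZMod.intCast_zmod_eq_zero_iff_dvd]
    push_cast at hs ⊢
    rw [ht]
    field_simp
    linear_combination -hs

lemma exists_two_dvd_sq_add_add_iff : (∃ t : ℤ, (2 : ℤ) ∣ t ^ 2 + t + k) ↔ 2 ∣ k := by
  refine ⟨fun ⟨t, ht⟩ => ?_, fun h => ⟨0, by simpa using Int.natCast_dvd_natCast.mpr h⟩⟩
  have heven : (2 : ℤ) ∣ t ^ 2 + t := by
    rw [show t ^ 2 + t = t * (t + 1) by ring]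
    exact (Int.even_mul_succ_self t).two_dvd
  exact_mod_cast (dvd_add_right heven).mp ht

lemma exists_two_dvd_iff_quadraticChar_eq_one [Fact (4 * k - 1).Prime] (hk : 2 ≤ k) :
    (∃ t : ℤ, (2 : ℤ) ∣ t ^ 2 + t + k) ↔
      quadraticChar (ZMod (4 * k - 1)) ((2 : ℕ) : ZMod (4 * k - 1)) = 1 := by
  have h2 : ((2 : ℕ) : ZMod (4 * k - 1)) ≠ 0 := by
    rw [Ne, ZMod.natCast_eq_zero_iff]
    exact fun h => by have := Nat.le_of_dvd two_pos h; omega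
  rw [exists_two_dvd_sq_add_add_iff, quadraticChar_one_iff_isSquare h2, Nat.cast_two,
    ZMod.exists_sq_eq_two_iff (by omega)]
  omega

lemma exists_dvd_iff_quadraticChar_eq_one [Fact (4 * k - 1).Prime] [Fact p.Prime] (hk : 0 < k)
    (hp2 : p ≠ 2) (hne : p ≠ 4 * k - 1) :
    (∃ t : ℤ, (p : ℤ) ∣ t ^ 2 + t + k) ↔
      quadraticChar (ZMod (4 * k - 1)) (p : ZMod (4 * k - 1)) = 1 := by
  have hp : p.Prime := Fact.out
  have hdiscr : (1 - 4 * k : ℤ) = -1 * ((4 * k - 1 : ℕ) : ℤ) := by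
    rw [natCast_four_mul_sub_one hk]
    ring
  have hdiscr0 : ((1 - 4 * k : ℤ) : ZMod p) ≠ 0 := by
    rw [Ne, ZMod.intCast_zmod_eq_zero_iff_dvd, hdiscr, neg_one_mul, dvd_neg,
      Int.natCast_dvd_natCast, Nat.prime_dvd_prime_iff_eq hp Fact.out]
    exact hne
  have hchar : quadraticChar (ZMod (4 * k - 1)) (p : ZMod (4 * k - 1)) =
      legendreSym (4 * k - 1) p := by simp [legendreSym]
  rw [exists_dvd_sq_add_add_iff_isSquare hp2, ← legendreSym.eq_one_iff p hdiscr0, hdiscr,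
    legendreSym.mul, legendreSym.at_neg_one hp2, hchar]
  rcases (by have := hp.eq_two_or_odd; omega : p % 4 = 1 ∨ p % 4 = 3) with h4 | h4
  · rw [ZMod.χ₄_nat_one_mod_four h4, one_mul,
      legendreSym.quadratic_reciprocity_one_mod_four h4 (by omega)]
  · rw [ZMod.χ₄_nat_three_mod_four h4,
      legendreSym.quadratic_reciprocity_three_mod_four h4 (by omega), neg_one_mul]

lemma isNormFormSplit_iff_quadraticChar_eq_one [Fact (4 * k - 1).Prime] (hk : 2 ≤ k)
    (hp : p.Prime) :
    IsNormFormSplit k p ↔ quadraticChar (ZMod (4 * k - 1)) (p : ZMod (4 * k - 1)) = 1 := by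
  by_cases hne : p = 4 * k - 1
  · subst hne
    simp [IsNormFormSplit]
  have : Fact p.Prime := ⟨hp⟩
  rw [IsNormFormSplit, and_iff_right hp, and_iff_right hne]
  by_cases hp2 : p = 2
  · subst hp2
    exact exists_two_dvd_iff_quadraticChar_eq_one hk
  · exact exists_dvd_iff_quadraticChar_eq_one (by omega) hp2 hne

lemma hasHalfPrimeDensity_isNormFormSplit (hk : 2 ≤ k) (hprime : (4 * k - 1).Prime) :
    HasHalfPrimeDensity (IsNormFormSplit k) := by
  have : Fact (4 * k - 1).Prime := ⟨hprime⟩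
  have : NeZero (4 * k - 1) := ⟨hprime.ne_zero⟩
  set χ : DirichletCharacter ℂ (4 * k - 1) :=
    (quadraticChar (ZMod (4 * k - 1))).ringHomComp (Int.castRingHom ℂ)
  have hinj : Function.Injective (Int.castRingHom ℂ) := Int.cast_injective
  have hχ : χ ≠ 1 := by
    rw [Ne, MulChar.ringHomComp_eq_one_iff hinj]
    refine quadraticChar_ne_one ?_
    rw [ZMod.ringChar_zmod_n]
    omega
  have hχ2 : χ ^ 2 = 1 := ((quadraticChar_isQuadratic (ZMod (4 * k - 1))).comp _).sq_eq_one
  have hsplit : IsNormFormSplit k = IsSplitPrime χ := by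
    ext p
    by_cases hp : p.Prime
    · rw [isNormFormSplit_iff_quadraticChar_eq_one hk hp, IsSplitPrime, and_iff_right hp,
        MulChar.ringHomComp_apply, ← map_one (Int.castRingHom ℂ), hinj.eq_iff]
    · simp [IsNormFormSplit, IsSplitPrime, hp]
  rw [hsplit]
  exact hasHalfPrimeDensity_isSplitPrime hχ hχ2

end Reciprocity

/-! ### The increments of `log (1 + b)` -/

section LogIncrement

/-- The increment `log (l + 2) - log (l + 1)`, i.e. what raising an exponent from `l` to `l + 1`
contributes to the logarithm of the divisor-like product `∏ (1 + b q)`. -/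
noncomputable def logIncrement (l : ℕ) : ℝ := Real.log (1 + 1 / ((l : ℝ) + 1))

/-- The series `∑_{l ≥ 1} (log (1 + 1 / l))²`, so that `cBEFS = √(8 * logIncrementSqSum)`. -/
noncomputable def logIncrementSqSum : ℝ := ∑' l : ℕ, logIncrement l ^ 2

lemma logIncrement_pos (l : ℕ) : 0 < logIncrement l :=
  Real.log_pos (lt_add_of_pos_right 1 (by positivity))

lemma logIncrement_le_one_div (l : ℕ) : logIncrement l ≤ 1 / ((l : ℝ) + 1) := by
  have := Real.log_le_sub_one_of_pos (show (0 : ℝ) < 1 + 1 / ((l : ℝ) + 1) by positivity)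
  rwa [add_sub_cancel_left] at this

lemma logIncrement_le_one (l : ℕ) : logIncrement l ≤ 1 :=
  (logIncrement_le_one_div l).trans <|
    div_le_one_of_le₀ (le_add_of_nonneg_left l.cast_nonneg) (by positivity)

lemma logIncrement_eq_log_sub_log (l : ℕ) :
    logIncrement l = Real.log ((l : ℝ) + 2) - Real.log ((l : ℝ) + 1) := by
  rw [← Real.log_div (by positivity) (by positivity), logIncrement]
  congr 1
  field_simp
  ring

lemma one_div_le_logIncrement (l : ℕ) : 1 / ((l : ℝ) + 2) ≤ logIncrement l := by
  have hlog := Real.log_le_sub_one_of_pos (show (0 : ℝ) < ((l : ℝ) + 1) / (l + 2) by positivity)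
  rw [Real.log_div (by positivity) (by positivity)] at hlog
  have : ((l : ℝ) + 1) / (l + 2) = 1 - 1 / (l + 2) := by field_simp; ring
  linarith [logIncrement_eq_log_sub_log l]

lemma logIncrement_antitone : Antitone logIncrement := fun a b hab => by
  have : (a : ℝ) ≤ b := by exact_mod_cast hab
  exact Real.log_le_log (by positivity) (by gcongr)

lemma sum_range_logIncrement (b : ℕ) :
    ∑ l ∈ Finset.range b, logIncrement l = Real.log (1 + b) := by
  have htelescope := Finset.sum_range_sub (fun l : ℕ => Real.log ((l : ℝ) + 1)) b
  simp only [Nat.cast_zero, zero_add, Real.log_one, sub_zero] at htelescope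
  rw [add_comm (1 : ℝ), ← htelescope]
  refine Finset.sum_congr rfl fun l _ => ?_
  rw [logIncrement_eq_log_sub_log, Nat.cast_add_one, add_assoc, one_add_one_eq_two]

lemma logIncrement_sq_le (l : ℕ) : logIncrement l ^ 2 ≤ 1 / ((l : ℝ) + 1) ^ 2 := by
  simpa only [div_pow, one_pow] using
    pow_le_pow_left₀ (logIncrement_pos l).le (logIncrement_le_one_div l) 2

lemma summable_logIncrement_sq : Summable fun l => logIncrement l ^ 2 := by
  refine Summable.of_nonneg_of_le (fun l => sq_nonneg _) logIncrement_sq_le ?_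
  simpa using (summable_nat_add_iff 1).mpr (Real.summable_one_div_nat_pow.mpr one_lt_two)

lemma sum_Ico_logIncrement_sq_le {N : ℕ} (hN : 1 ≤ N) (M : ℕ) :
    ∑ l ∈ Finset.Ico N M, logIncrement l ^ 2 ≤ 1 / (N : ℝ) := by
  rcases le_or_gt M N with hMN | hNM
  · rw [Finset.Ico_eq_empty hMN.not_gt, Finset.sum_empty]
    positivity
  suffices htelescope : ∑ l ∈ Finset.Ico N M, logIncrement l ^ 2 ≤ 1 / (N : ℝ) - 1 / M from
    htelescope.trans (sub_le_self _ (by positivity))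
  induction M, hNM.le using Nat.le_induction with
  | base => simp
  | succ m hm ih =>
    have hmpos : (0 : ℝ) < m := by exact_mod_cast hN.trans hm
    have hstep : 1 / ((m : ℝ) + 1) ^ 2 ≤ 1 / (m : ℝ) - 1 / ((m : ℝ) + 1) := by
      rw [div_sub_div _ _ hmpos.ne' (by positivity),
        div_le_div_iff₀ (by positivity) (by positivity)]
      nlinarith
    rcases hm.eq_or_lt with rfl | hlt
    · simpa using (logIncrement_sq_le N).trans hstep
    · rw [Finset.sum_Ico_succ_top hm, Nat.cast_add_one]
      linarith [ih hlt, logIncrement_sq_le m]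

lemma sum_range_logIncrement_sq_le (N : ℕ) :
    ∑ l ∈ Finset.range N, logIncrement l ^ 2 ≤ logIncrementSqSum :=
  summable_logIncrement_sq.sum_le_tsum _ fun _ _ => sq_nonneg _

lemma logIncrementSqSum_pos : 0 < logIncrementSqSum :=
  summable_logIncrement_sq.tsum_pos (fun _ => sq_nonneg _) 0 (pow_pos (logIncrement_pos 0) 2)

lemma logIncrementSqSum_le_sum_range_add {N : ℕ} (hN : 1 ≤ N) :
    logIncrementSqSum ≤ ∑ l ∈ Finset.range N, logIncrement l ^ 2 + 1 / (N : ℝ) := by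
  refine Real.tsum_le_of_sum_range_le (fun _ => sq_nonneg _) fun M => ?_
  calc ∑ l ∈ Finset.range M, logIncrement l ^ 2
      ≤ ∑ l ∈ Finset.range (max N M), logIncrement l ^ 2 :=
        Finset.sum_le_sum_of_subset_of_nonneg (Finset.range_mono (le_max_right N M))
          fun _ _ _ => sq_nonneg _
    _ = ∑ l ∈ Finset.range N, logIncrement l ^ 2 +
          ∑ l ∈ Finset.Ico N (max N M), logIncrement l ^ 2 :=
        (Finset.sum_range_add_sum_Ico _ (le_max_left N M)).symm
    _ ≤ _ := by gcongr; exact sum_Ico_logIncrement_sq_le hN _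

end LogIncrement

section SmoothedCount

variable {P : ℕ → Prop} {z : ℝ}

lemma smoothedCount_nonneg : 0 ≤ smoothedCount P z := by
  classical
  exact Finset.sum_nonneg fun _ hp =>
    sub_nonneg.mpr (cast_le_of_mem_Icc_one_floor (Finset.mem_filter.mp hp).1)

lemma smoothedCount_le_sq (hz : 0 ≤ z) : smoothedCount P z ≤ z ^ 2 := by
  classical
  calc smoothedCount P z ≤ ∑ p ∈ Finset.Icc 1 ⌊z⌋₊, (z - p) :=
        Finset.sum_le_sum_of_subset_of_nonneg (Finset.filter_subset _ _) fun p hp _ =>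
          sub_nonneg.mpr (cast_le_of_mem_Icc_one_floor hp)
    _ ≤ ∑ _p ∈ Finset.Icc 1 ⌊z⌋₊, z :=
        Finset.sum_le_sum fun p _ => sub_le_self z p.cast_nonneg
    _ = ⌊z⌋₊ * z := by simp
    _ ≤ z ^ 2 := by rw [sq]; gcongr; exact Nat.floor_le hz

lemma smoothedCount_eq_zero (hP : ∀ p, P p → 2 ≤ p) (hz : z < 2) : smoothedCount P z = 0 := by
  classical
  refine Finset.sum_eq_zero fun p hp => ?_
  obtain ⟨hpz, hp⟩ := Finset.mem_filter.mp hp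
  have : (2 : ℝ) ≤ p := by exact_mod_cast hP p hp
  linarith [cast_le_of_mem_Icc_one_floor hpz]

variable {u : ℝ}

lemma log_mem_Icc_of_exp_div_pow_le_of_le_exp_mul_pow (hu : 0 < u)
    (hlow : Real.exp u / u ^ 3 ≤ z) (hupp : z ≤ Real.exp u * u ^ 5) :
    Real.log z ∈ Set.Icc (u - 3 * Real.log u) (u + 5 * Real.log u) := by
  have hz : 0 < z := lt_of_lt_of_le (by positivity) hlow
  constructor
  · have := Real.log_le_log (by positivity) hlow
    rw [Real.log_div (by positivity) (by positivity), Real.log_exp, Real.log_pow] at this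
    exact_mod_cast this
  · have := Real.log_le_log hz hupp
    rw [Real.log_mul (by positivity) (by positivity), Real.log_exp, Real.log_pow] at this
    exact_mod_cast this

lemma abs_sq_div_sub_sq_div_le {w g : ℝ} (hu : 0 < u) (hwu : u / 2 ≤ w) (hg : |u - w| ≤ 5 * g) :
    |z ^ 2 / (4 * w) - z ^ 2 / (4 * u)| ≤ 5 * z ^ 2 * (g / u ^ 2) := by
  have hw : 0 < w := by linarith
  have hg0 : 0 ≤ 5 * g := (abs_nonneg _).trans hg
  have hdiff : z ^ 2 / (4 * w) - z ^ 2 / (4 * u) = z ^ 2 * ((u - w) / (4 * w * u)) := by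
    field_simp
  rw [hdiff, abs_mul, abs_of_nonneg (sq_nonneg z), abs_div,
    abs_of_pos (by positivity : 0 < 4 * w * u)]
  calc z ^ 2 * (|u - w| / (4 * w * u)) ≤ z ^ 2 * (5 * g / u ^ 2) := by
        gcongr
        nlinarith
    _ = 5 * z ^ 2 * (g / u ^ 2) := by ring

lemma log_div_sq_le {w : ℝ} (hu : 2 ≤ u) (hwu : u / 2 ≤ w) (hwu' : w ≤ 2 * u) :
    Real.log w / w ^ 2 ≤ 8 * (Real.log u / u ^ 2) := by
  have hlog : Real.log w ≤ 2 * Real.log u := by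
    have := Real.log_le_log (by linarith) hwu'
    rw [Real.log_mul (by norm_num) (by positivity)] at this
    linarith [Real.log_le_log (by norm_num) hu]
  calc Real.log w / w ^ 2 ≤ 2 * Real.log u / (u / 2) ^ 2 := by
        have := Real.log_nonneg (by linarith : 1 ≤ u)
        gcongr
    _ = 8 * (Real.log u / u ^ 2) := by field_simp; ring

-- On the window `[e ^ u / u ^ 3, e ^ u * u ^ 5]` the logarithm of `z` may be replaced by `u` within
-- the error term that is allowed anyway.
lemma HasHalfPrimeDensity.eventually_abs_smoothedCount_sub_le (hP : HasHalfPrimeDensity P) :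
    ∃ C > 0, ∀ᶠ u : ℝ in atTop, ∀ z : ℝ, Real.exp u / u ^ 3 ≤ z → z ≤ Real.exp u * u ^ 5 →
      |smoothedCount P z - z ^ 2 / (4 * u)| ≤ C * z ^ 2 * (Real.log u / u ^ 2) := by
  obtain ⟨C, hC, z₀, hdensity⟩ := hP
  refine ⟨C * 8 + 5, by linarith, ?_⟩
  filter_upwards [eventually_log_bounds (|z₀| + 10)] with u ⟨hu, hlogu, hlogu', hexp⟩ z hlow hupp
  replace hu : 10 ≤ u := by linarith [abs_nonneg z₀]
  have hz₀ : z₀ ≤ z := by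
    refine le_trans ?_ hlow
    rw [le_div_iff₀ (by positivity)]
    calc z₀ * u ^ 3 ≤ (|z₀| + 10) * u ^ 9 := by
          have : z₀ ≤ |z₀| + 10 := by linarith [le_abs_self z₀]
          gcongr
          · linarith
          · norm_num
      _ ≤ Real.exp u := hexp
  replace hlogu : 10 ≤ Real.log u := by linarith [abs_nonneg z₀]
  replace hlogu' : 10 * Real.log u ≤ u := by nlinarith [abs_nonneg z₀]
  obtain ⟨hlogz, hlogz'⟩ := log_mem_Icc_of_exp_div_pow_le_of_le_exp_mul_pow (by linarith) hlow hupp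
  have hclose : |u - Real.log z| ≤ 5 * Real.log u := by rw [abs_le]; constructor <;> linarith
  calc |smoothedCount P z - z ^ 2 / (4 * u)|
      ≤ |smoothedCount P z - z ^ 2 / (4 * Real.log z)| +
          |z ^ 2 / (4 * Real.log z) - z ^ 2 / (4 * u)| := abs_sub_le _ _ _
    _ ≤ C * z ^ 2 * (8 * (Real.log u / u ^ 2)) + 5 * z ^ 2 * (Real.log u / u ^ 2) := by
        refine add_le_add ((hdensity z hz₀).trans ?_)
          (abs_sq_div_sub_sq_div_le (by linarith) (by linarith) hclose)
        gcongr
        exact log_div_sq_le (by linarith) (by linarith) (by linarith)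
    _ = (C * 8 + 5) * z ^ 2 * (Real.log u / u ^ 2) := by ring

end SmoothedCount

/-! ### The dual of the exponent knapsack -/

section KnapsackDual

variable {P : ℕ → Prop} {μ s u : ℝ}

/-- The Lagrangian dual value, at price `μ` per unit of weight, of the knapsack whose items are the
pairs `(l, q)` with `l < N` and `P q`, of profit `logIncrement l` and weight `q - 1`: the sum of
`max (logIncrement l - μ * (q - 1)) 0` over all items, with the sum over `q` carried out. -/
noncomputable def knapsackDual (P : ℕ → Prop) (N : ℕ) (μ : ℝ) : ℝ :=
  ∑ l ∈ Finset.range N, μ * smoothedCount P (logIncrement l / μ + 1)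

lemma max_sub_mul_sub_one_zero (hμ : 0 < μ) (a q : ℝ) :
    max (a - μ * (q - 1)) 0 = μ * max (a / μ + 1 - q) 0 := by
  rw [mul_max_of_nonneg _ _ hμ.le, mul_zero]
  congr 1
  field_simp
  ring

lemma mul_smoothedCount_le_four_div_mul_sq (hP : ∀ p, P p → 2 ≤ p) (hμ : 0 < μ) {a : ℝ}
    (ha : 0 ≤ a) : μ * smoothedCount P (a / μ + 1) ≤ 4 / μ * a ^ 2 := by
  rcases lt_or_ge (a / μ + 1) 2 with hlt | hge
  · rw [smoothedCount_eq_zero hP hlt, mul_zero]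
    positivity
  · calc μ * smoothedCount P (a / μ + 1) ≤ μ * (2 * (a / μ)) ^ 2 := by
          gcongr
          refine (smoothedCount_le_sq (by positivity)).trans ?_
          gcongr
          linarith
      _ = 4 / μ * a ^ 2 := by field_simp; ring

lemma knapsackDual_le_add_sum_Ico (hμ : 0 ≤ μ) (N M : ℕ) :
    knapsackDual P M μ ≤ knapsackDual P N μ +
      ∑ l ∈ Finset.Ico N (max N M), μ * smoothedCount P (logIncrement l / μ + 1) := by
  rw [knapsackDual, knapsackDual, Finset.sum_range_add_sum_Ico _ (le_max_left N M)]
  exact Finset.sum_le_sum_of_subset_of_nonneg (Finset.range_mono (le_max_right N M))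
    fun l _ _ => mul_nonneg hμ smoothedCount_nonneg

lemma knapsackDual_le_of_smoothedCount_le (hP : ∀ p, P p → 2 ≤ p) (hμ : 0 < μ) (hμ1 : μ ≤ 1)
    {N : ℕ} (hN : 1 ≤ N) {D : ℝ} (hD : 0 ≤ D)
    (hcount : ∀ l < N, smoothedCount P (logIncrement l / μ + 1) ≤ D * (logIncrement l / μ + 1) ^ 2)
    (M : ℕ) : knapsackDual P M μ ≤ D * (logIncrementSqSum / μ + 3 * N) + 4 / μ * (1 / N) := by
  refine (knapsackDual_le_add_sum_Ico hμ.le N M).trans (add_le_add ?_ ?_)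
  · calc knapsackDual P N μ ≤ ∑ l ∈ Finset.range N, D * (logIncrement l ^ 2 / μ + 3) := by
          refine Finset.sum_le_sum fun l hl => ?_
          calc μ * smoothedCount P (logIncrement l / μ + 1)
              ≤ μ * (D * (logIncrement l / μ + 1) ^ 2) := by
                gcongr
                exact hcount l (Finset.mem_range.mp hl)
            _ = D * (logIncrement l ^ 2 / μ + (2 * logIncrement l + μ)) := by field_simp; ring
            _ ≤ D * (logIncrement l ^ 2 / μ + 3) := by
                gcongr
                linarith [logIncrement_le_one l]
      _ = D * ((∑ l ∈ Finset.range N, logIncrement l ^ 2) / μ + 3 * N) := by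
          rw [← Finset.mul_sum, Finset.sum_add_distrib, Finset.sum_div, Finset.sum_const,
            Finset.card_range, nsmul_eq_mul, mul_comm (N : ℝ)]
      _ ≤ D * (logIncrementSqSum / μ + 3 * N) := by
          gcongr
          exact sum_range_logIncrement_sq_le N
  · calc ∑ l ∈ Finset.Ico N (max N M), μ * smoothedCount P (logIncrement l / μ + 1)
        ≤ ∑ l ∈ Finset.Ico N (max N M), 4 / μ * logIncrement l ^ 2 :=
          Finset.sum_le_sum fun l _ =>
            mul_smoothedCount_le_four_div_mul_sq hP hμ (logIncrement_pos l).le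
      _ ≤ 4 / μ * (1 / N) := by
          rw [← Finset.mul_sum]
          gcongr
          exact sum_Ico_logIncrement_sq_le hN _

lemma le_knapsackDual_of_le_smoothedCount (hμ : 0 < μ) {N : ℕ} (hN : 1 ≤ N) {E : ℝ} (hE : 0 ≤ E)
    (hcount : ∀ l < N,
      E * (logIncrement l / μ + 1) ^ 2 ≤ smoothedCount P (logIncrement l / μ + 1)) :
    E / μ * (logIncrementSqSum - 1 / N) ≤ knapsackDual P N μ := by
  calc E / μ * (logIncrementSqSum - 1 / N)
      ≤ E / μ * ∑ l ∈ Finset.range N, logIncrement l ^ 2 := by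
        gcongr
        linarith [logIncrementSqSum_le_sum_range_add hN]
    _ = ∑ l ∈ Finset.range N, μ * (E * (logIncrement l / μ) ^ 2) := by
        rw [Finset.mul_sum]
        refine Finset.sum_congr rfl fun l _ => ?_
        field_simp
    _ ≤ knapsackDual P N μ := by
        refine Finset.sum_le_sum fun l hl => ?_
        refine mul_le_mul_of_nonneg_left (le_trans ?_ (hcount l (Finset.mem_range.mp hl))) hμ.le
        have := logIncrement_pos l
        gcongr
        linarith

lemma knapsackDual_le_of_abs_smoothedCount_sub_le (hP : ∀ p, P p → 2 ≤ p) (hμ : 0 < μ)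
    (hμ1 : μ ≤ 1) {N : ℕ} (hN : 1 ≤ N) {ε : ℝ} (hε : 0 ≤ ε) (hu : 0 < u)
    (hεu : 1 / (4 * u) + ε ≤ 1)
    (hcount : ∀ l < N, |smoothedCount P (logIncrement l / μ + 1) -
      (logIncrement l / μ + 1) ^ 2 / (4 * u)| ≤ ε * (logIncrement l / μ + 1) ^ 2) (M : ℕ) :
    knapsackDual P M μ ≤ logIncrementSqSum / (4 * u * μ) + ε * (logIncrementSqSum / μ) + 3 * N +
      4 / μ * (1 / N) := by
  have hdual := knapsackDual_le_of_smoothedCount_le hP hμ hμ1 hN (D := 1 / (4 * u) + ε)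
    (by positivity) (fun l hl => by linear_combination (abs_le.mp (hcount l hl)).2) M
  have hN3 : (1 / (4 * u) + ε) * (3 * N) ≤ 3 * N := mul_le_of_le_one_left (by positivity) hεu
  have hmain : 1 / (4 * u) * (logIncrementSqSum / μ) = logIncrementSqSum / (4 * u * μ) := by
    field_simp
  linear_combination hdual + hN3 + hmain

lemma le_knapsackDual_of_abs_smoothedCount_sub_le (hμ : 0 < μ) {N : ℕ} (hN : 1 ≤ N) {ε : ℝ}
    (hε : 0 ≤ ε) (hu : 1 ≤ u) (hεu : ε ≤ 1 / (4 * u))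
    (hcount : ∀ l < N, |smoothedCount P (logIncrement l / μ + 1) -
      (logIncrement l / μ + 1) ^ 2 / (4 * u)| ≤ ε * (logIncrement l / μ + 1) ^ 2) :
    logIncrementSqSum / (4 * u * μ) - ε * (logIncrementSqSum / μ) - 1 / μ * (1 / N) ≤
      knapsackDual P N μ := by
  have hdual := le_knapsackDual_of_le_smoothedCount hμ hN (E := 1 / (4 * u) - ε)
    (sub_nonneg.mpr hεu) fun l hl => by linear_combination (abs_le.mp (hcount l hl)).1
  have hE : (1 / (4 * u) - ε) * (1 / μ * (1 / N)) ≤ 1 / μ * (1 / N) := by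
    refine mul_le_of_le_one_left (by positivity) ?_
    have : 1 / (4 * u) ≤ 1 := by rw [div_le_one (by positivity)]; linarith
    linarith
  have hmain : logIncrementSqSum / (4 * u * μ) = 1 / (4 * u) * (logIncrementSqSum / μ) := by
    field_simp
  linear_combination hdual + hE + hmain

lemma one_div_le_logIncrement_of_lt_ceil {l : ℕ} (hu : 2 ≤ u) (hl : l < ⌈u ^ 2⌉₊) :
    1 / (2 * u ^ 2) ≤ logIncrement l := by
  refine le_trans ?_ (one_div_le_logIncrement l)
  have : (l : ℝ) < u ^ 2 := Nat.lt_ceil.mp hl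
  gcongr
  nlinarith

lemma exp_div_pow_le_logIncrement_div_add_one {l : ℕ} (hs : 0 < s) (hu : 2 ≤ u) (hsu : 4 * s ≤ u)
    (hμ : 0 < μ) (hμupp : μ ≤ 2 * s / Real.exp u) (hl : l < ⌈u ^ 2⌉₊) :
    Real.exp u / u ^ 3 ≤ logIncrement l / μ + 1 := by
  calc Real.exp u / u ^ 3 ≤ Real.exp u / (4 * s * u ^ 2) := by
        rw [pow_succ' u 2]
        gcongr
    _ = 1 / (2 * u ^ 2) / (2 * s / Real.exp u) := by field_simp; ring
    _ ≤ logIncrement l / μ := by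
        have := one_div_le_logIncrement_of_lt_ceil hu hl
        have := logIncrement_pos l
        gcongr
    _ ≤ logIncrement l / μ + 1 := le_add_of_nonneg_right zero_le_one

lemma one_div_le_of_div_exp_le (hs : 0 < s) (hμ : s / (8 * Real.exp u) ≤ μ) :
    1 / μ ≤ 8 / s * Real.exp u := by
  calc 1 / μ ≤ 1 / (s / (8 * Real.exp u)) := one_div_le_one_div_of_le (by positivity) hμ
    _ = 8 / s * Real.exp u := by field_simp

lemma logIncrement_div_add_one_le_exp_mul_pow (l : ℕ) (hs : 0 < s) (hsu : 8 / s + 1 ≤ u)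
    (hμlow : s / (8 * Real.exp u) ≤ μ) : logIncrement l / μ + 1 ≤ Real.exp u * u ^ 5 := by
  have hu : 1 ≤ u := le_trans (le_add_of_nonneg_left (by positivity)) hsu
  have hμ : 0 < μ := lt_of_lt_of_le (by positivity) hμlow
  calc logIncrement l / μ + 1 ≤ 8 / s * Real.exp u + Real.exp u := by
        refine add_le_add (le_trans ?_ (one_div_le_of_div_exp_le hs hμlow))
          (Real.one_le_exp (by linarith))
        gcongr
        exact logIncrement_le_one l
    _ = Real.exp u * (8 / s + 1) := by ring
    _ ≤ Real.exp u * u ^ 5 := by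
        gcongr
        exact hsu.trans (le_self_pow₀ hu (by norm_num))

lemma HasHalfPrimeDensity.eventually_abs_smoothedCount_logIncrement_sub_le
    (hP : HasHalfPrimeDensity P) (hs : 0 < s) :
    ∃ C > 0, ∀ᶠ u : ℝ in atTop, ∀ μ : ℝ, s / (8 * Real.exp u) ≤ μ → μ ≤ 2 * s / Real.exp u →
      ∀ l < ⌈u ^ 2⌉₊, |smoothedCount P (logIncrement l / μ + 1) -
        (logIncrement l / μ + 1) ^ 2 / (4 * u)| ≤
          C * (logIncrement l / μ + 1) ^ 2 * (Real.log u / u ^ 2) := by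
  obtain ⟨C, hC, hwindow⟩ := hP.eventually_abs_smoothedCount_sub_le
  refine ⟨C, hC, ?_⟩
  filter_upwards [hwindow, eventually_ge_atTop 2, eventually_ge_atTop (4 * s),
    eventually_ge_atTop (8 / s + 1)] with u hwindow hu2 hsu hsu' μ hμlow hμupp l hl
  exact hwindow _
    (exp_div_pow_le_logIncrement_div_add_one hs hu2 hsu (lt_of_lt_of_le (by positivity) hμlow)
      hμupp hl)
    (logIncrement_div_add_one_le_exp_mul_pow l hs hsu' hμlow)

lemma sq_le_exp_mul_log_div_sq (hu : 1 ≤ u) (hlogu : 1 ≤ Real.log u) (hexp : u ^ 9 ≤ Real.exp u) :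
    u ^ 2 ≤ Real.exp u * (Real.log u / u ^ 2) := by
  rw [mul_div_assoc', le_div_iff₀ (by positivity)]
  calc u ^ 2 * u ^ 2 = u ^ 4 := by ring
    _ ≤ u ^ 9 := pow_le_pow_right₀ hu (by norm_num)
    _ ≤ Real.exp u := hexp
    _ ≤ Real.exp u * Real.log u := le_mul_of_one_le_right (Real.exp_pos u).le hlogu

lemma one_div_ceil_sq_le_log_div_sq (hu : 0 < u) (hlogu : 1 ≤ Real.log u) :
    1 / (⌈u ^ 2⌉₊ : ℝ) ≤ Real.log u / u ^ 2 := by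
  have := Nat.le_ceil (u ^ 2)
  gcongr

lemma sqrt_logIncrementSqSum_pos : 0 < √logIncrementSqSum :=
  Real.sqrt_pos.mpr logIncrementSqSum_pos

lemma one_div_add_mul_log_div_sq_le_one {C : ℝ} (hC : 0 ≤ C) (hu : 0 < u) (hCu : 1 + C ≤ u) :
    1 / (4 * u) + C * (Real.log u / u ^ 2) ≤ 1 := by
  calc 1 / (4 * u) + C * (Real.log u / u ^ 2) ≤ 1 / u + C * (u / u ^ 2) := by
        gcongr
        · linarith
        · exact Real.log_le_self hu.le
    _ = (1 + C) / u := by field_simp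
    _ ≤ 1 := by rwa [div_le_one hu]

lemma four_div_mul_one_div_ceil_sq_le (hs : 0 < s) (hu : 0 < u) (hlogu : 1 ≤ Real.log u) :
    4 / (s / (2 * Real.exp u)) * (1 / ⌈u ^ 2⌉₊) ≤ 8 / s * (Real.exp u * (Real.log u / u ^ 2)) := by
  calc 4 / (s / (2 * Real.exp u)) * (1 / ⌈u ^ 2⌉₊)
      ≤ 4 / (s / (2 * Real.exp u)) * (Real.log u / u ^ 2) :=
        mul_le_mul_of_nonneg_left (one_div_ceil_sq_le_log_div_sq hu hlogu) (by positivity)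
    _ = 8 / s * (Real.exp u * (Real.log u / u ^ 2)) := by field_simp; ring

-- The price `√S / (2 * e ^ u)` minimises `μ * e ^ (2 * u) / u + S / (4 * u * μ)`, the main term of
-- the weak duality bound.
lemma HasHalfPrimeDensity.eventually_knapsackDual_le (hP : HasHalfPrimeDensity P)
    (hP2 : ∀ p, P p → 2 ≤ p) :
    ∃ C > 0, ∀ᶠ u : ℝ in atTop, ∀ M : ℕ,
      knapsackDual P M (√logIncrementSqSum / (2 * Real.exp u)) ≤
        √logIncrementSqSum * Real.exp u / (2 * u) + C * (Real.exp u * (Real.log u / u ^ 2)) := by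
  have hs := sqrt_logIncrementSqSum_pos
  have hsq : √logIncrementSqSum ^ 2 = logIncrementSqSum := Real.sq_sqrt logIncrementSqSum_pos.le
  obtain ⟨C, hC, hcount⟩ := hP.eventually_abs_smoothedCount_logIncrement_sub_le hs
  set s := √logIncrementSqSum
  refine ⟨2 * C * s + 6 + 8 / s, by positivity, ?_⟩
  filter_upwards [hcount, eventually_log_bounds (2 + s + C)]
    with u hcount ⟨hu, hlogu, _, hexp⟩ M
  have hu0 : 0 < u := by linarith
  have hlogu0 : 0 ≤ Real.log u := by linarith
  replace hexp : u ^ 9 ≤ Real.exp u :=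
    (le_mul_of_one_le_left (by positivity) (by linarith)).trans hexp
  have hdual := knapsackDual_le_of_abs_smoothedCount_sub_le hP2 (μ := s / (2 * Real.exp u))
    (by positivity) (by rw [div_le_one (by positivity)]; linarith [Real.add_one_le_exp u])
    (N := ⌈u ^ 2⌉₊) (Nat.one_le_ceil_iff.mpr (by positivity))
    (ε := C * (Real.log u / u ^ 2)) (by positivity) hu0
    (one_div_add_mul_log_div_sq_le_one hC.le (by linarith) (by linarith))
    (fun l hl => by
      linear_combination hcount (s / (2 * Real.exp u)) (by gcongr; norm_num)
        (by
          rw [div_le_div_iff₀ (by positivity) (by positivity)]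
          nlinarith [Real.exp_pos u]) l hl) M
  have hceil : 3 * (⌈u ^ 2⌉₊ : ℝ) ≤ 6 * (Real.exp u * (Real.log u / u ^ 2)) := by
    have := sq_le_exp_mul_log_div_sq (by linarith) (by linarith) hexp
    nlinarith [Nat.ceil_lt_add_one (sq_nonneg u)]
  have htail := four_div_mul_one_div_ceil_sq_le hs hu0 (by linarith)
  rw [← hsq] at hdual
  calc knapsackDual P M (s / (2 * Real.exp u)) ≤ _ := hdual
    _ ≤ s ^ 2 / (4 * u * (s / (2 * Real.exp u))) + C * (Real.log u / u ^ 2) *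
          (s ^ 2 / (s / (2 * Real.exp u))) + 6 * (Real.exp u * (Real.log u / u ^ 2)) +
            8 / s * (Real.exp u * (Real.log u / u ^ 2)) := by gcongr
    _ = s * Real.exp u / (2 * u) +
          (2 * C * s + 6 + 8 / s) * (Real.exp u * (Real.log u / u ^ 2)) := by
        field_simp
        ring

lemma HasHalfPrimeDensity.eventually_le_knapsackDual (hP : HasHalfPrimeDensity P) :
    ∃ C > 0, ∀ᶠ u : ℝ in atTop, ∀ μ : ℝ, √logIncrementSqSum / (8 * Real.exp u) ≤ μ →
      μ ≤ 2 * √logIncrementSqSum / Real.exp u →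
        logIncrementSqSum / (4 * u * μ) - C * (Real.exp u * (Real.log u / u ^ 2)) ≤
          knapsackDual P ⌈u ^ 2⌉₊ μ := by
  have hs := sqrt_logIncrementSqSum_pos
  have hS := logIncrementSqSum_pos
  obtain ⟨C, hC, hcount⟩ := hP.eventually_abs_smoothedCount_logIncrement_sub_le hs
  set s := √logIncrementSqSum
  refine ⟨(C * logIncrementSqSum + 1) * (8 / s), by positivity, ?_⟩
  filter_upwards [hcount, eventually_log_bounds (1 + 4 * C)]
    with u hcount ⟨hu, hlogu, hlogu', _⟩ μ hμlow hμupp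
  have hu0 : 0 < u := by linarith
  have hlogu0 : 0 ≤ Real.log u := by linarith
  have hμ : 0 < μ := lt_of_lt_of_le (by positivity) hμlow
  have hdual := le_knapsackDual_of_abs_smoothedCount_sub_le (P := P) (u := u) hμ (N := ⌈u ^ 2⌉₊)
    (Nat.one_le_ceil_iff.mpr (by positivity)) (ε := C * (Real.log u / u ^ 2)) (by positivity)
    (by linarith) (by
      rw [mul_div_assoc', div_le_div_iff₀ (by positivity) (by positivity)]
      nlinarith) (fun l hl => by linear_combination hcount μ hμlow hμupp l hl)
  have herror : C * (Real.log u / u ^ 2) * (logIncrementSqSum / μ) + 1 / μ * (1 / ⌈u ^ 2⌉₊) ≤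
      (C * logIncrementSqSum + 1) * (8 / s) * (Real.exp u * (Real.log u / u ^ 2)) := by
    calc C * (Real.log u / u ^ 2) * (logIncrementSqSum / μ) + 1 / μ * (1 / ⌈u ^ 2⌉₊)
        ≤ C * (Real.log u / u ^ 2) * (logIncrementSqSum / μ) + 1 / μ * (Real.log u / u ^ 2) := by
          have := one_div_ceil_sq_le_log_div_sq hu0 (by linarith)
          gcongr _ + _ * ?_
      _ = (C * logIncrementSqSum + 1) * (Real.log u / u ^ 2) * (1 / μ) := by ring
      _ ≤ (C * logIncrementSqSum + 1) * (Real.log u / u ^ 2) * (8 / s * Real.exp u) := by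
          gcongr
          exact one_div_le_of_div_exp_le hs hμlow
      _ = _ := by ring
  linarith

end KnapsackDual

/-! ### Upper bound -/

section UpperBound

lemma sum_factorization_mul_sub_one_le {N : ℕ} (hN : N ≠ 0) (B : Finset ℕ) :
    ∑ q ∈ B, (N.factorization q : ℝ) * ((q : ℝ) - 1) ≤ (N : ℝ) - 1 := by
  induction N using Nat.recOnMul with
  | zero => exact absurd rfl hN
  | one => simp
  | prime p hp =>
    have hp1 : (1 : ℝ) ≤ p := by exact_mod_cast hp.one_le
    simp only [hp.factorization, Finsupp.single_apply, Nat.cast_ite, Nat.cast_one, Nat.cast_zero,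
      ite_mul, one_mul, zero_mul, Finset.sum_ite_eq]
    split_ifs <;> linarith
  | mul a b iha ihb =>
    obtain ⟨ha, hb⟩ := mul_ne_zero_iff.mp hN
    have ha1 : (1 : ℝ) ≤ a := by exact_mod_cast Nat.one_le_iff_ne_zero.mpr ha
    have hb1 : (1 : ℝ) ≤ b := by exact_mod_cast Nat.one_le_iff_ne_zero.mpr hb
    simp only [Nat.factorization_mul ha hb, Finsupp.add_apply, Nat.cast_add, add_mul,
      Finset.sum_add_distrib, Nat.cast_mul]
    nlinarith [iha ha, ihb hb]

lemma sum_factorization_mul_log_le (N : ℕ) (B : Finset ℕ) :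
    ∑ q ∈ B, (N.factorization q : ℝ) * Real.log q ≤ Real.log N := by
  rw [Real.log_nat_eq_sum_factorization N,
    Finsupp.sum_of_support_subset (s := B ∪ N.factorization.support) _ Finset.subset_union_right _
      (by simp)]
  exact Finset.sum_le_sum_of_subset_of_nonneg Finset.subset_union_left fun _ _ _ => by positivity

lemma sum_factorization_mul_log_two_le (N : ℕ) (B : Finset ℕ) :
    (∑ q ∈ B, (N.factorization q : ℝ)) * Real.log 2 ≤ Real.log N := by
  rw [Finset.sum_mul]
  refine (Finset.sum_le_sum fun q _ => ?_).trans (sum_factorization_mul_log_le N B)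
  by_cases hq : q.Prime
  · have : (2 : ℝ) ≤ q := by exact_mod_cast hq.two_le
    gcongr
  · simp [Nat.factorization_eq_zero_of_not_prime N hq]

lemma factorization_add_one_le {n : ℕ} {Y : ℝ} (hY : 1 ≤ Y) (hn : Real.log n ≤ Y) (p : ℕ) :
    (n.factorization p : ℝ) + 1 ≤ 4 * Y := by
  have hlog : (n.factorization p : ℝ) * Real.log 2 ≤ Y := by
    simpa only [Finset.sum_singleton] using (sum_factorization_mul_log_two_le n {p}).trans hn
  nlinarith [Real.log_two_gt_d9, Nat.cast_nonneg (α := ℝ) (n.factorization p)]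

lemma log_one_add_add_le {s t : ℝ} (hs : 0 ≤ s) (ht : 0 ≤ t) :
    Real.log (1 + (s + t)) ≤ s + Real.log (1 + t) := by
  calc Real.log (1 + (s + t)) ≤ Real.log ((1 + s) * (1 + t)) :=
        Real.log_le_log (by positivity) (by nlinarith)
    _ = Real.log (1 + s) + Real.log (1 + t) := Real.log_mul (by positivity) (by positivity)
    _ ≤ s + Real.log (1 + t) := by
        linarith [Real.log_le_sub_one_of_pos (show 0 < 1 + s by positivity)]

variable {A B : Finset ℕ} {R Y : ℝ}

lemma card_le_of_forall_pos_of_forall_le (hR : 0 ≤ R) (hpos : ∀ p ∈ A, 0 < p)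
    (hle : ∀ p ∈ A, (p : ℝ) ≤ R) : (A.card : ℝ) ≤ R := by
  have hsub : A ⊆ Finset.Icc 1 ⌊R⌋₊ := fun p hp =>
    Finset.mem_Icc.mpr ⟨hpos p hp, Nat.le_floor (hle p hp)⟩
  calc (A.card : ℝ) ≤ ⌊R⌋₊ := by simpa using Finset.card_le_card hsub
    _ ≤ R := Nat.floor_le hR

lemma sum_sum_factorization_le (hR : 0 ≤ R) (hpos : ∀ p ∈ A, 0 < p) (hle : ∀ p ∈ A, (p : ℝ) ≤ R)
    (hY : 1 ≤ Y) {m : ℕ → ℕ} (hm : ∀ p ∈ A, (m p : ℝ) ≤ Y) :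
    ∑ q ∈ B, ∑ p ∈ A, ((m p).factorization q : ℝ) ≤ R * Real.log Y / Real.log 2 := by
  have hlogY := Real.log_nonneg hY
  rw [le_div_iff₀ (Real.log_pos one_lt_two), Finset.sum_comm, Finset.sum_mul]
  calc ∑ p ∈ A, (∑ q ∈ B, ((m p).factorization q : ℝ)) * Real.log 2
      ≤ ∑ _p ∈ A, Real.log Y := by
        refine Finset.sum_le_sum fun p hp => (sum_factorization_mul_log_two_le _ B).trans ?_
        rcases (m p).eq_zero_or_pos with hzero | hmp
        · simpa [hzero] using hlogY
        · exact Real.log_le_log (by exact_mod_cast hmp) (hm p hp)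
    _ = A.card * Real.log Y := by rw [Finset.sum_const, nsmul_eq_mul]
    _ ≤ R * Real.log Y := by
        gcongr
        exact card_le_of_forall_pos_of_forall_le hR hpos hle

lemma sum_sum_factorization_mul_sub_one_mul_log_le (n : ℕ) (hR : 1 ≤ R)
    (hlt : ∀ p ∈ A, R < (p : ℝ)) :
    (∑ q ∈ B, (∑ p ∈ A, ((n.factorization p + 1).factorization q : ℝ)) * ((q : ℝ) - 1)) *
      Real.log R ≤ Real.log n := by
  have hlogR : 0 ≤ Real.log R := Real.log_nonneg hR
  simp only [Finset.sum_mul]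
  rw [Finset.sum_comm]
  refine le_trans (Finset.sum_le_sum fun p hp => ?_) (sum_factorization_mul_log_le n A)
  have hsum := sum_factorization_mul_sub_one_le (Nat.succ_ne_zero (n.factorization p)) B
  rw [Nat.cast_succ, add_sub_cancel_right] at hsum
  have hRp : Real.log R ≤ Real.log p := Real.log_le_log (by linarith) (hlt p hp).le
  rw [← Finset.sum_mul]
  gcongr

-- Only the exponents of the primes above `R` matter: the primes up to `R` are so few that they
-- contribute to the error term only.
lemma exists_sum_log_one_add_factorization_prod_le {n : ℕ} (hR : 1 ≤ R) (hY : 1 ≤ Y)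
    (hn : Real.log n ≤ Y) (hA : ∀ p ∈ A, 0 < p) (B : Finset ℕ) :
    ∃ b : ℕ → ℕ, (∑ q ∈ B, (b q : ℝ) * ((q : ℝ) - 1)) * Real.log R ≤ Y ∧
      ∑ q ∈ B, Real.log (1 + (∏ p ∈ A, (n.factorization p + 1)).factorization q) ≤
        R * Real.log (4 * Y) / Real.log 2 + ∑ q ∈ B, Real.log (1 + b q) := by
  have hsmall : ∑ q ∈ B, ∑ p ∈ A with ((p : ℕ) : ℝ) ≤ R,
      ((n.factorization p + 1).factorization q : ℝ) ≤ R * Real.log (4 * Y) / Real.log 2 :=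
    sum_sum_factorization_le (by linarith) (fun p hp => hA p (Finset.mem_filter.mp hp).1)
      (fun p hp => (Finset.mem_filter.mp hp).2) (by linarith)
      fun p _ => by exact_mod_cast factorization_add_one_le hY hn p
  have hlarge := sum_sum_factorization_mul_sub_one_mul_log_le (A := {p ∈ A | ¬(p : ℝ) ≤ R}) (B := B)
    n hR fun p hp => not_le.mp (Finset.mem_filter.mp hp).2
  refine ⟨fun q => ∑ p ∈ A with ¬((p : ℕ) : ℝ) ≤ R, (n.factorization p + 1).factorization q,
    ?_, ?_⟩
  · simp only [Nat.cast_sum]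
    exact hlarge.trans hn
  · refine le_trans ?_ (add_le_add_left hsmall _)
    rw [← Finset.sum_add_distrib]
    refine Finset.sum_le_sum fun q _ => ?_
    rw [Nat.factorization_prod fun _ _ => Nat.succ_ne_zero _, Finsupp.finsetSum_apply,
      ← Finset.sum_filter_add_sum_filter_not A fun p : ℕ => (p : ℝ) ≤ R, Nat.cast_add,
      Nat.cast_sum, Nat.cast_sum]
    exact log_one_add_add_le (Finset.sum_nonneg fun _ _ => Nat.cast_nonneg _)
      (Finset.sum_nonneg fun _ _ => Nat.cast_nonneg _)

lemma log_fForm_zero (k : ℕ) : Real.log (fForm k 0) = 0 := by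
  simp [fForm]

lemma exists_log_fForm_fForm_le {k n : ℕ} (hk : k ∈ eulerLuckyNumbers) (hn0 : n ≠ 0)
    (hR : 1 ≤ R) (hY : 1 ≤ Y) (hn : Real.log n ≤ Y) :
    ∃ (B : Finset ℕ) (b : ℕ → ℕ), (∀ q ∈ B, IsNormFormSplit k q) ∧
      (∑ q ∈ B, (b q : ℝ) * ((q : ℝ) - 1)) * Real.log R ≤ Y ∧
      Real.log (fForm k (fForm k n)) ≤
        R * Real.log (4 * Y) / Real.log 2 + ∑ q ∈ B, Real.log (1 + b q) := by
  classical
  by_cases hpos : Real.log (fForm k (fForm k n)) ≤ 0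
  · refine ⟨∅, 0, by simp, by simpa using by linarith, hpos.trans ?_⟩
    have := Real.log_nonneg (by linarith : 1 ≤ 4 * Y)
    simp only [Finset.sum_empty, add_zero]
    positivity
  have hm0 : fForm k n ≠ 0 := fun h => hpos (by rw [h, log_fForm_zero])
  have hm := (fForm_eq_zero_or_eq_prod hk hn0).resolve_left hm0
  have hf := (fForm_eq_zero_or_eq_prod hk hm0).resolve_left fun h => hpos (by simp [h])
  obtain ⟨b, hcost, hprofit⟩ := exists_sum_log_one_add_factorization_prod_le hR hY hn
    (A := {p ∈ n.primeFactors | IsNormFormSplit k p})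
    (fun p hp => (Nat.prime_of_mem_primeFactors (Finset.mem_filter.mp hp).1).pos)
    {q ∈ (fForm k n).primeFactors | IsNormFormSplit k q}
  refine ⟨_, b, fun q hq => (Finset.mem_filter.mp hq).2, hcost, le_of_eq_of_le ?_ hprofit⟩
  rw [hf, ← hm, Nat.cast_prod, Real.log_prod fun q _ => by positivity]
  simp only [Nat.cast_add, Nat.cast_one, add_comm]

variable {P : ℕ → Prop} {μ : ℝ}

lemma sum_max_sub_zero_le_smoothedCount (hP : ∀ p, P p → 2 ≤ p) (hB : ∀ q ∈ B, P q) (z : ℝ) :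
    ∑ q ∈ B, max (z - q) 0 ≤ smoothedCount P z := by
  classical
  calc ∑ q ∈ B, max (z - q) 0 = ∑ q ∈ B with (q : ℕ) ≤ z, (z - q) := by
        rw [Finset.sum_filter]
        refine Finset.sum_congr rfl fun q _ => ?_
        split_ifs with hq
        · exact max_eq_left (sub_nonneg.mpr hq)
        · exact max_eq_right (sub_nonpos.mpr (not_le.mp hq).le)
    _ ≤ smoothedCount P z := by
        refine Finset.sum_le_sum_of_subset_of_nonneg (fun q hq => ?_) fun q hq _ => ?_
        · obtain ⟨hqB, hqz⟩ := Finset.mem_filter.mp hq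
          have := hP q (hB q hqB)
          exact Finset.mem_filter.mpr
            ⟨Finset.mem_Icc.mpr ⟨by lia, Nat.le_floor hqz⟩, hB q hqB⟩
        · exact sub_nonneg.mpr (cast_le_of_mem_Icc_one_floor (Finset.mem_filter.mp hq).1)

lemma log_one_add_le_mul_add_sum_max {b M : ℕ} (hb : b ≤ M) (c : ℝ) :
    Real.log (1 + b) ≤ b * c + ∑ l ∈ Finset.range M, max (logIncrement l - c) 0 := by
  calc Real.log (1 + b) = ∑ l ∈ Finset.range b, logIncrement l := (sum_range_logIncrement b).symm
    _ ≤ ∑ l ∈ Finset.range b, (c + max (logIncrement l - c) 0) :=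
        Finset.sum_le_sum fun l _ => by linarith [le_max_left (logIncrement l - c) 0]
    _ = b * c + ∑ l ∈ Finset.range b, max (logIncrement l - c) 0 := by
        rw [Finset.sum_add_distrib, Finset.sum_const, Finset.card_range, nsmul_eq_mul]
    _ ≤ b * c + ∑ l ∈ Finset.range M, max (logIncrement l - c) 0 := by gcongr

lemma exists_sum_log_one_add_le_knapsackDual (hP : ∀ p, P p → 2 ≤ p) (hB : ∀ q ∈ B, P q)
    (b : ℕ → ℕ) (hμ : 0 < μ) :
    ∃ M : ℕ, ∑ q ∈ B, Real.log (1 + b q) ≤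
      μ * ∑ q ∈ B, (b q : ℝ) * ((q : ℝ) - 1) + knapsackDual P M μ := by
  refine ⟨B.sup b, (Finset.sum_le_sum fun q hq =>
    log_one_add_le_mul_add_sum_max (b := b q) (Finset.le_sup hq) (μ * ((q : ℝ) - 1))).trans ?_⟩
  rw [Finset.sum_add_distrib, Finset.sum_comm, Finset.mul_sum]
  refine add_le_add (Finset.sum_le_sum fun q _ => by linarith) (Finset.sum_le_sum fun l _ => ?_)
  simp only [max_sub_mul_sub_one_zero hμ, ← Finset.mul_sum]
  gcongr
  exact sum_max_sub_zero_le_smoothedCount hP hB _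

variable {u : ℝ}

lemma one_div_sub_three_mul_le {g : ℝ} (hu : 0 < u) (hg : 0 ≤ g) (hgu : 6 * g ≤ u) :
    1 / (u - 3 * g) ≤ 1 / u + 6 * (g / u ^ 2) := by
  rw [show 1 / u + 6 * (g / u ^ 2) = (u + 6 * g) / u ^ 2 by field_simp,
    div_le_div_iff₀ (by linarith) (by positivity)]
  nlinarith

lemma exp_div_pow_mul_log_div_log_two_le (hu : 3 ≤ u) (hlogu : 1 ≤ Real.log u) :
    Real.exp u / u ^ 3 * Real.log (4 * Real.exp u ^ 2) / Real.log 2 ≤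
      6 * (Real.exp u * (Real.log u / u ^ 2)) := by
  have hlog : Real.log (4 * Real.exp u ^ 2) ≤ 4 * u := by
    rw [Real.log_mul (by norm_num) (by positivity), Real.log_pow, Real.log_exp]
    have := Real.log_le_sub_one_of_pos (show (0 : ℝ) < 4 by norm_num)
    push_cast
    linarith
  rw [div_le_iff₀ (Real.log_pos one_lt_two)]
  calc Real.exp u / u ^ 3 * Real.log (4 * Real.exp u ^ 2) ≤ Real.exp u / u ^ 3 * (4 * u) := by
        gcongr
    _ = 4 * (Real.exp u * (1 / u ^ 2)) := by field_simp
    _ ≤ 4 * (Real.exp u * (Real.log u / u ^ 2)) := by gcongr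
    _ ≤ 6 * (Real.exp u * (Real.log u / u ^ 2)) * Real.log 2 := by
        have : 0 < Real.exp u * (Real.log u / u ^ 2) := by positivity
        nlinarith [Real.log_two_gt_d9]

lemma log_exp_div_pow (n : ℕ) (hu : 0 < u) :
    Real.log (Real.exp u / u ^ n) = u - n * Real.log u := by
  rw [Real.log_div (Real.exp_ne_zero u) (by positivity), Real.log_exp, Real.log_pow]

lemma div_mul_le_of_mul_sub_three_mul_log_le {s W : ℝ} (hs : 0 ≤ s) (hu : 0 < u)
    (hlogu : 0 < Real.log u) (hlogu' : 6 * Real.log u ≤ u)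
    (hW : W * (u - 3 * Real.log u) ≤ Real.exp u ^ 2) :
    s / (2 * Real.exp u) * W ≤
      s * Real.exp u / (2 * u) + 3 * s * (Real.exp u * (Real.log u / u ^ 2)) := by
  calc s / (2 * Real.exp u) * W
      ≤ s / (2 * Real.exp u) * (Real.exp u ^ 2 / (u - 3 * Real.log u)) := by
        gcongr
        rwa [le_div_iff₀ (by linarith)]
    _ = s * Real.exp u / 2 * (1 / (u - 3 * Real.log u)) := by field_simp
    _ ≤ s * Real.exp u / 2 * (1 / u + 6 * (Real.log u / u ^ 2)) := by
        gcongr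
        exact one_div_sub_three_mul_le hu hlogu.le hlogu'
    _ = s * Real.exp u / (2 * u) + 3 * s * (Real.exp u * (Real.log u / u ^ 2)) := by
        field_simp
        ring

lemma eventually_log_fForm_fForm_le {k : ℕ} (hk : k ∈ eulerLuckyNumbers) :
    ∃ C > 0, ∀ᶠ u : ℝ in atTop, ∀ n : ℕ, n ≠ 0 → Real.log n ≤ Real.exp u ^ 2 →
      Real.log (fForm k (fForm k n)) ≤
        √logIncrementSqSum * Real.exp u / u + C * (Real.exp u * (Real.log u / u ^ 2)) := by
  have hs := sqrt_logIncrementSqSum_pos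
  have htwo : ∀ q, IsNormFormSplit k q → 2 ≤ q := fun q hq => hq.1.two_le
  obtain ⟨C, hC, hdual⟩ := (hasHalfPrimeDensity_isNormFormSplit
    (two_le_of_mem_eulerLuckyNumbers hk) (prime_four_mul_sub_one hk)).eventually_knapsackDual_le
    htwo
  set s := √logIncrementSqSum
  refine ⟨C + 6 + 3 * s, by positivity, ?_⟩
  filter_upwards [hdual, eventually_log_bounds 10] with u hdual ⟨hu, hlogu, hlogu', hexp⟩ n hn0 hn
  have hR : 1 ≤ Real.exp u / u ^ 3 := by
    rw [one_le_div (by positivity)]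
    have : u ^ 3 ≤ u ^ 9 := pow_le_pow_right₀ (by linarith) (by norm_num)
    have : 0 ≤ u ^ 9 := by positivity
    linarith
  obtain ⟨B, b, hB, hcost, hprofit⟩ := exists_log_fForm_fForm_le hk hn0 hR
    (one_le_pow₀ (Real.one_le_exp (by linarith))) hn
  rw [log_exp_div_pow 3 (by linarith)] at hcost
  obtain ⟨M, hM⟩ := exists_sum_log_one_add_le_knapsackDual htwo hB b
    (show 0 < s / (2 * Real.exp u) by positivity)
  have hsmall := exp_div_pow_mul_log_div_log_two_le (u := u) (by linarith) (by linarith)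
  have hweight := div_mul_le_of_mul_sub_three_mul_log_le hs.le (by linarith) (by linarith)
    (by linarith) hcost
  have hmain : s * Real.exp u / u = s * Real.exp u / (2 * u) + s * Real.exp u / (2 * u) := by
    field_simp
    ring
  linarith [hdual M]

end UpperBound

/-! ### Lower bound: solving the knapsack greedily -/

section GreedyKnapsack

variable {ι : Type*} {v w : ι → ℝ} {W : ℝ}

-- Items are packed by decreasing ratio `v a / w a` until one no longer fits; its ratio is `μ`.
-- Minimality of `μ` among the bounds for the ratios lets the induction add the best item.
lemma exists_subset_sum_le_and_lagrangian_le_sum (s : Finset ι)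
    (hs : ∀ a ∈ s, 0 < w a ∧ w a ≤ W ∧ 0 ≤ v a) {T : ℝ} (hT : 0 ≤ T) :
    ∃ t ⊆ s, ∑ a ∈ t, w a ≤ T ∧ ∃ μ : ℝ, 0 ≤ μ ∧
      (∀ r, 0 ≤ r → (∀ a ∈ s, v a ≤ r * w a) → μ ≤ r) ∧
      ∑ a ∈ s, max (v a - μ * w a) 0 + μ * (T - W) ≤ ∑ a ∈ t, v a := by
  classical
  induction s using Finset.induction_on_max_value (fun a => v a / w a) generalizing T with
  | empty => exact ⟨∅, subset_rfl, by simpa using hT, 0, le_rfl, fun r hr _ => hr, by simp⟩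
  | insert b s hb hmax ih =>
    obtain ⟨hwb, hwW, hvb⟩ := hs b (Finset.mem_insert_self b s)
    have hratio : ∀ a ∈ insert b s, v a ≤ v b / w b * w a := fun a ha => by
      rw [← div_le_iff₀ (hs a ha).1]
      exact (Finset.mem_insert.mp ha).elim (fun h => by rw [h]) (hmax a)
    rcases lt_or_ge T (w b) with hlt | hge
    · refine ⟨∅, Finset.empty_subset _, by simpa using hT, v b / w b, by positivity,
        fun r _ hr => (div_le_iff₀ hwb).mpr (hr b (Finset.mem_insert_self b s)), ?_⟩
      rw [Finset.sum_eq_zero fun a ha => max_eq_right (sub_nonpos.mpr (hratio a ha)), zero_add,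
        Finset.sum_empty]
      exact mul_nonpos_of_nonneg_of_nonpos (by positivity) (by linarith)
    · obtain ⟨t, hts, hwt, μ, hμ, hμmin, hvt⟩ :=
        ih (fun a ha => hs a (Finset.mem_insert_of_mem ha)) (sub_nonneg.mpr hge)
      have hμb : μ * w b ≤ v b := (le_div_iff₀ hwb).mp <|
        hμmin _ (by positivity) fun a ha => hratio a (Finset.mem_insert_of_mem ha)
      refine ⟨insert b t, Finset.insert_subset_insert b hts, ?_, μ, hμ,
        fun r hr hra => hμmin r hr fun a ha => hra a (Finset.mem_insert_of_mem ha), ?_⟩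
      · rw [Finset.sum_insert fun h => hb (hts h)]
        linarith
      · rw [Finset.sum_insert fun h => hb (hts h), Finset.sum_insert hb,
          max_eq_left (sub_nonneg.mpr hμb)]
        linarith

end GreedyKnapsack

section KnapsackItems

variable {P : ℕ → Prop} {N : ℕ} {Z μ : ℝ}

open Classical in
/-- The items of the exponent knapsack with prime at most `Z`: the pair `(l, q)` stands for raising
the exponent of `q` in `fForm k n` from `l` to `l + 1`. -/
noncomputable def knapsackItems (P : ℕ → Prop) (N : ℕ) (Z : ℝ) : Finset (ℕ × ℕ) :=
  Finset.range N ×ˢ {q ∈ Finset.Icc 1 ⌊Z⌋₊ | P q}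

/-- The Lagrangian at price `μ` of the knapsack restricted to `knapsackItems P N Z`, a truncation of
`knapsackDual P N μ`. -/
noncomputable def knapsackLagrangian (P : ℕ → Prop) (N : ℕ) (Z μ : ℝ) : ℝ :=
  ∑ a ∈ knapsackItems P N Z, max (logIncrement a.1 - μ * ((a.2 : ℝ) - 1)) 0

lemma mem_knapsackItems {a : ℕ × ℕ} :
    a ∈ knapsackItems P N Z ↔ a.1 < N ∧ a.2 ∈ Finset.Icc 1 ⌊Z⌋₊ ∧ P a.2 := by
  simp only [knapsackItems, Finset.mem_product, Finset.mem_range, Finset.mem_filter]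

lemma card_knapsackItems_le (hZ : 0 ≤ Z) : ((knapsackItems P N Z).card : ℝ) ≤ N * Z := by
  classical
  rw [knapsackItems, Finset.card_product, Finset.card_range, Nat.cast_mul]
  gcongr
  exact card_le_of_forall_pos_of_forall_le hZ
    (fun q hq => (Finset.mem_Icc.mp (Finset.mem_filter.mp hq).1).1)
    fun q hq => cast_le_of_mem_Icc_one_floor (Finset.mem_filter.mp hq).1

lemma knapsackLagrangian_nonneg : 0 ≤ knapsackLagrangian P N Z μ :=
  Finset.sum_nonneg fun _ _ => le_max_right _ _

lemma knapsackLagrangian_antitone : Antitone (knapsackLagrangian P N Z) := fun μ ν hμν => by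
  refine Finset.sum_le_sum fun a ha => max_le_max ?_ le_rfl
  have : (1 : ℝ) ≤ a.2 := one_le_cast_of_mem_Icc_one (mem_knapsackItems.mp ha).2.1
  nlinarith

open Classical in
lemma smoothedCount_le_sum_max_sub_zero {z : ℝ} (hz : z ≤ Z) :
    smoothedCount P z ≤ ∑ q ∈ Finset.Icc 1 ⌊Z⌋₊ with P q, max (z - q) 0 := by
  calc smoothedCount P z ≤ ∑ q ∈ Finset.Icc 1 ⌊z⌋₊ with P q, max (z - q) 0 :=
        Finset.sum_le_sum fun q _ => le_max_left _ _
    _ ≤ ∑ q ∈ Finset.Icc 1 ⌊Z⌋₊ with P q, max (z - q) 0 := by gcongr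

lemma knapsackDual_le_knapsackLagrangian (hμ : 0 < μ) (hZ : 1 / μ + 1 ≤ Z) :
    knapsackDual P N μ ≤ knapsackLagrangian P N Z μ := by
  rw [knapsackLagrangian, knapsackItems, Finset.sum_product]
  refine Finset.sum_le_sum fun l _ => ?_
  simp only [max_sub_mul_sub_one_zero hμ, ← Finset.mul_sum]
  gcongr
  refine smoothedCount_le_sum_max_sub_zero (le_trans ?_ hZ)
  gcongr
  exact logIncrement_le_one l

variable {s u y g κ : ℝ}

lemma sq_div_two_mul_le_sq_div_sub (hu : 0 < u) (hy : 0 < y) (hg : 0 ≤ g) (hgu : 10 * g ≤ u)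
    (hκ : 6 * κ * u ≤ y) : y ^ 2 / (2 * u) ≤ y ^ 2 / (u + 5 * g) - κ * y := by
  have hcapacity : y ^ 2 / (3 / 2 * u) ≤ y ^ 2 / (u + 5 * g) := by
    gcongr
    linarith
  have hweight : κ * y ≤ y ^ 2 / (6 * u) := by
    rw [le_div_iff₀ (by positivity)]
    nlinarith
  have hsplit : y ^ 2 / (3 / 2 * u) = y ^ 2 / (2 * u) + y ^ 2 / (6 * u) := by field_simp; ring
  linarith

lemma mul_div_le_sq_div_add_mul (hu : 0 < u) (hμ : 0 < μ) :
    s * y / u ≤ s ^ 2 / (4 * u * μ) + μ * (y ^ 2 / u) := by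
  rw [← sub_nonneg]
  calc 0 ≤ (s - 2 * μ * y) ^ 2 / (4 * u * μ) := by positivity
    _ = s ^ 2 / (4 * u * μ) + μ * (y ^ 2 / u) - s * y / u := by field_simp; ring

lemma sq_div_sub_le_sq_div_add (hu : 0 < u) (hg : 0 ≤ g) :
    y ^ 2 / u - 5 * y ^ 2 * (g / u ^ 2) ≤ y ^ 2 / (u + 5 * g) := by
  have hinv : (u - 5 * g) / u ^ 2 ≤ 1 / (u + 5 * g) := by
    rw [div_le_div_iff₀ (by positivity) (by positivity)]
    nlinarith
  calc y ^ 2 / u - 5 * y ^ 2 * (g / u ^ 2) = y ^ 2 * ((u - 5 * g) / u ^ 2) := by field_simp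
    _ ≤ y ^ 2 * (1 / (u + 5 * g)) := by gcongr
    _ = y ^ 2 / (u + 5 * g) := mul_one_div _ _

lemma mul_div_sub_le_sq_div_add_mul_sub (hs : 0 ≤ s) (hu : 0 < u) (hy : 0 < y) (hg : 0 ≤ g)
    (hκ : 0 ≤ κ) (hμ : 0 < μ) (hμs : μ ≤ 2 * s / y) (herror : 1 ≤ y * (g / u ^ 2)) :
    s * y / u - (10 * s + 2 * s * κ) * (y * (g / u ^ 2)) ≤
      s ^ 2 / (4 * u * μ) + μ * (y ^ 2 / (u + 5 * g) - κ * y) := by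
  have hcapacity : μ * (y ^ 2 / u) - 10 * s * (y * (g / u ^ 2)) ≤ μ * (y ^ 2 / (u + 5 * g)) := by
    calc μ * (y ^ 2 / u) - 10 * s * (y * (g / u ^ 2))
        = μ * (y ^ 2 / u) - 2 * s / y * (5 * y ^ 2 * (g / u ^ 2)) := by field_simp; ring
      _ ≤ μ * (y ^ 2 / u) - μ * (5 * y ^ 2 * (g / u ^ 2)) := by gcongr
      _ = μ * (y ^ 2 / u - 5 * y ^ 2 * (g / u ^ 2)) := by ring
      _ ≤ μ * (y ^ 2 / (u + 5 * g)) := by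
          gcongr
          exact sq_div_sub_le_sq_div_add hu hg
  have hweight : μ * (κ * y) ≤ 2 * s * κ * (y * (g / u ^ 2)) := by
    calc μ * (κ * y) ≤ 2 * s / y * (κ * y) := by gcongr
      _ = 2 * s * κ * 1 := by field_simp
      _ ≤ 2 * s * κ * (y * (g / u ^ 2)) := by gcongr
  linarith [mul_div_le_sq_div_add_mul (s := s) (y := y) hu hμ]

lemma HasHalfPrimeDensity.eventually_le_knapsackLagrangian (hP : HasHalfPrimeDensity P) :
    ∃ C > 0, ∀ᶠ u : ℝ in atTop, ∀ μ : ℝ, √logIncrementSqSum / (8 * Real.exp u) ≤ μ →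
      μ ≤ 2 * √logIncrementSqSum / Real.exp u →
        logIncrementSqSum / (4 * u * μ) - C * (Real.exp u * (Real.log u / u ^ 2)) ≤
          knapsackLagrangian P ⌈u ^ 2⌉₊ ((8 / √logIncrementSqSum + 1) * Real.exp u) μ := by
  have hs := sqrt_logIncrementSqSum_pos
  obtain ⟨C, hC, hdual⟩ := hP.eventually_le_knapsackDual
  refine ⟨C, hC, ?_⟩
  filter_upwards [hdual, eventually_ge_atTop 0] with u hdual hu μ hμlow hμupp
  refine (hdual μ hμlow hμupp).trans
    (knapsackDual_le_knapsackLagrangian (lt_of_lt_of_le (by positivity) hμlow) ?_)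
  linarith [one_div_le_of_div_exp_le hs hμlow, Real.one_le_exp hu]

-- In the middle range of `μ` the bound is AM-GM; for smaller `μ` the term `H μ` alone suffices,
-- and for larger ones the term `μ * (y ^ 2 / (u + 5 * g) - κ * y)` alone.
lemma mul_div_sub_le_antitone_add_mul_sub {H : ℝ → ℝ} {E : ℝ} (hH : Antitone H) (hH0 : 0 ≤ H μ)
    (hs : 0 < s) (hu : 0 < u) (hy : 0 < y) (hg : 0 ≤ g) (hgu : 10 * g ≤ u) (hκ : 0 ≤ κ)
    (hκu : 6 * κ * u ≤ y) (herror : 1 ≤ y * (g / u ^ 2)) (hE : 0 ≤ E)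
    (hlow : ∀ ν, s / (8 * y) ≤ ν → ν ≤ 2 * s / y → s ^ 2 / (4 * u * ν) - E ≤ H ν) (hμ : 0 ≤ μ) :
    s * y / u - (E + (10 * s + 2 * s * κ) * (y * (g / u ^ 2))) ≤
      H μ + μ * (y ^ 2 / (u + 5 * g) - κ * y) := by
  have hcapacity := sq_div_two_mul_le_sq_div_sub hu hy hg hgu hκu
  have hterm : 0 ≤ μ * (y ^ 2 / (u + 5 * g) - κ * y) :=
    mul_nonneg hμ (le_trans (by positivity) hcapacity)
  have hloss : 0 ≤ (10 * s + 2 * s * κ) * (y * (g / u ^ 2)) := by positivity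
  rcases le_total μ (s / (8 * y)) with hsmall | hlarge
  · have hmain : 0 < s * y / u := by positivity
    have hlow' := hlow (s / (8 * y)) le_rfl
      (by rw [div_le_div_iff₀ (by positivity) hy]; nlinarith)
    rw [show s ^ 2 / (4 * u * (s / (8 * y))) = 2 * (s * y / u) by field_simp; ring] at hlow'
    linarith [hH hsmall]
  rcases le_total μ (2 * s / y) with hmiddle | hlarge'
  · linarith [hlow μ hlarge hmiddle, mul_div_sub_le_sq_div_add_mul_sub hs.le hu hy hg hκ
      (lt_of_lt_of_le (by positivity) hlarge) hmiddle herror]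
  · have hprofit : s * y / u ≤ μ * (y ^ 2 / (u + 5 * g) - κ * y) := by
      calc s * y / u = 2 * s / y * (y ^ 2 / (2 * u)) := by field_simp
        _ ≤ μ * (y ^ 2 / (u + 5 * g) - κ * y) := by gcongr
    linarith

lemma HasHalfPrimeDensity.eventually_le_knapsackLagrangian_add (hP : HasHalfPrimeDensity P) :
    ∃ C > 0, ∀ᶠ u : ℝ in atTop, ∀ μ : ℝ, 0 ≤ μ →
      √logIncrementSqSum * Real.exp u / u - C * (Real.exp u * (Real.log u / u ^ 2)) ≤
        knapsackLagrangian P ⌈u ^ 2⌉₊ ((8 / √logIncrementSqSum + 1) * Real.exp u) μ +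
          μ * (Real.exp u ^ 2 / (u + 5 * Real.log u) -
            (8 / √logIncrementSqSum + 1) * Real.exp u) := by
  have hs := sqrt_logIncrementSqSum_pos
  have hsq : √logIncrementSqSum ^ 2 = logIncrementSqSum := Real.sq_sqrt logIncrementSqSum_pos.le
  obtain ⟨C, hC, hlow⟩ := hP.eventually_le_knapsackLagrangian
  set s := √logIncrementSqSum
  have hκ : 0 < 8 / s + 1 := by positivity
  set κ := 8 / s + 1
  refine ⟨C + (10 * s + 2 * s * κ), by positivity, ?_⟩
  filter_upwards [hlow, eventually_log_bounds (10 + 6 * κ)]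
    with u hlow ⟨hu, hlogu, hlogu', hexp⟩ μ hμ
  rw [← hsq] at hlow
  have hu0 : 0 < u := by linarith
  have hlogu0 : 0 < Real.log u := by linarith
  have hκu : 6 * κ * u ≤ Real.exp u := le_trans (by
    gcongr
    · linarith
    · exact le_self_pow₀ (by linarith) (by norm_num)) hexp
  have herror : 1 ≤ Real.exp u * (Real.log u / u ^ 2) :=
    (one_le_pow₀ (by linarith)).trans (sq_le_exp_mul_log_div_sq (by linarith) (by linarith)
      ((le_mul_of_one_le_left (by positivity) (by linarith)).trans hexp))
  linarith [mul_div_sub_le_antitone_add_mul_sub knapsackLagrangian_antitone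
    knapsackLagrangian_nonneg hs hu0 (Real.exp_pos u) hlogu0.le (by nlinarith) hκ.le hκu herror
    (by positivity) hlow hμ]

lemma HasHalfPrimeDensity.eventually_exists_subset_knapsackItems (hP : HasHalfPrimeDensity P)
    (hP2 : ∀ p, P p → 2 ≤ p) :
    ∃ C > 0, ∀ᶠ u : ℝ in atTop,
      ∃ A ⊆ knapsackItems P ⌈u ^ 2⌉₊ ((8 / √logIncrementSqSum + 1) * Real.exp u),
        ∑ a ∈ A, ((a.2 : ℝ) - 1) ≤ Real.exp u ^ 2 / (u + 5 * Real.log u) ∧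
        √logIncrementSqSum * Real.exp u / u - C * (Real.exp u * (Real.log u / u ^ 2)) ≤
          ∑ a ∈ A, logIncrement a.1 := by
  obtain ⟨C, hC, hlow⟩ := hP.eventually_le_knapsackLagrangian_add
  refine ⟨C, hC, ?_⟩
  filter_upwards [hlow, eventually_ge_atTop 1] with u hlow hu
  have hlogu := Real.log_nonneg hu
  obtain ⟨A, hA, hweight, μ, hμ, -, hprofit⟩ := exists_subset_sum_le_and_lagrangian_le_sum
    (v := fun a : ℕ × ℕ => logIncrement a.1) (w := fun a => (a.2 : ℝ) - 1)
    (W := (8 / √logIncrementSqSum + 1) * Real.exp u)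
    (knapsackItems P ⌈u ^ 2⌉₊ ((8 / √logIncrementSqSum + 1) * Real.exp u))
    (fun a ha => by
      obtain ⟨-, hIcc, hPa⟩ := mem_knapsackItems.mp ha
      have hge : (2 : ℝ) ≤ a.2 := by exact_mod_cast hP2 _ hPa
      have hle := cast_le_of_mem_Icc_one_floor hIcc
      exact ⟨by linarith, by linarith, (logIncrement_pos _).le⟩)
    (show 0 ≤ Real.exp u ^ 2 / (u + 5 * Real.log u) by positivity)
  exact ⟨A, hA, hweight, (hlow μ hμ).trans hprofit⟩

end KnapsackItems

/-! ### Lower bound: realising a packing by an integer -/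

section Realization

variable {ι : Type*} {A : Finset ι} {f : ι → ℕ} {k : ℕ}

lemma factorization_prod_pow_apply (hinj : Set.InjOn f A) (hprime : ∀ a ∈ A, (f a).Prime)
    (e : ι → ℕ) {a : ι} (ha : a ∈ A) :
    (∏ b ∈ A, f b ^ e b).factorization (f a) = e a := by
  rw [Nat.factorization_prod fun b hb => pow_ne_zero _ (hprime b hb).ne_zero,
    Finsupp.finsetSum_apply, Finset.sum_eq_single_of_mem a ha]
  · rw [(hprime a ha).factorization_pow, Finsupp.single_eq_same]
  · intro b hb hba
    rw [(hprime b hb).factorization_pow,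
      Finsupp.single_eq_of_ne fun h => hba (hinj hb ha h.symm)]

lemma primeFactors_prod_pow_subset_image (hprime : ∀ a ∈ A, (f a).Prime) (e : ι → ℕ) :
    (∏ a ∈ A, f a ^ e a).primeFactors ⊆ A.image f := fun p hp => by
  obtain ⟨hpp, hdvd, -⟩ := Nat.mem_primeFactors.mp hp
  obtain ⟨a, ha, hpa⟩ := (hpp.prime.dvd_finsetProd_iff _).mp hdvd
  exact Finset.mem_image.mpr ⟨a, ha, ((Nat.prime_dvd_prime_iff_eq hpp (hprime a ha)).mp
    (hpp.dvd_of_dvd_pow hpa)).symm⟩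

lemma prod_pow_ne_zero_of_isNormFormSplit (hsplit : ∀ a ∈ A, IsNormFormSplit k (f a)) (e : ι → ℕ) :
    ∏ a ∈ A, f a ^ e a ≠ 0 :=
  Finset.prod_ne_zero_iff.mpr fun a ha => pow_ne_zero _ (hsplit a ha).1.ne_zero

lemma fForm_prod_pow (hk : k ∈ eulerLuckyNumbers) (hinj : Set.InjOn f A)
    (hsplit : ∀ a ∈ A, IsNormFormSplit k (f a)) (e : ι → ℕ) :
    fForm k (∏ a ∈ A, f a ^ e a) = ∏ a ∈ A, (e a + 1) := by
  have hprime : ∀ a ∈ A, (f a).Prime := fun a ha => (hsplit a ha).1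
  have hsub := primeFactors_prod_pow_subset_image hprime e
  rw [fForm_eq_prod hk (prod_pow_ne_zero_of_isNormFormSplit hsplit e), Finset.prod_subset hsub,
    Finset.prod_image hinj]
  · exact Finset.prod_congr rfl fun a ha => by rw [factorization_prod_pow_apply hinj hprime e ha]
  · intro p _ hp
    rw [← Nat.support_factorization, Finsupp.notMem_support_iff] at hp
    rw [hp, zero_add]
  · intro p hp
    obtain ⟨a, ha, rfl⟩ := Finset.mem_image.mp (hsub hp)
    exact hsplit a ha

lemma sum_le_sum_range_card_of_antitone {h : ℕ → ℝ} (hh : Antitone h) (s : Finset ℕ) :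
    ∑ l ∈ s, h l ≤ ∑ l ∈ Finset.range s.card, h l := by
  induction s using Finset.induction_on_max with
  | empty => simp
  | insert m s hm ih =>
    have hms : m ∉ s := fun hmem => (hm m hmem).false
    have hcard : s.card ≤ m := by
      simpa using Finset.card_le_card fun x hx => Finset.mem_range.mpr (hm x hx)
    rw [Finset.sum_insert hms, Finset.card_insert_of_notMem hms, Finset.sum_range_succ, add_comm]
    exact add_le_add ih (hh hcard)

lemma sum_logIncrement_le_log_one_add_card {F : Finset (ℕ × ℕ)}
    (hF : Set.InjOn Prod.fst (F : Set (ℕ × ℕ))) :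
    ∑ a ∈ F, logIncrement a.1 ≤ Real.log (1 + F.card) := by
  have hsum := sum_le_sum_range_card_of_antitone logIncrement_antitone (F.image Prod.fst)
  rwa [Finset.sum_image hF, Finset.card_image_of_injOn hF, sum_range_logIncrement] at hsum

variable {A : Finset (ℕ × ℕ)}

lemma fForm_prod_snd (hk : k ∈ eulerLuckyNumbers) (hA : ∀ a ∈ A, IsNormFormSplit k a.2) :
    fForm k (∏ a ∈ A, a.2) = ∏ q ∈ A.image Prod.snd, (({a ∈ A | a.2 = q}).card + 1) := by
  rw [Finset.prod_comp (fun q : ℕ => q) Prod.snd]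
  refine fForm_prod_pow hk (f := fun q => q) Function.injective_id.injOn (fun q hq => ?_) _
  obtain ⟨a, ha, rfl⟩ := Finset.mem_image.mp hq
  exact hA a ha

lemma sum_logIncrement_le_log_fForm_prod_snd (hk : k ∈ eulerLuckyNumbers)
    (hA : ∀ a ∈ A, IsNormFormSplit k a.2) :
    ∑ a ∈ A, logIncrement a.1 ≤ Real.log (fForm k (∏ a ∈ A, a.2)) := by
  rw [fForm_prod_snd hk hA, Nat.cast_prod, Real.log_prod fun _ _ => by positivity,
    ← Finset.sum_fiberwise_of_maps_to fun a ha => Finset.mem_image_of_mem Prod.snd ha]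
  refine Finset.sum_le_sum fun q _ => ?_
  rw [Nat.cast_add, Nat.cast_one, add_comm]
  refine sum_logIncrement_le_log_one_add_card fun a ha b hb hab => Prod.ext hab ?_
  exact (Finset.mem_filter.mp ha).2.trans (Finset.mem_filter.mp hb).2.symm

-- Attach to each item `(l, q)` its own prime of `R`, with exponent `q - 1`: then `fForm k n` is the
-- product of the `q`, in which `q` occurs as often as there are items `(l, q)`.
lemma exists_sum_logIncrement_le_log_fForm_fForm (hk : k ∈ eulerLuckyNumbers)
    (hA : ∀ a ∈ A, IsNormFormSplit k a.2) {R : Finset ℕ} (hR : ∀ p ∈ R, IsNormFormSplit k p)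
    (hcard : A.card ≤ R.card) {V : ℝ} (hV : ∀ p ∈ R, Real.log p ≤ V) :
    ∃ n : ℕ, n ≠ 0 ∧ Real.log n ≤ V * ∑ a ∈ A, ((a.2 : ℝ) - 1) ∧
      ∑ a ∈ A, logIncrement a.1 ≤ Real.log (fForm k (fForm k n)) := by
  obtain ⟨f, hfR, hinj⟩ := A.finite_toSet.exists_injOn_of_encard_le (t := (R : Set ℕ))
    (by simpa only [Set.encard_coe_eq_coe_finsetCard] using mod_cast hcard)
  have hsplit : ∀ a ∈ A, IsNormFormSplit k (f a) := fun a ha => hR _ (hfR ha)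
  refine ⟨∏ a ∈ A, f a ^ (a.2 - 1), prod_pow_ne_zero_of_isNormFormSplit hsplit _, ?_, ?_⟩
  · rw [Nat.cast_prod, Real.log_prod fun a ha => by
      exact_mod_cast pow_ne_zero _ (hsplit a ha).1.ne_zero, Finset.mul_sum]
    refine Finset.sum_le_sum fun a ha => ?_
    rw [Nat.cast_pow, Real.log_pow, Nat.cast_pred (hA a ha).1.pos, mul_comm]
    have : (1 : ℝ) ≤ a.2 := by exact_mod_cast (hA a ha).1.one_le
    gcongr
    exact hV _ (hfR ha)
  · rw [fForm_prod_pow hk hinj hsplit,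
      Finset.prod_congr rfl fun a ha => Nat.sub_add_cancel (hA a ha).1.one_le]
    exact sum_logIncrement_le_log_fForm_prod_snd hk hA

variable {P : ℕ → Prop}

open Classical in
lemma smoothedCount_le_card_mul (z : ℝ) :
    smoothedCount P z ≤ ({p ∈ Finset.Icc 1 ⌊z⌋₊ | P p} : Finset ℕ).card * z := by
  rw [← nsmul_eq_mul]
  exact Finset.sum_le_card_nsmul _ _ _ fun p _ => sub_le_self _ p.cast_nonneg

open Classical in
lemma HasHalfPrimeDensity.eventually_le_card (hP : HasHalfPrimeDensity P) :
    ∀ᶠ u : ℝ in atTop, Real.exp u * u ^ 5 / (8 * u) ≤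
      ({p ∈ Finset.Icc 1 ⌊Real.exp u * u ^ 5⌋₊ | P p} : Finset ℕ).card := by
  obtain ⟨C, hC, hwindow⟩ := hP.eventually_abs_smoothedCount_sub_le
  filter_upwards [hwindow, eventually_log_bounds (1 + 8 * C)] with u hwindow ⟨hu, hlogu, hlogu', _⟩
  have hu1 : 1 ≤ u := by linarith
  have hcount := (abs_le.mp (hwindow (Real.exp u * u ^ 5) ?_ le_rfl)).1
  · set Z := Real.exp u * u ^ 5
    have hZ : 0 < Z := by positivity
    have herror : C * Z ^ 2 * (Real.log u / u ^ 2) ≤ Z ^ 2 / (8 * u) := by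
      calc C * Z ^ 2 * (Real.log u / u ^ 2) = Z ^ 2 / (8 * u ^ 2) * (8 * C * Real.log u) := by
            field_simp
        _ ≤ Z ^ 2 / (8 * u ^ 2) * u := by
            gcongr
            linarith
        _ = Z ^ 2 / (8 * u) := by field_simp
    refine le_of_mul_le_mul_right ?_ hZ
    calc Z / (8 * u) * Z = Z ^ 2 / (4 * u) - Z ^ 2 / (8 * u) := by field_simp; ring
      _ ≤ smoothedCount P Z := by linarith
      _ ≤ _ := smoothedCount_le_card_mul Z
  · calc Real.exp u / u ^ 3 ≤ Real.exp u :=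
          div_le_self (Real.exp_pos u).le (one_le_pow₀ hu1)
      _ ≤ Real.exp u * u ^ 5 := le_mul_of_one_le_right (Real.exp_pos u).le (one_le_pow₀ hu1)

lemma card_knapsackItems_ceil_sq_le {κ u : ℝ} (hκ : 0 ≤ κ) (hu : 1 ≤ u) (hκu : 16 * κ ≤ u) :
    ((knapsackItems P ⌈u ^ 2⌉₊ (κ * Real.exp u)).card : ℝ) ≤ Real.exp u * u ^ 5 / (8 * u) := by
  have hceil : (⌈u ^ 2⌉₊ : ℝ) ≤ 2 * u ^ 2 := by
    have := Nat.ceil_lt_add_one (sq_nonneg u)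
    nlinarith
  calc ((knapsackItems P ⌈u ^ 2⌉₊ (κ * Real.exp u)).card : ℝ)
      ≤ ⌈u ^ 2⌉₊ * (κ * Real.exp u) := card_knapsackItems_le (by positivity)
    _ ≤ 2 * u ^ 2 * (κ * Real.exp u) := by gcongr
    _ = Real.exp u * u ^ 2 / 8 * (16 * κ) := by ring
    _ ≤ Real.exp u * u ^ 2 / 8 * u ^ 2 := by
        gcongr
        exact hκu.trans (le_self_pow₀ hu two_ne_zero)
    _ = Real.exp u * u ^ 5 / (8 * u) := by field_simp

lemma eventually_exists_le_log_fForm_fForm (hk : k ∈ eulerLuckyNumbers) :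
    ∃ C > 0, ∀ᶠ u : ℝ in atTop, ∃ n : ℕ, n ≠ 0 ∧ Real.log n ≤ Real.exp u ^ 2 ∧
      √logIncrementSqSum * Real.exp u / u - C * (Real.exp u * (Real.log u / u ^ 2)) ≤
        Real.log (fForm k (fForm k n)) := by
  classical
  have hs := sqrt_logIncrementSqSum_pos
  have hdensity := hasHalfPrimeDensity_isNormFormSplit (two_le_of_mem_eulerLuckyNumbers hk)
    (prime_four_mul_sub_one hk)
  obtain ⟨C, hC, hitems⟩ :=
    hdensity.eventually_exists_subset_knapsackItems fun q hq => hq.1.two_le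
  refine ⟨C, hC, ?_⟩
  filter_upwards [hitems, hdensity.eventually_le_card, eventually_ge_atTop 1,
    eventually_ge_atTop (16 * (8 / √logIncrementSqSum + 1))]
    with u ⟨A, hA, hweight, hprofit⟩ hcard hu hsu
  have hlogu := Real.log_nonneg hu
  have hcardA : (A.card : ℝ) ≤
      ({p ∈ Finset.Icc 1 ⌊Real.exp u * u ^ 5⌋₊ | IsNormFormSplit k p} : Finset ℕ).card :=
    le_trans (by exact_mod_cast Finset.card_le_card hA)
      ((card_knapsackItems_ceil_sq_le (by positivity) hu hsu).trans hcard)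
  have hlog : ∀ p ∈ {p ∈ Finset.Icc 1 ⌊Real.exp u * u ^ 5⌋₊ | IsNormFormSplit k p},
      Real.log p ≤ u + 5 * Real.log u := fun p hp => by
    obtain ⟨hIcc, hp⟩ := Finset.mem_filter.mp hp
    calc Real.log p ≤ Real.log (Real.exp u * u ^ 5) :=
          Real.log_le_log (by exact_mod_cast hp.1.pos) (cast_le_of_mem_Icc_one_floor hIcc)
      _ = u + 5 * Real.log u := by
          rw [Real.log_mul (Real.exp_ne_zero u) (by positivity), Real.log_exp, Real.log_pow]
          norm_num
  obtain ⟨n, hn0, hn, hvalue⟩ := exists_sum_logIncrement_le_log_fForm_fForm hk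
    (fun a ha => (mem_knapsackItems.mp (hA ha)).2.2) (fun p hp => (Finset.mem_filter.mp hp).2)
    (by exact_mod_cast hcardA) hlog
  refine ⟨n, hn0, hn.trans ?_, hprofit.trans hvalue⟩
  rwa [mul_comm, ← le_div_iff₀ (by positivity)]

end Realization

/-! ### The maximal order -/

lemma cBEFS_div_sqrt_two : cBEFS / √2 = 2 * √logIncrementSqSum := by
  have hc : cBEFS = √(8 * logIncrementSqSum) := rfl
  have hS := logIncrementSqSum_pos
  rw [hc, ← Real.sqrt_div (by positivity),
    show 8 * logIncrementSqSum / 2 = 2 ^ 2 * logIncrementSqSum by ring,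
    Real.sqrt_mul (by positivity), Real.sqrt_sq (by positivity)]

lemma tendsto_log_log_natCast_div_two_atTop :
    Tendsto (fun x : ℕ => Real.log (Real.log x) / 2) atTop atTop :=
  (Real.tendsto_log_atTop.comp
    (Real.tendsto_log_atTop.comp tendsto_natCast_atTop_atTop)).atTop_div_const two_pos

-- The junk value of `⨆ _ : n ∈ s, g n` for `n ∉ s` is `0`.
lemma biSup_le_of_nonneg {ι : Type*} {s : Finset ι} {g : ι → ℝ} {B : ℝ} (hB : 0 ≤ B)
    (hg : ∀ n ∈ s, g n ≤ B) : ⨆ n ∈ s, g n ≤ B :=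
  Real.iSup_le (fun n => Real.iSup_le (hg n) hB) hB

lemma le_biSup_finset {ι : Type*} {s : Finset ι} (g : ι → ℝ) {n : ι} (hn : n ∈ s) :
    g n ≤ ⨆ m ∈ s, g m := by
  obtain ⟨M, hM⟩ := (s.image g).bddAbove
  have hbdd : BddAbove (Set.range fun m => ⨆ _ : m ∈ s, g m) := by
    refine ⟨max M 0, ?_⟩
    rintro _ ⟨m, rfl⟩
    exact Real.iSup_le (fun hm => (hM (Finset.mem_coe.mpr (Finset.mem_image_of_mem g hm))).trans
      (le_max_left _ _)) (le_max_right _ _)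
  exact le_ciSup_of_le hbdd n (ciSup_pos (f := fun _ => g n) hn).ge

lemma mul_exp_mul_log_div_sq_le {C u : ℝ} (hC : 0 ≤ C) (hu : 0 < u) :
    C * (Real.exp u * (Real.log u / u ^ 2)) ≤
      4 * C * (Real.exp u / (2 * u)) * (Real.log (2 * u) / (2 * u)) := by
  calc C * (Real.exp u * (Real.log u / u ^ 2))
      ≤ C * (Real.exp u * (Real.log (2 * u) / u ^ 2)) := by
        gcongr
        linarith
    _ = 4 * C * (Real.exp u / (2 * u)) * (Real.log (2 * u) / (2 * u)) := by
        field_simp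
        ring

lemma eventually_abs_iSup_log_fForm_fForm_sub_le {k : ℕ} (hk : k ∈ eulerLuckyNumbers) :
    ∃ C > 0, ∀ᶠ u : ℝ in atTop, ∀ x : ℕ, 0 < x → Real.log x = Real.exp u ^ 2 →
      |(⨆ n ∈ Finset.Icc 1 x, Real.log (fForm k (fForm k n))) -
          √logIncrementSqSum * Real.exp u / u| ≤
        C * (Real.exp u * (Real.log u / u ^ 2)) := by
  obtain ⟨C₁, hC₁, hupper⟩ := eventually_log_fForm_fForm_le hk
  obtain ⟨C₂, hC₂, hlower⟩ := eventually_exists_le_log_fForm_fForm hk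
  refine ⟨C₁ + C₂, by positivity, ?_⟩
  filter_upwards [hupper, hlower, eventually_ge_atTop 1]
    with u hupper ⟨n, hn0, hn, hvalue⟩ hu x hx0 hx
  have hlogu := Real.log_nonneg hu
  have hsup : (⨆ n ∈ Finset.Icc 1 x, Real.log (fForm k (fForm k n))) ≤
      √logIncrementSqSum * Real.exp u / u + C₁ * (Real.exp u * (Real.log u / u ^ 2)) := by
    refine biSup_le_of_nonneg (by positivity) fun m hm => ?_
    obtain ⟨hm1, hmx⟩ := Finset.mem_Icc.mp hm
    exact hupper m (by positivity) (hx ▸ Real.log_le_log (by positivity) (by exact_mod_cast hmx))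
  have hnx : n ∈ Finset.Icc 1 x := by
    rw [← hx, Real.log_le_log_iff (by positivity) (by positivity)] at hn
    exact Finset.mem_Icc.mpr ⟨Nat.one_le_iff_ne_zero.mpr hn0, by exact_mod_cast hn⟩
  have hle := hvalue.trans (le_biSup_finset (fun m => Real.log (fForm k (fForm k m))) hnx)
  have hE₁ : 0 ≤ C₁ * (Real.exp u * (Real.log u / u ^ 2)) := by positivity
  have hE₂ : 0 ≤ C₂ * (Real.exp u * (Real.log u / u ^ 2)) := by positivity
  rw [abs_le]
  constructor <;> linarith

/-- For `k ∈ {2, 3, 5, 11, 17, 41}` and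
`f(n) = (1/2)·#{(x,y) ∈ ℤ² : x² + xy + k·y² = n}` (with `f(0) = 1`),
`max_{n ≤ x} log f(f(n)) = (√(log x)/log₂ x)·(c/√2 + O(log₃ x/log₂ x))` as `x → ∞`. -/
theorem maxOrder_iterated_form_classNumberOne (k : ℕ)
    (hk : k ∈ ({2, 3, 5, 11, 17, 41} : Set ℕ)) :
    ∃ C : ℝ, 0 < C ∧ ∀ᶠ x : ℕ in atTop,
      |(⨆ n ∈ Finset.Icc 1 x, Real.log (fForm k (fForm k n))) -
          Real.sqrt (Real.log x) / Real.log (Real.log x) * (cBEFS / Real.sqrt 2)| ≤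
        C * (Real.sqrt (Real.log x) / Real.log (Real.log x)) *
          (Real.log (Real.log (Real.log x)) / Real.log (Real.log x)) := by
  obtain ⟨C, hC, hsup⟩ := eventually_abs_iSup_log_fForm_fForm_sub_le hk
  have htend := tendsto_log_log_natCast_div_two_atTop
  refine ⟨4 * C, by positivity, ?_⟩
  filter_upwards [htend.eventually hsup, htend.eventually_gt_atTop 0, eventually_ge_atTop 2]
    with x hsup hu hx
  set u := Real.log (Real.log x) / 2 with hu_def
  have hlog : 0 < Real.log x := Real.log_pos (by exact_mod_cast hx)
  have hloglog : Real.log (Real.log x) = 2 * u := by rw [hu_def]; ring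
  have hexp : Real.log x = Real.exp u ^ 2 := by
    rw [← Real.exp_nat_mul, Nat.cast_two, ← hloglog, Real.exp_log hlog]
  have hsqrt : √(Real.log x) = Real.exp u := by rw [hexp, Real.sqrt_sq (Real.exp_pos u).le]
  have hmain : Real.exp u / (2 * u) * (2 * √logIncrementSqSum) =
      √logIncrementSqSum * Real.exp u / u := by field_simp
  rw [hsqrt, hloglog, cBEFS_div_sqrt_two, hmain]
  exact (hsup x (by positivity) hexp).trans (mul_exp_mul_log_div_sq_le hC.le hu)
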